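/- Let d ≥ 3, p ∈ (1,∞) and s ∈ [1,∞), with p' = p/(p−1) and s' = s/(s−1). Then for any T > 0 there exists a divergence-free vector field u ∈ L^1(0,T;W^{1,p'}(𝕋^d;ℝ^d)) ∩ L^{s'}(0,T;L^{p'}(𝕋^d;ℝ^d)) such that uniqueness of weak solutions of the transport equation ∂_tρ + u·∇ρ = 0 fails in the class L^s(0,T;L^p(𝕋^d)): there exist two weak solutions in L^s(0,T;L^p(𝕋^d)) with the same initial data that do not coincide. -/

import Mathlib

open MeasureTheory ENNReal

noncomputable section

/-- Points of `ℝ^d` (representing the torus `𝕋^d = ℝ^d/ℤ^d` via periodic functions). -/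
abbrev Vec (d : ℕ) := Fin d → ℝ

/-- One fundamental domain `[0,1]^d` of the torus. -/
def fundCube (d : ℕ) : Set (Vec d) := Set.Icc 0 1

/-- `ℤ^d`-periodicity of a function on `ℝ^d`. -/
def ZPer {d : ℕ} {α : Type*} (f : Vec d → α) : Prop :=
  ∀ (x : Vec d) (k : Fin d → ℤ), f (x + fun i => (k i : ℝ)) = f x

/-- Generic `L^p` "norm" (`p ∈ [1,∞]` as `ℝ≥0∞`) of an `ℝ≥0∞`-valued function. -/
def eLpGen {α : Type*} [MeasurableSpace α] (μ : Measure α) (p : ℝ≥0∞)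
    (g : α → ℝ≥0∞) : ℝ≥0∞ :=
  if p = ∞ then essSup g μ
  else (∫⁻ a, g a ^ p.toReal ∂μ) ^ (1 / p.toReal)

/-- Spatial `L^p` norm over one fundamental domain of the torus. -/
def spLp {d : ℕ} {E : Type*} [NormedAddCommGroup E] (p : ℝ≥0∞)
    (f : Vec d → E) : ℝ≥0∞ :=
  eLpGen (volume.restrict (fundCube d)) p (fun x => (‖f x‖₊ : ℝ≥0∞))

/-- `W^{1,q}` norm of a vector field on the torus: `‖u‖_{L^q} + ‖∇u‖_{L^q}`. -/
def W1qNorm {d : ℕ} (q : ℝ≥0∞) (u : Vec d → Vec d) : ℝ≥0∞ :=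
  spLp q u + spLp q (fderiv ℝ u)

/-- `L^s(0,T;L^p(𝕋^d))` norm. -/
def LsLpT {d : ℕ} {E : Type*} [NormedAddCommGroup E] (T : ℝ) (s p : ℝ≥0∞)
    (f : ℝ → Vec d → E) : ℝ≥0∞ :=
  eLpGen (volume.restrict (Set.Ioo 0 T)) s (fun t => spLp p (f t))

/-- `L^s(0,T;W^{1,q}(𝕋^d))` norm. -/
def LsW1qT {d : ℕ} (T : ℝ) (s q : ℝ≥0∞) (u : ℝ → Vec d → Vec d) : ℝ≥0∞ :=
  eLpGen (volume.restrict (Set.Ioo 0 T)) s (fun t => W1qNorm q (u t))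

/-- Gradient of a scalar function on `ℝ^d`. -/
def gradV {d : ℕ} (f : Vec d → ℝ) (x : Vec d) : Vec d :=
  fun i => fderiv ℝ f x (Pi.single i 1)

/-- Divergence of a vector field on `ℝ^d`. -/
def divV {d : ℕ} (v : Vec d → Vec d) (x : Vec d) : ℝ :=
  ∑ i, fderiv ℝ (fun y => v y i) x (Pi.single i 1)

/-- Laplacian of a scalar function on `ℝ^d`. -/
def laplV {d : ℕ} (f : Vec d → ℝ) : Vec d → ℝ := divV (gradV f)

/-- Euclidean dot product on `ℝ^d`. -/
def dotV {d : ℕ} (a b : Vec d) : ℝ := ∑ i, a i * b i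

/-- `C^N` norm over one fundamental domain. -/
def CkN {d : ℕ} (N : ℕ) (φ : Vec d → ℝ) : ℝ :=
  ∑ i ∈ Finset.range (N + 1), sSup ((fun x => ‖iteratedFDeriv ℝ i φ x‖) '' fundCube d)

/-- `W^{m,r}` norm over one fundamental domain. -/
def SobN {d : ℕ} {E : Type*} [NormedAddCommGroup E] [NormedSpace ℝ E]
    (m : ℕ) (r : ℝ≥0∞) (f : Vec d → E) : ℝ≥0∞ :=
  ∑ i ∈ Finset.range (m + 1), spLp r (iteratedFDeriv ℝ i f)

/-- Test functions for the weak formulation on `[0,T) × 𝕋^d`: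
smooth, `ℤ^d`-periodic in space, vanishing for `t` near `T` (compact support in `[0,T)`). -/
def IsTest (d : ℕ) (T : ℝ) (φ : ℝ → Vec d → ℝ) : Prop :=
  ContDiff ℝ (⊤ : ℕ∞) (Function.uncurry φ) ∧ (∀ t, ZPer (φ t)) ∧
    ∃ T', T' < T ∧ ∀ t, T' ≤ t → ∀ x, φ t x = 0

/-- `ρ` is a weak solution on `(0,T) × 𝕋^d` of `∂_t ρ + u·∇ρ = 0` with initial data `ρ₀`. -/
def IsWeakSolution (d : ℕ) (T : ℝ) (u : ℝ → Vec d → Vec d)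
    (ρ : ℝ → Vec d → ℝ) (ρ₀ : Vec d → ℝ) : Prop :=
  ∀ φ : ℝ → Vec d → ℝ, IsTest d T φ →
    ∫ x in fundCube d, ρ₀ x * φ 0 x =
      ∫ t in Set.Ioo 0 T, ∫ x in fundCube d,
        ρ t x * (deriv (fun τ => φ τ x) t + fderiv ℝ (φ t) x (u t x))

/-- `u` is divergence free in the sense of distributions on `(0,T) × 𝕋^d`. -/
def WeaklyDivFree (d : ℕ) (T : ℝ) (u : ℝ → Vec d → Vec d) : Prop :=
  ∀ φ : ℝ → Vec d → ℝ, ContDiff ℝ (⊤ : ℕ∞) (Function.uncurry φ) →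
    (∀ t, ZPer (φ t)) →
    ∫ t in Set.Ioo 0 T, ∫ x in fundCube d, fderiv ℝ (φ t) x (u t x) = 0

end


noncomputable section
namespace NU

/-- Smooth functions of `(t, x)`, periodic in `x`. -/
def SFA (d : ℕ) : Subalgebra ℝ (ℝ × Vec d → ℝ) where
  carrier := {f | ContDiff ℝ (⊤ : ℕ∞) f ∧ ∀ t, ZPer (fun x => f (t, x))}
  mul_mem' := by
    rintro f g ⟨hf, hf'⟩ ⟨hg, hg'⟩
    refine ⟨hf.mul hg, fun t x k => ?_⟩
    have h1 := hf' t x k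
    have h2 := hg' t x k
    simp only [Pi.mul_apply] at *
    rw [h1, h2]
  add_mem' := by
    rintro f g ⟨hf, hf'⟩ ⟨hg, hg'⟩
    refine ⟨hf.add hg, fun t x k => ?_⟩
    have h1 := hf' t x k
    have h2 := hg' t x k
    simp only [Pi.add_apply] at *
    rw [h1, h2]
  algebraMap_mem' := by
    intro r
    exact ⟨contDiff_const, fun t x k => rfl⟩

/-- The type of smooth periodic functions. -/
abbrev SF (d : ℕ) := ↥(SFA d)

variable {d : ℕ}

theorem SF.smooth (f : SF d) : ContDiff ℝ (⊤ : ℕ∞) f.1 := f.2.1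
theorem SF.cont (f : SF d) : Continuous f.1 := f.2.1.continuous
theorem SF.diff (f : SF d) : Differentiable ℝ f.1 := f.2.1.differentiable (by simp)
theorem SF.per (f : SF d) (t : ℝ) (x : Vec d) (k : Fin d → ℤ) :
    f.1 (t, x + fun i => (k i : ℝ)) = f.1 (t, x) := f.2.2 t x k

@[simp] theorem SF.add_ap (f g : SF d) (z) : (f + g).1 z = f.1 z + g.1 z := rfl
@[simp] theorem SF.sub_ap (f g : SF d) (z) : (f - g).1 z = f.1 z - g.1 z := rfl
@[simp] theorem SF.neg_ap (f : SF d) (z) : (-f).1 z = - f.1 z := rfl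
@[simp] theorem SF.mul_ap (f g : SF d) (z) : (f * g).1 z = f.1 z * g.1 z := rfl
@[simp] theorem SF.smul_ap (c : ℝ) (f : SF d) (z) : (c • f).1 z = c * f.1 z := rfl
@[simp] theorem SF.zero_ap (z) : (0 : SF d).1 z = 0 := rfl
@[simp] theorem SF.one_ap (z) : (1 : SF d).1 z = 1 := rfl
theorem SF.ext' {f g : SF d} (h : ∀ z, f.1 z = g.1 z) : f = g := Subtype.ext (funext h)

/-- Directional derivative. -/
def Dfun (v : ℝ × Vec d) (f : SF d) : SF d :=
  ⟨fun z => fderiv ℝ f.1 z v, by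
    refine ⟨?_, ?_⟩
    · exact (f.smooth.fderiv_right (m := (⊤ : ℕ∞)) (by simp)).clm_apply contDiff_const
    · intro t x k
      have h : f.1 = fun z => f.1 (z + ((0 : ℝ), fun i => (k i : ℝ))) := by
        funext z
        have := f.per z.1 z.2 k
        rw [← this]
        show f.1 (z.1, z.2 + _) = f.1 (z.1 + 0, z.2 + _)
        rw [add_zero]
      have h2 := fderiv_comp_add_right (𝕜 := ℝ) (f := f.1) (x := (t, x))
        ((0 : ℝ), fun i => (k i : ℝ))
      rw [← h] at h2
      show fderiv ℝ f.1 (t, x + _) v = fderiv ℝ f.1 (t, x) v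
      rw [h2]
      simp⟩

/-- Directional derivative as a derivation. -/
def D (v : ℝ × Vec d) : Derivation ℝ (SF d) (SF d) :=
  Derivation.mk'
    { toFun := Dfun v
      map_add' := by
        intro f g
        apply SF.ext'
        intro z
        show fderiv ℝ (f.1 + g.1) z v = fderiv ℝ f.1 z v + fderiv ℝ g.1 z v
        rw [fderiv_add (f.diff z) (g.diff z)]; rfl
      map_smul' := by
        intro c f
        apply SF.ext'
        intro z
        show fderiv ℝ (c • f.1) z v = c * fderiv ℝ f.1 z v
        rw [fderiv_const_smul (f.diff z)]; rfl }
    (by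
      intro f g
      apply SF.ext'
      intro z
      show fderiv ℝ (f.1 * g.1) z v = f.1 z * fderiv ℝ g.1 z v + g.1 z * fderiv ℝ f.1 z v
      rw [fderiv_mul (f.diff z) (g.diff z)]; rfl)

theorem D_ap (v : ℝ × Vec d) (f : SF d) (z) : (D v f).1 z = fderiv ℝ f.1 z v := rfl

theorem D_comm (v w : ℝ × Vec d) (f : SF d) : D v (D w f) = D w (D v f) := by
  apply SF.ext'
  intro z
  have hsymm : IsSymmSndFDerivAt ℝ f.1 z :=
    f.smooth.contDiffAt.isSymmSndFDerivAt (by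
      simp only [minSmoothness_of_isRCLikeNormedField]
      exact WithTop.coe_le_coe.2 (le_top (a := (2 : ℕ∞))))
  have hd : DifferentiableAt ℝ (fderiv ℝ f.1) z :=
    ((f.smooth.fderiv_right (m := (⊤ : ℕ∞)) (by simp)).differentiable (by simp)) z
  have key : ∀ a b : ℝ × Vec d, (D a (D b f)).1 z = fderiv ℝ (fderiv ℝ f.1) z a b := by
    intro a b
    show fderiv ℝ (fun y => fderiv ℝ f.1 y b) z a = _
    rw [fderiv_clm_apply hd (differentiableAt_const b)]
    simp
  rw [key, key]
  exact hsymm.eq v w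

/-- time direction -/
def e0 : ℝ × Vec d := (1, 0)
/-- space directions -/
def ex (i : Fin d) : ℝ × Vec d := (0, Pi.single i 1)

/-- function of time only -/
def ofT (g : ℝ → ℝ) (hg : ContDiff ℝ (⊤ : ℕ∞) g) : SF d :=
  ⟨fun z => g z.1, hg.comp contDiff_fst, fun _ _ _ => rfl⟩

/-- function of one space coordinate only -/
def ofX (j : Fin d) (q : ℝ → ℝ) (hq : ContDiff ℝ (⊤ : ℕ∞) q) (hper : ∀ (y : ℝ) (n : ℤ), q (y + n) = q y) :
    SF d :=
  ⟨fun z => q (z.2 j), hq.comp ((contDiff_apply ℝ ℝ j).comp contDiff_snd), fun _ x k => by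
    simp [hper]⟩

theorem D_ofT_x (i : Fin d) (g hg) : D (ex i) (ofT (d := d) g hg) = 0 := by
  apply SF.ext'
  intro z
  rw [D_ap]
  have h : HasFDerivAt (fun z : ℝ × Vec d => g z.1)
      ((fderiv ℝ g z.1).comp (ContinuousLinearMap.fst ℝ ℝ (Vec d))) z :=
    ((hg.differentiable (by simp)) z.1).hasFDerivAt.comp z hasFDerivAt_fst
  show fderiv ℝ (fun z : ℝ × Vec d => g z.1) z (ex i) = 0
  rw [h.fderiv]
  simp [ex]

theorem D_ofT_t (g hg) (z) : (D e0 (ofT (d := d) g hg)).1 z = deriv g z.1 := by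
  rw [D_ap]
  have h : HasFDerivAt (fun z : ℝ × Vec d => g z.1)
      ((fderiv ℝ g z.1).comp (ContinuousLinearMap.fst ℝ ℝ (Vec d))) z :=
    ((hg.differentiable (by simp)) z.1).hasFDerivAt.comp z hasFDerivAt_fst
  show fderiv ℝ (fun z : ℝ × Vec d => g z.1) z e0 = _
  rw [h.fderiv]
  simp [e0]

theorem D_ofX_aux (j : Fin d) (q hq hper) (z v) :
    (D v (ofX (d := d) j q hq hper)).1 z = v.2 j * deriv q (z.2 j) := by
  rw [D_ap]
  have h0 : HasFDerivAt (fun z : ℝ × Vec d => z.2 j)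
      ((ContinuousLinearMap.proj j).comp (ContinuousLinearMap.snd ℝ ℝ (Vec d))) z :=
    ((ContinuousLinearMap.proj (R := ℝ) (φ := fun _ : Fin d => ℝ) j).comp
      (ContinuousLinearMap.snd ℝ ℝ (Vec d))).hasFDerivAt
  have h : HasFDerivAt (fun z : ℝ × Vec d => q (z.2 j)) _ z :=
    ((hq.differentiable (by simp)) (z.2 j)).hasFDerivAt.comp z h0
  show fderiv ℝ (fun z : ℝ × Vec d => q (z.2 j)) z v = _
  rw [h.fderiv]
  simp only [ContinuousLinearMap.comp_apply]
  exact fderiv_eq_smul_deriv (f := q) (x := z.2 j) (v.2 j)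

theorem D_ofX_j (j : Fin d) (q hq hper) (z) :
    (D (ex j) (ofX (d := d) j q hq hper)).1 z = deriv q (z.2 j) := by
  rw [D_ofX_aux]; simp [ex]

theorem D_ofX_t (j : Fin d) (q hq hper) : D e0 (ofX (d := d) j q hq hper) = 0 := by
  apply SF.ext'; intro z
  rw [D_ofX_aux]; simp [e0]

theorem D_ofX_ne (i j : Fin d) (hij : i ≠ j) (q hq hper) :
    D (ex i) (ofX (d := d) j q hq hper) = 0 := by
  apply SF.ext'; intro z
  rw [D_ofX_aux]; simp [ex, Ne.symm hij]

/-- composition with real powers of a positive function -/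
def rpw (f : SF d) (hf : ∀ z, 0 < f.1 z) (α : ℝ) : SF d :=
  ⟨fun z => f.1 z ^ α, f.smooth.rpow_const_of_ne (fun z => (hf z).ne'), fun t x k => by
    simp only [f.per]⟩

theorem rpw_ap (f : SF d) (hf : ∀ z, 0 < f.1 z) (α : ℝ) (z) : (rpw f hf α).1 z = f.1 z ^ α := rfl

/-- reduce a point to the unit cube -/
theorem exists_cube (x : Vec d) : ∃ (k : Fin d → ℤ), (x + fun i => (k i : ℝ)) ∈ fundCube d := by
  refine ⟨fun i => -⌊x i⌋, ?_⟩
  constructor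
  · intro i
    simp only [Pi.zero_apply, Pi.add_apply, Int.cast_neg]
    linarith [Int.floor_le (x i)]
  · intro i
    simp only [Pi.one_apply, Pi.add_apply, Int.cast_neg]
    linarith [Int.lt_floor_add_one (x i)]

theorem SF.bdd (f : SF d) (T : ℝ) : ∃ H : ℝ, 0 ≤ H ∧ ∀ t ∈ Set.Icc 0 T, ∀ x, |f.1 (t, x)| ≤ H := by
  have hc : IsCompact (Set.Icc (0:ℝ) T ×ˢ fundCube d) := isCompact_Icc.prod isCompact_Icc
  obtain ⟨C, hC⟩ := hc.exists_bound_of_continuousOn f.cont.continuousOn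
  refine ⟨max C 0, le_max_right _ _, fun t ht x => ?_⟩
  obtain ⟨k, hk⟩ := exists_cube x
  rw [← f.per t x k]
  exact (hC (t, _) ⟨ht, hk⟩).trans (le_max_left _ _)

theorem SF.bdds (S : Finset (SF d)) (T : ℝ) :
    ∃ H : ℝ, 1 ≤ H ∧ ∀ f ∈ S, ∀ t ∈ Set.Icc 0 T, ∀ x, |f.1 (t, x)| ≤ H := by
  classical
  induction S using Finset.induction_on with
  | empty => exact ⟨1, le_rfl, by simp⟩
  | insert a S ha ih =>
    obtain ⟨H, h1, h2⟩ := ih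
    obtain ⟨K, k1, k2⟩ := a.bdd T
    refine ⟨max H K, h1.trans (le_max_left _ _), fun f hf t ht x => ?_⟩
    rcases Finset.mem_insert.1 hf with rfl | hf
    · exact (k2 t ht x).trans (le_max_right _ _)
    · exact (h2 f hf t ht x).trans (le_max_left _ _)

theorem SF.lower (f : SF d) (hf : ∀ z, 0 < f.1 z) (T : ℝ) :
    ∃ c : ℝ, 0 < c ∧ ∀ t ∈ Set.Icc 0 T, ∀ x, c ≤ f.1 (t, x) := by
  obtain ⟨H, h1, h2⟩ := (rpw f hf (-1)).bdd T
  refine ⟨(H + 1)⁻¹, by positivity, fun t ht x => ?_⟩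
  have := h2 t ht x
  rw [rpw_ap, Real.rpow_neg_one, abs_of_pos (inv_pos.2 (hf _))] at this
  rw [inv_le_comm₀ (by positivity) (hf _)]
  linarith

end NU
end

noncomputable section
namespace NU

/-- the basic profile -/
structure Prof where
  ψ : ℝ → ℝ
  sm : ContDiff ℝ (⊤ : ℕ∞) ψ
  supp : ∀ y, (y ≤ 1/4 ∨ 3/4 ≤ y) → ψ y = 0
  nrm : ∫ y in (0:ℝ)..1, (deriv ψ y) ^ 2 = 1
  M : ℝ
  hM : 1 ≤ M
  b0 : ∀ y, |ψ y| ≤ M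
  b1 : ∀ y, |deriv ψ y| ≤ M
  b2 : ∀ y, |deriv (deriv ψ) y| ≤ M

theorem smooth_deriv {f : ℝ → ℝ} (hf : ContDiff ℝ (⊤ : ℕ∞) f) : ContDiff ℝ (⊤ : ℕ∞) (deriv f) := by
  have : ContDiff ℝ ((⊤ : ℕ∞) + 1) f := by simpa using hf
  exact (contDiff_succ_iff_deriv.1 this).2.2

theorem deriv_supp {f : ℝ → ℝ} (hf : ContDiff ℝ (⊤ : ℕ∞) f)
    (hs : ∀ y, (y ≤ 1/4 ∨ 3/4 ≤ y) → f y = 0) (y : ℝ) (hy : y ≤ 1/4 ∨ 3/4 ≤ y) : deriv f y = 0 := by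
  have hd : DifferentiableAt ℝ f y := (hf.differentiable (by simp)) y
  rcases hy with hy | hy
  · have h1 : HasDerivWithinAt f (deriv f y) (Set.Iic y) y := hd.hasDerivAt.hasDerivWithinAt
    have h2 : HasDerivWithinAt f 0 (Set.Iic y) y := by
      refine (hasDerivWithinAt_const y (Set.Iic y) (0:ℝ)).congr (fun z hz => hs z (Or.inl (le_trans hz hy))) (hs y (Or.inl hy))
    exact (uniqueDiffWithinAt_Iic y).eq_deriv _ h1 h2
  · have h1 : HasDerivWithinAt f (deriv f y) (Set.Ici y) y := hd.hasDerivAt.hasDerivWithinAt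
    have h2 : HasDerivWithinAt f 0 (Set.Ici y) y := by
      refine (hasDerivWithinAt_const y (Set.Ici y) (0:ℝ)).congr (fun z hz => hs z (Or.inr (le_trans hy hz))) (hs y (Or.inr hy))
    exact (uniqueDiffWithinAt_Ici y).eq_deriv _ h1 h2

theorem bdd_of_supp {f : ℝ → ℝ} (hf : Continuous f)
    (hs : ∀ y, (y ≤ 1/4 ∨ 3/4 ≤ y) → f y = 0) : ∃ C, 0 ≤ C ∧ ∀ y, |f y| ≤ C := by
  obtain ⟨C, hC⟩ := (isCompact_Icc (a := (0:ℝ)) (b := 1)).exists_bound_of_continuousOn hf.continuousOn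
  refine ⟨max C 0, le_max_right _ _, fun y => ?_⟩
  by_cases h : y ≤ 1/4 ∨ 3/4 ≤ y
  · rw [hs y h]; simp
  · push Not at h
    exact (hC y ⟨by linarith, by linarith⟩).trans (le_max_left _ _)

theorem exists_prof : Nonempty Prof := by
  let b : ContDiffBump (1/2 : ℝ) := ⟨1/8, 1/4, by norm_num, by norm_num⟩
  have hbs : ContDiff ℝ (⊤ : ℕ∞) (b : ℝ → ℝ) := b.contDiff
  have hsupp : ∀ y : ℝ, (y ≤ 1/4 ∨ 3/4 ≤ y) → b y = 0 := by
    intro y hy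
    apply b.zero_of_le_dist
    show (1/4 : ℝ) ≤ dist y (1/2)
    rw [Real.dist_eq]
    rcases hy with hy | hy
    · rw [abs_of_neg (by linarith)]; linarith
    · rw [abs_of_pos (by linarith)]; linarith
  have hone : b (1/2 : ℝ) = 1 := b.one_of_mem_closedBall (by simp; norm_num [b])
  set I := ∫ y in (0:ℝ)..1, (deriv b y) ^ 2 with hI
  have hdc : Continuous (deriv (b : ℝ → ℝ)) := (smooth_deriv hbs).continuous
  have hIpos : 0 < I := by
    by_contra hn
    have hex : ∃ c ∈ Set.Ioo (1/4:ℝ) (1/2), deriv b c = (b (1/2:ℝ) - b (1/4:ℝ)) / (1/2 - 1/4) :=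
      exists_deriv_eq_slope b (by norm_num) hbs.continuous.continuousOn
        (hbs.differentiable (by simp)).differentiableOn
    obtain ⟨c, hc, hc'⟩ := hex
    rw [hone, hsupp (1/4) (by norm_num)] at hc'
    apply hn
    apply intervalIntegral.integral_pos (by norm_num) (by fun_prop) (fun _ _ => by positivity)
    refine ⟨c, ⟨by linarith [hc.1], by linarith [hc.2]⟩, ?_⟩
    rw [hc']; norm_num
  let c := (Real.sqrt I)⁻¹
  let ψ : ℝ → ℝ := fun y => c * b y
  have hψ : ContDiff ℝ (⊤ : ℕ∞) ψ := contDiff_const.mul hbs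
  have hψs : ∀ y, (y ≤ 1/4 ∨ 3/4 ≤ y) → ψ y = 0 := fun y hy => by simp [ψ, hsupp y hy]
  have hψd : ∀ y, deriv ψ y = c * deriv b y := fun y => deriv_const_mul _ ((hbs.differentiable (by simp)) y)
  have h1s := deriv_supp hψ hψs
  have h2s := deriv_supp (smooth_deriv hψ) h1s
  obtain ⟨C0, p0, h0⟩ := bdd_of_supp hψ.continuous hψs
  obtain ⟨C1, p1, h1⟩ := bdd_of_supp (smooth_deriv hψ).continuous h1s
  obtain ⟨C2, p2, h2⟩ := bdd_of_supp (smooth_deriv (smooth_deriv hψ)).continuous h2s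
  refine ⟨⟨ψ, hψ, hψs, ?_, 1 + C0 + C1 + C2, by linarith, fun y => ?_, fun y => ?_, fun y => ?_⟩⟩
  · simp only [hψd, mul_pow]
    rw [intervalIntegral.integral_const_mul, ← hI]
    simp only [c, inv_pow, Real.sq_sqrt hIpos.le]
    exact inv_mul_cancel₀ hIpos.ne'
  · linarith [h0 y]
  · linarith [h1 y]
  · linarith [h2 y]

/-- concentrated periodization -/
def per (μ : ℝ) (f : ℝ → ℝ) (y : ℝ) : ℝ := f (μ * Int.fract y)

/-- indicator of the concentration set -/
def chi (μ : ℝ) (y : ℝ) : ℝ := if Int.fract y < μ⁻¹ then 1 else 0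

theorem chi_nonneg (μ y : ℝ) : 0 ≤ chi μ y := by unfold chi; split_ifs <;> norm_num
theorem chi_le_one (μ y : ℝ) : chi μ y ≤ 1 := by unfold chi; split_ifs <;> norm_num

theorem chi_meas (μ : ℝ) : Measurable (chi μ) :=
  Measurable.ite (measurableSet_lt measurable_fract measurable_const) measurable_const measurable_const

theorem per_int (μ f) (y : ℝ) (n : ℤ) : per μ f (y + n) = per μ f y := by simp [per]
theorem chi_int (μ) (y : ℝ) (n : ℤ) : chi μ (y + n) = chi μ y := by simp [chi]

theorem per_eventually {μ : ℝ} (hμ : 1 ≤ μ) (y₀ : ℝ) :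
    ∃ n : ℤ, ∀ f : ℝ → ℝ, (∀ y, (y ≤ 1/4 ∨ 3/4 ≤ y) → f y = 0) →
      ∀ᶠ y in nhds y₀, per μ f y = f (μ * (y - n)) := by
  by_cases h : ∃ n : ℤ, y₀ = n
  · obtain ⟨n, rfl⟩ := h
    refine ⟨n, fun f hs => ?_⟩
    have hμ' : (0:ℝ) < 1 / (4 * μ) := by positivity
    filter_upwards [Metric.ball_mem_nhds (n : ℝ) hμ', Metric.ball_mem_nhds (n : ℝ) (show (0:ℝ) < 1/4 by norm_num)] with y hy hy'
    rw [Metric.mem_ball, Real.dist_eq, abs_lt] at hy hy'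
    by_cases hn : (n:ℝ) ≤ y
    · have : Int.fract y = y - n := by
        rw [Int.fract_eq_iff]
        exact ⟨by linarith, by linarith, n, by ring⟩
      rw [per, this]
    · push Not at hn
      have : Int.fract y = y - (n - 1 : ℤ) := by
        rw [Int.fract_eq_iff]
        push_cast
        exact ⟨by linarith, by linarith, n - 1, by push_cast; ring⟩
      rw [per, this, hs _ (Or.inr _), hs _ (Or.inl _)]
      · nlinarith
      · push_cast
        nlinarith
  · push Not at h
    refine ⟨⌊y₀⌋, fun f hs => ?_⟩
    have h1 : (⌊y₀⌋ : ℝ) < y₀ := lt_of_le_of_ne (Int.floor_le _) (fun hh => h _ hh.symm)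
    filter_upwards [Ioo_mem_nhds h1 (Int.lt_floor_add_one y₀)] with y hy
    have : Int.fract y = y - ⌊y₀⌋ := by
      rw [Int.fract_eq_iff]
      exact ⟨by linarith [hy.1], by linarith [hy.2], ⌊y₀⌋, by ring⟩
    rw [per, this]

theorem per_smooth {μ : ℝ} (hμ : 1 ≤ μ) {f : ℝ → ℝ} (hf : ContDiff ℝ (⊤ : ℕ∞) f)
    (hs : ∀ y, (y ≤ 1/4 ∨ 3/4 ≤ y) → f y = 0) : ContDiff ℝ (⊤ : ℕ∞) (per μ f) := by
  rw [contDiff_iff_contDiffAt]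
  intro y₀
  obtain ⟨n, hn'⟩ := per_eventually hμ y₀
  have hn := hn' f hs
  refine ContDiffAt.congr_of_eventuallyEq ?_ hn
  exact (hf.comp (contDiff_const.mul (contDiff_id.sub contDiff_const))).contDiffAt

theorem per_deriv {μ : ℝ} (hμ : 1 ≤ μ) {f : ℝ → ℝ} (hf : ContDiff ℝ (⊤ : ℕ∞) f)
    (hs : ∀ y, (y ≤ 1/4 ∨ 3/4 ≤ y) → f y = 0) (y₀ : ℝ) :
    deriv (per μ f) y₀ = μ * per μ (deriv f) y₀ := by
  obtain ⟨n, hn'⟩ := per_eventually hμ y₀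
  have hn := hn' f hs
  have h1s := deriv_supp hf hs
  have hfd := hf.differentiable (by simp)
  rw [Filter.EventuallyEq.deriv_eq hn]
  have h2 : per μ (deriv f) y₀ = deriv f (μ * (y₀ - n)) :=
     (hn' _ h1s).self_of_nhds
  rw [h2]
  have : HasDerivAt (fun y : ℝ => f (μ * (y - n))) (deriv f (μ * (y₀ - n)) * (μ * 1)) y₀ := by
    refine (hfd _).hasDerivAt.comp y₀ ?_
    exact ((hasDerivAt_id y₀).sub_const _).const_mul μ
  rw [this.deriv]; ring

theorem per_bound {μ : ℝ} (hμ : 1 ≤ μ) {f : ℝ → ℝ} {M : ℝ} (hb : ∀ y, |f y| ≤ M)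
    (hs : ∀ y, (y ≤ 1/4 ∨ 3/4 ≤ y) → f y = 0) (y : ℝ) : |per μ f y| ≤ M * chi μ y := by
  unfold chi per
  split_ifs with h
  · simpa using hb _
  · rw [hs _ (Or.inr _)]
    · simp
    · push Not at h
      have : μ * μ⁻¹ ≤ μ * Int.fract y := by gcongr
      rw [mul_inv_cancel₀ (by positivity)] at this
      linarith

variable (P : Prof)

theorem Prof.supp1 (y : ℝ) (hy : y ≤ 1/4 ∨ 3/4 ≤ y) : deriv P.ψ y = 0 := deriv_supp P.sm P.supp y hy
theorem Prof.sm1 : ContDiff ℝ (⊤ : ℕ∞) (deriv P.ψ) := smooth_deriv P.sm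
theorem Prof.supp2 (y : ℝ) (hy : y ≤ 1/4 ∨ 3/4 ≤ y) : deriv (deriv P.ψ) y = 0 := deriv_supp P.sm1 P.supp1 y hy
theorem Prof.sm2 : ContDiff ℝ (⊤ : ℕ∞) (deriv (deriv P.ψ)) := smooth_deriv P.sm1

/-- the product kernel -/
def ker (μ : ℝ) (y : ℝ) : ℝ := μ * (per μ (deriv P.ψ) y) ^ 2

theorem ker_smooth {μ : ℝ} (hμ : 1 ≤ μ) : ContDiff ℝ (⊤ : ℕ∞) (ker P μ) :=
  contDiff_const.mul ((per_smooth hμ P.sm1 P.supp1).pow 2)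

theorem ker_nonneg {μ : ℝ} (hμ : 1 ≤ μ) (y) : 0 ≤ ker P μ y := by unfold ker; positivity

theorem ker_bound {μ : ℝ} (hμ : 1 ≤ μ) (y) : ker P μ y ≤ P.M ^ 2 * (μ * chi μ y) := by
  have h := per_bound hμ P.b1 P.supp1 y
  unfold ker
  have h2 : (per μ (deriv P.ψ) y)^2 ≤ (P.M * chi μ y)^2 := sq_le_sq' (by linarith [(abs_le.1 h).1]) (abs_le.1 h).2
  have h3 : (chi μ y)^2 = chi μ y := by unfold chi; split_ifs <;> norm_num
  rw [mul_pow, h3] at h2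
  nlinarith

theorem ker_per (μ : ℝ) : Function.Periodic (ker P μ) 1 := by
  intro y
  have := per_int μ (deriv P.ψ) y 1
  simp only [Int.cast_one] at this
  rw [ker, ker, this]

theorem ker_int {μ : ℝ} (hμ : 1 ≤ μ) : ∫ y in (0:ℝ)..1, ker P μ y = 1 := by
  have e : ∫ y in (0:ℝ)..1, ker P μ y = ∫ y in (0:ℝ)..1, μ * (deriv P.ψ (μ * y))^2 := by
    apply intervalIntegral.integral_congr_ae
    have : ∀ᵐ y : ℝ, y ≠ 1 := by simp [ae_iff]
    filter_upwards [this] with y hy1 hy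
    rw [Set.uIoc_of_le (by norm_num)] at hy
    have : Int.fract y = y := Int.fract_eq_self.2 ⟨hy.1.le, lt_of_le_of_ne hy.2 hy1⟩
    simp [ker, per, this]
  rw [e, intervalIntegral.integral_const_mul]
  have hμ0 : μ ≠ 0 := by positivity
  rw [← smul_eq_mul, intervalIntegral.smul_integral_comp_mul_left (fun y => (deriv P.ψ y)^2) μ]
  simp only [mul_zero, mul_one]
  have hc : Continuous (fun y => (deriv P.ψ y)^2) := P.sm1.continuous.pow 2
  rw [← intervalIntegral.integral_add_adjacent_intervals (hc.intervalIntegrable 0 1) (hc.intervalIntegrable 1 μ),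
    P.nrm]
  have : ∫ y in (1:ℝ)..μ, (deriv P.ψ y)^2 = 0 := by
    rw [intervalIntegral.integral_congr (g := fun _ => 0)]
    · simp
    · intro y hy
      rw [Set.uIcc_of_le hμ] at hy
      simp [P.supp1 y (Or.inr (by linarith [hy.1]))]
  rw [this, add_zero]

/-- primitive of `ker - 1` -/
def prim (μ : ℝ) (y : ℝ) : ℝ := ∫ z in (0:ℝ)..y, (ker P μ z - 1)

theorem prim_hasDeriv {μ : ℝ} (hμ : 1 ≤ μ) (y) : HasDerivAt (prim P μ) (ker P μ y - 1) y := by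
  have hc : Continuous (fun z => ker P μ z - 1) := (ker_smooth P hμ).continuous.sub continuous_const
  exact intervalIntegral.integral_hasDerivAt_right (hc.intervalIntegrable _ _)
    (hc.stronglyMeasurableAtFilter _ _) hc.continuousAt

theorem prim_smooth {μ : ℝ} (hμ : 1 ≤ μ) : ContDiff ℝ (⊤ : ℕ∞) (prim P μ) := by
  have h : deriv (prim P μ) = fun y => ker P μ y - 1 := funext fun y => (prim_hasDeriv P hμ y).deriv
  have : ContDiff ℝ ((⊤ : ℕ∞) + 1) (prim P μ) := by
    rw [contDiff_succ_iff_deriv]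
    refine ⟨fun y => (prim_hasDeriv P hμ y).differentiableAt, by simp, ?_⟩
    rw [h]
    exact (ker_smooth P hμ).sub contDiff_const
  simpa using this

theorem prim_per1 {μ : ℝ} (hμ : 1 ≤ μ) : Function.Periodic (prim P μ) 1 := by
  intro y
  have hc : Continuous (fun z => ker P μ z - 1) := (ker_smooth P hμ).continuous.sub continuous_const
  have hp : Function.Periodic (fun z => ker P μ z - 1) 1 := fun z => by simp only [ker_per P μ z]
  unfold prim
  rw [← intervalIntegral.integral_add_adjacent_intervals (hc.intervalIntegrable 0 y) (hc.intervalIntegrable y (y+1)),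
    hp.intervalIntegral_add_eq y 0, zero_add]
  have : ∫ z in (0:ℝ)..1, (ker P μ z - 1) = 0 := by
    rw [intervalIntegral.integral_sub ((ker_smooth P hμ).continuous.intervalIntegrable _ _) (by simp), ker_int P hμ]
    simp
  rw [this, add_zero]

theorem prim_int {μ : ℝ} (hμ : 1 ≤ μ) (y : ℝ) (n : ℤ) : prim P μ (y + n) = prim P μ y := by
  simpa using (prim_per1 P hμ).int_mul n y

theorem prim_zero (μ : ℝ) : prim P μ 0 = 0 := by simp [prim]

theorem prim_bound {μ : ℝ} (hμ : 1 ≤ μ) (y : ℝ) : |prim P μ y| ≤ 1 := by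
  have h : prim P μ y = prim P μ (Int.fract y) := by
    have := prim_int P hμ (Int.fract y) ⌊y⌋
    rw [Int.fract_add_floor] at this
    exact this
  rw [h]
  have h0 := Int.fract_nonneg y
  have h1 := (Int.fract_lt_one y).le
  generalize Int.fract y = w at h0 h1
  have hc := (ker_smooth P hμ).continuous
  unfold prim
  rw [intervalIntegral.integral_sub (hc.intervalIntegrable _ _) (by simp)]
  have a1 : 0 ≤ ∫ z in (0:ℝ)..w, ker P μ z := intervalIntegral.integral_nonneg h0 (fun z _ => ker_nonneg P hμ z)
  have a2 : 0 ≤ ∫ z in w..1, ker P μ z := intervalIntegral.integral_nonneg h1 (fun z _ => ker_nonneg P hμ z)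
  have a3 := intervalIntegral.integral_add_adjacent_intervals (hc.intervalIntegrable (μ := volume) 0 w) (hc.intervalIntegrable w 1)
  rw [ker_int P hμ] at a3
  simp only [intervalIntegral.integral_const, sub_zero, smul_eq_mul, mul_one]
  rw [abs_le]; constructor <;> linarith

end NU
end

noncomputable section
namespace NU

theorem lint_scale (F : ℝ → ℝ≥0∞) (hF : Measurable F) (hp : ∀ (y : ℝ) (n : ℤ), F (y + n) = F y)
    {σ : ℝ} (hσ : 0 < σ) (k : ℕ) :
    ∫⁻ y in Set.Ico (k / σ) ((k + 1) / σ), F (σ * y) =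
      ENNReal.ofReal σ⁻¹ * ∫⁻ y in Set.Ico (0:ℝ) 1, F y := by
  have h1 : ∫⁻ y in Set.Ico (k / σ) ((k + 1) / σ), F (σ * y)
      = ∫⁻ y, (Set.Ico (k:ℝ) (k+1)).indicator F (σ * y) := by
    rw [← lintegral_indicator measurableSet_Ico]
    congr 1
    ext y
    have : (y ∈ Set.Ico (k / σ) ((k + 1) / σ)) ↔ σ * y ∈ Set.Ico (k:ℝ) (k+1) := by
      simp only [Set.mem_Ico, div_le_iff₀ hσ, lt_div_iff₀ hσ, mul_comm]
    by_cases h : σ * y ∈ Set.Ico (k:ℝ) (k+1)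
    · rw [Set.indicator_of_mem h, Set.indicator_of_mem (this.2 h)]
    · rw [Set.indicator_of_notMem h, Set.indicator_of_notMem (fun h' => h (this.1 h'))]
  have hm : Measurable ((Set.Ico (k:ℝ) (k+1)).indicator F) := hF.indicator measurableSet_Ico
  rw [h1, ← lintegral_map hm (measurable_const_mul σ), Real.map_volume_mul_left hσ.ne',
    lintegral_smul_measure, abs_of_pos (inv_pos.2 hσ), smul_eq_mul]
  congr 1
  rw [← lintegral_add_right_eq_self _ (k:ℝ), ← lintegral_indicator measurableSet_Ico]
  congr 1
  ext y
  have : (y ∈ Set.Ico (0:ℝ) 1) ↔ y + k ∈ Set.Ico (k:ℝ) (k+1) := by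
    simp only [Set.mem_Ico]; constructor <;> rintro ⟨a, b⟩ <;> constructor <;> linarith
  by_cases h : y ∈ Set.Ico (0:ℝ) 1
  · rw [Set.indicator_of_mem h, Set.indicator_of_mem (this.1 h)]
    exact_mod_cast hp y k
  · rw [Set.indicator_of_notMem h, Set.indicator_of_notMem (fun h' => h (this.2 h'))]

theorem cell_bound (f F : ℝ → ℝ≥0∞) (hf : Measurable f) (hF : Measurable F)
    (hp : ∀ (y : ℝ) (n : ℤ), F (y + n) = F y)
    {σ : ℝ} (hσ : 0 < σ) (k : ℕ) (c : ℝ≥0∞)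
    (hosc : ∀ y ∈ Set.Ico (k / σ) ((k + 1) / σ), ∀ y' ∈ Set.Ico (k / σ) ((k + 1) / σ), f y ≤ c * f y') :
    ∫⁻ y in Set.Ico (k / σ) ((k + 1) / σ), f y * F (σ * y) ≤
      c * (∫⁻ y in Set.Ico (k / σ) ((k + 1) / σ), f y) * ∫⁻ y in Set.Ico (0:ℝ) 1, F y := by
  set S := Set.Ico (k / σ) ((k + 1) / σ) with hS
  have hv : volume S = ENNReal.ofReal σ⁻¹ := by
    rw [hS, Real.volume_Ico]; congr 1; field_simp; ring
  have hF' : Measurable fun y => F (σ * y) := hF.comp (measurable_const_mul σ)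
  have h1 : ∀ y' ∈ S, ∫⁻ y in S, f y * F (σ * y) ≤ (c * f y') * ∫⁻ y in S, F (σ * y) := by
    intro y' hy'
    rw [← lintegral_const_mul _ hF']
    apply setLIntegral_mono (hF'.const_mul _)
    intro y hy
    gcongr
    exact hosc y hy y' hy'
  have h2 : ∫⁻ y' in S, (∫⁻ y in S, f y * F (σ * y)) ≤
      ∫⁻ y' in S, (c * f y') * ∫⁻ y in S, F (σ * y) := by
    apply setLIntegral_mono ((hf.const_mul _).mul_const _) h1
  rw [setLIntegral_const, lintegral_mul_const _ (hf.const_mul _), lintegral_const_mul _ hf, hv,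
    lint_scale F hF hp hσ k] at h2
  have hne : ENNReal.ofReal σ⁻¹ ≠ 0 := by simp [hσ]
  rw [← ENNReal.mul_le_mul_iff_left hne ENNReal.ofReal_ne_top]
  refine h2.trans (le_of_eq ?_)
  ring

theorem cells_bound (f F : ℝ → ℝ≥0∞) (hf : Measurable f) (hF : Measurable F)
    (hp : ∀ (y : ℝ) (n : ℤ), F (y + n) = F y)
    {σ : ℝ} (hσ : 0 < σ) (N : ℕ) (c : ℝ≥0∞)
    (hosc : ∀ y ∈ Set.Ico 0 (N / σ), ∀ y' ∈ Set.Ico 0 (N / σ), |y - y'| ≤ 1 / σ → f y ≤ c * f y') :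
    ∫⁻ y in Set.Ico 0 (N / σ), f y * F (σ * y) ≤
      c * (∫⁻ y in Set.Ico 0 (N / σ), f y) * ∫⁻ y in Set.Ico (0:ℝ) 1, F y := by
  have key : ∀ K : ℕ, K ≤ N → ∫⁻ y in Set.Ico 0 (K / σ), f y * F (σ * y) ≤
      c * (∫⁻ y in Set.Ico 0 (K / σ), f y) * ∫⁻ y in Set.Ico (0:ℝ) 1, F y := by
    intro K
    induction K with
    | zero => intro _; simp
    | succ K ih =>
      intro hK
      have hKN : ((K:ℝ) + 1) ≤ N := by exact_mod_cast hK
      have hu : Set.Ico (0:ℝ) ((K + 1 : ℕ) / σ) = Set.Ico 0 (K / σ) ∪ Set.Ico (K / σ) ((K + 1) / σ) := by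
        rw [Set.Ico_union_Ico_eq_Ico (by positivity) (by gcongr; linarith)]; push_cast; rfl
      have hdis : Disjoint (Set.Ico (0:ℝ) (K / σ)) (Set.Ico (K / σ) ((K + 1) / σ)) := by
        rw [Set.disjoint_left]; intro y h1 h2; linarith [h1.2, h2.1]
      rw [hu, lintegral_union measurableSet_Ico hdis, lintegral_union measurableSet_Ico hdis]
      refine (add_le_add (ih (by omega)) (cell_bound f F hf hF hp hσ K c ?_)).trans (le_of_eq (by ring))
      intro y hy y' hy'
      have hsub : ∀ w ∈ Set.Ico ((K:ℝ) / σ) ((K + 1) / σ), w ∈ Set.Ico (0:ℝ) (N / σ) := by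
        intro w hw
        refine ⟨le_trans (by positivity) hw.1, lt_of_lt_of_le hw.2 (by gcongr)⟩
      apply hosc y (hsub y hy) y' (hsub y' hy')
      have : ((K:ℝ) + 1) / σ = K / σ + 1 / σ := by ring
      rw [this] at hy hy'
      rw [abs_le]; constructor <;> linarith [hy.1, hy.2, hy'.1, hy'.2]
  exact key N le_rfl

theorem cube_fubini {n : ℕ} (j : Fin (n + 1)) (g : Vec (n + 1) → ℝ≥0∞) (hg : Measurable g) :
    ∫⁻ x in fundCube (n + 1), g x =
      ∫⁻ x' in fundCube n, ∫⁻ y in Set.Ico (0:ℝ) 1, g (j.insertNth (α := fun _ => ℝ) y x') := by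
  have hmp := (volume_preserving_piFinSuccAbove (fun _ : Fin (n + 1) => ℝ) j).symm
  have hmc : MeasurableSet (fundCube (n + 1)) := measurableSet_Icc
  have hmc' : MeasurableSet (fundCube n) := measurableSet_Icc
  rw [← lintegral_indicator hmc, ← hmp.lintegral_comp (hg.indicator hmc)]
  rw [Measure.volume_eq_prod, lintegral_prod_symm]
  · rw [← lintegral_indicator hmc']
    congr 1
    ext x'
    rw [Measure.restrict_congr_set Ico_ae_eq_Icc]
    by_cases hx : x' ∈ fundCube n
    · rw [Set.indicator_of_mem hx, ← lintegral_indicator measurableSet_Icc]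
      congr 1
      ext y
      have : (j.insertNth (α := fun _ => ℝ) y x') ∈ fundCube (n+1) ↔ y ∈ Set.Icc (0:ℝ) 1 := by
        have h := Fin.insertNth_mem_Icc (α := fun _ => ℝ) (i := j) (x := y) (p := x') (q₁ := 0) (q₂ := 1)
        unfold fundCube
        rw [h]
        exact ⟨fun h => h.1, fun h => ⟨h, hx⟩⟩
      by_cases hy : y ∈ Set.Icc (0:ℝ) 1
      · rw [Set.indicator_of_mem hy]
        exact Set.indicator_of_mem (this.2 hy) _
      · rw [Set.indicator_of_notMem hy]
        exact Set.indicator_of_notMem (fun h => hy (this.1 h)) _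
    · rw [Set.indicator_of_notMem hx]
      rw [lintegral_eq_zero_iff']
      · refine Filter.Eventually.of_forall fun y => ?_
        refine Set.indicator_of_notMem (fun h => hx ?_) _
        have h' := (Fin.insertNth_mem_Icc (α := fun _ => ℝ) (i := j) (x := y) (p := x') (q₁ := 0) (q₂ := 1)).1 h
        exact h'.2
      · apply Measurable.aemeasurable
        exact ((hg.indicator hmc).comp hmp.measurable).comp (measurable_id.prodMk measurable_const)
  · exact ((hg.indicator hmc).comp hmp.measurable).aemeasurable

theorem cube_bound {d : ℕ} (j : Fin d) (f : Vec d → ℝ≥0∞) (F : ℝ → ℝ≥0∞) (hf : Measurable f) (hF : Measurable F)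
    (hp : ∀ (y : ℝ) (n : ℤ), F (y + n) = F y)
    {σ : ℕ} (hσ : 0 < σ) (c : ℝ≥0∞)
    (hosc : ∀ x ∈ fundCube d, ∀ x' ∈ fundCube d, dist x x' ≤ 1 / σ → f x ≤ c * f x') :
    ∫⁻ x in fundCube d, f x * F (σ * x j) ≤
      c * (∫⁻ x in fundCube d, f x) * ∫⁻ y in Set.Ico (0:ℝ) 1, F y := by
  obtain ⟨n, rfl⟩ : ∃ n, d = n + 1 := ⟨d - 1, by have := j.pos; omega⟩
  have hm : ∀ x' : Vec n, Measurable fun y : ℝ => j.insertNth (α := fun _ => ℝ) y x' := by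
    intro x'
    have hmp := (volume_preserving_piFinSuccAbove (fun _ : Fin (n + 1) => ℝ) j).symm
    exact hmp.measurable.comp (measurable_id.prodMk measurable_const)
  have hFj : Measurable fun x : Vec (n+1) => F (σ * x j) :=
    hF.comp ((measurable_pi_apply j).const_mul _)
  rw [cube_fubini j (fun x => f x * F (σ * x j)) (hf.mul hFj), cube_fubini j f hf]
  have hmeas : Measurable fun x' : Vec n => ∫⁻ y in Set.Ico (0:ℝ) 1, f (j.insertNth (α := fun _ => ℝ) y x') := by
    have hmp := (volume_preserving_piFinSuccAbove (fun _ : Fin (n + 1) => ℝ) j).symm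
    have : Measurable fun z : Vec n × ℝ => f (j.insertNth (α := fun _ => ℝ) z.2 z.1) :=
      hf.comp (hmp.measurable.comp measurable_swap)
    exact this.lintegral_prod_right'
  rw [← lintegral_const_mul _ hmeas, ← lintegral_mul_const _ (hmeas.const_mul _)]
  apply setLIntegral_mono ((hmeas.const_mul _).mul_const _)
  intro x' hx'
  have hσ' : (0:ℝ) < σ := by exact_mod_cast hσ
  have h := cells_bound (fun y => f (j.insertNth (α := fun _ => ℝ) y x')) F (hf.comp (hm x')) hF hp hσ' σ c ?_
  · rw [div_self hσ'.ne'] at h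
    simpa using h
  · rw [div_self hσ'.ne']
    intro y hy y' hy' hyy
    have hmem : ∀ w ∈ Set.Ico (0:ℝ) 1, (j.insertNth (α := fun _ => ℝ) w x') ∈ fundCube (n+1) := fun w hw =>
      (Fin.insertNth_mem_Icc (α := fun _ => ℝ) (i := j) (x := w) (p := x') (q₁ := 0) (q₂ := 1)).2
        ⟨⟨hw.1, hw.2.le⟩, hx'⟩
    apply hosc _ (hmem y hy) _ (hmem y' hy')
    rw [dist_pi_le_iff (by positivity)]
    intro i
    refine Fin.succAboveCases j ?_ ?_ i
    · simpa [Real.dist_eq] using hyy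
    · intro k; simp

theorem chi_lint {μ : ℝ} (hμ : 1 ≤ μ) :
    ∫⁻ y in Set.Ico (0:ℝ) 1, ENNReal.ofReal (chi μ y) = ENNReal.ofReal μ⁻¹ := by
  have : ∫⁻ y in Set.Ico (0:ℝ) 1, ENNReal.ofReal (chi μ y) =
      ∫⁻ y in Set.Ico (0:ℝ) 1, (Set.Ico (0:ℝ) μ⁻¹).indicator 1 y := by
    apply setLIntegral_congr_fun measurableSet_Ico
    intro y hy
    have : Int.fract y = y := Int.fract_eq_self.2 hy
    simp only [chi, this, Set.indicator, Set.mem_Ico, hy.1, true_and]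
    split_ifs <;> simp
  rw [this, lintegral_indicator_one measurableSet_Ico, Measure.restrict_apply measurableSet_Ico,
    Set.inter_eq_left.2, Real.volume_Ico, sub_zero]
  intro y hy
  exact ⟨hy.1, lt_of_lt_of_le hy.2 (inv_le_one_of_one_le₀ hμ)⟩

theorem ofReal_chi_meas (μ : ℝ) : Measurable fun y => ENNReal.ofReal (chi μ y) :=
  (chi_meas μ).ennreal_ofReal

theorem cube_vol (d : ℕ) : volume (fundCube d) = 1 := by
  unfold fundCube; rw [Real.volume_Icc_pi]; simp

/-- space integral of the concentration indicator -/
theorem chi_cube {d : ℕ} (j : Fin d) {μ : ℝ} (hμ : 1 ≤ μ) {σ : ℕ} (hσ : 0 < σ) :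
    ∫⁻ x in fundCube d, ENNReal.ofReal (chi μ (σ * x j)) ≤ ENNReal.ofReal μ⁻¹ := by
  have := cube_bound j (fun _ => 1) (fun y => ENNReal.ofReal (chi μ y)) measurable_const (ofReal_chi_meas μ)
    (fun y n => by rw [chi_int]) hσ 1 (by simp)
  simpa [chi_lint hμ, cube_vol] using this

/-- time integral of the concentration indicator -/
theorem time_bound {T : ℝ} (hT : 0 < T) {N : ℕ} (hN : 0 < N) (f F : ℝ → ℝ≥0∞) (hf : Measurable f)
    (hF : Measurable F) (hp : ∀ (y : ℝ) (n : ℤ), F (y + n) = F y) (c : ℝ≥0∞)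
    (hosc : ∀ y ∈ Set.Icc 0 T, ∀ y' ∈ Set.Icc 0 T, |y - y'| ≤ T / N → f y ≤ c * f y') :
    ∫⁻ t in Set.Ioo 0 T, f t * F (N / T * t) ≤
      c * (∫⁻ t in Set.Ioo 0 T, f t) * ∫⁻ y in Set.Ico (0:ℝ) 1, F y := by
  have hN' : (0:ℝ) < N := by exact_mod_cast hN
  have e : (N:ℝ) / (N / T) = T := by field_simp
  have h := cells_bound f F hf hF hp (σ := N / T) (by positivity) N c (by
    rw [e]
    intro y hy y' hy' h
    refine hosc y ⟨hy.1, hy.2.le⟩ y' ⟨hy'.1, hy'.2.le⟩ (h.trans (le_of_eq (by field_simp))))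
  rw [e] at h
  rw [Measure.restrict_congr_set (Ioo_ae_eq_Ico (μ := volume) (a := (0:ℝ)) (b := T))]
  exact h

theorem chi_time {T : ℝ} (hT : 0 < T) {N : ℕ} (hN : 0 < N) {κ : ℝ} (hκ : 1 ≤ κ) :
    ∫⁻ t in Set.Ioo 0 T, ENNReal.ofReal (chi κ (N / T * t)) ≤ ENNReal.ofReal (T * κ⁻¹) := by
  have := time_bound hT hN (fun _ => 1) (fun y => ENNReal.ofReal (chi κ y)) measurable_const (ofReal_chi_meas κ)
    (fun y n => by rw [chi_int]) 1 (by simp)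
  rw [ENNReal.ofReal_mul hT.le]
  simpa [chi_lint hκ] using this

end NU
end

noncomputable section
namespace NU
variable {d : ℕ}

/-- the algebraic identity behind one perturbation step -/
theorem step_alg (i j : Fin d) (ρ ui uj Ri Rj a b Q L g1 g2 K G m : SF d)
    (hpde : D e0 ρ + D (ex i) (ρ * ui) + D (ex j) (ρ * uj) = D (ex i) Ri + D (ex j) Rj)
    (hab : a * b = -Ri) (hQi : D (ex i) Q = 0) (hLi : D (ex i) L = 0)
    (hLj : D (ex j) L = m * (D (ex j) Q) ^ 2 - 1)
    (hg1 : D (ex j) g1 = 0) (hg2i : D (ex i) g2 = 0) (hg2j : D (ex j) g2 = 0)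
    (hKi : D (ex i) K = 0) (hKj : D (ex j) K = 0) (hGi : D (ex i) G = 0)
    (hGt : D e0 G = K - 1) (hgg : g1 * g2 = K * m)
    (θ θo wi wj : SF d) (hθ : θ = D (ex j) (g1 * a * Q)) (hθo : θo = G * D (ex i) Ri)
    (hwi : wi = D (ex j) (g2 * b * Q)) (hwj : wj = - D (ex i) (g2 * b * Q)) :
    D e0 (ρ + θ + θo) + D (ex i) ((ρ + θ + θo) * (ui + wi)) + D (ex j) ((ρ + θ + θo) * (uj + wj)) =
    D (ex i) (G * D e0 Ri + θ * ui + ρ * wi + θo * ui + θo * wi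
      + K * (m * (D (ex j) a * Q * b * D (ex j) Q + a * D (ex j) Q * D (ex j) b * Q
          + D (ex j) a * D (ex j) b * Q ^ 2) + D (ex j) Ri * L)) +
    D (ex j) (Rj + D e0 (g1 * a * Q) + θ * uj + ρ * wj + θo * uj + θo * wj
      + K * (-(m * (a * D (ex j) Q + D (ex j) a * Q) * D (ex i) b * Q) - D (ex i) Ri * L)) := by
  have e1 : D e0 θ = D (ex j) (D e0 (g1 * a * Q)) := by rw [hθ, D_comm]
  have e2 : D e0 θo = (K - 1) * D (ex i) Ri + D (ex i) (G * D e0 Ri) := by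
    rw [hθo]
    simp only [Derivation.leibniz, smul_eq_mul, hGt, hGi, D_comm e0 (ex i)]
    ring
  have hθ' : θ = g1 * (a * D (ex j) Q + D (ex j) a * Q) := by
    rw [hθ]; simp only [Derivation.leibniz, smul_eq_mul, hg1]; ring
  have hwi' : wi = g2 * (b * D (ex j) Q + D (ex j) b * Q) := by
    rw [hwi]; simp only [Derivation.leibniz, smul_eq_mul, hg2j]; ring
  have hwj' : wj = -(g2 * (D (ex i) b * Q)) := by
    rw [hwj]; simp only [Derivation.leibniz, smul_eq_mul, hg2i, hQi]; ring
  have e3 : θ * wi = -(K * Ri) - K * (Ri * D (ex j) L) + K * (m * (D (ex j) a * Q * b * D (ex j) Q + a * D (ex j) Q * D (ex j) b * Q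
          + D (ex j) a * D (ex j) b * Q ^ 2)) := by
    rw [hθ', hwi', hLj]
    linear_combination (a * D (ex j) Q + D (ex j) a * Q) * (b * D (ex j) Q + D (ex j) b * Q) * hgg
      + K * m * (D (ex j) Q)^2 * hab
  have e4 : θ * wj = K * (-(m * (a * D (ex j) Q + D (ex j) a * Q) * D (ex i) b * Q)) := by
    rw [hθ', hwj']
    linear_combination -(a * D (ex j) Q + D (ex j) a * Q) * (D (ex i) b * Q) * hgg
  have e5 : D (ex i) (K * (Ri * D (ex j) L)) = D (ex j) (K * (D (ex i) Ri * L)) - D (ex i) (K * (D (ex j) Ri * L)) := by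
    have : D (ex i) (D (ex j) L) = 0 := by rw [D_comm, hLi, map_zero]
    simp only [Derivation.leibniz, smul_eq_mul, hKi, hKj, hLi, this, D_comm (ex i) (ex j)]
    ring
  have e6 : D (ex i) (K * Ri) = K * D (ex i) Ri := by
    simp only [Derivation.leibniz, smul_eq_mul, hKi]; ring
  have f1 : (ρ + θ + θo) * (ui + wi) = ρ * ui + (θ * ui + ρ * wi + θo * ui + θo * wi) + θ * wi := by ring
  have f2 : (ρ + θ + θo) * (uj + wj) = ρ * uj + (θ * uj + ρ * wj + θo * uj + θo * wj) + θ * wj := by ring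
  rw [f1, f2, e3, e4]
  simp only [map_add, map_sub, map_neg, mul_add, mul_sub, mul_neg, e1, e2, e5, e6] at *
  linear_combination hpde
end NU
end

noncomputable section
namespace NU
variable {d : ℕ}

/-- exponent relation `1/q = β` -/
def Ex (q : ℝ≥0∞) (β : ℝ) : Prop := (q = ∞ ∧ β = 0) ∨ (q ≠ ∞ ∧ 0 < β ∧ q.toReal * β = 1)

theorem eLpGen_le {α : Type*} [MeasurableSpace α] {ν : Measure α} {q : ℝ≥0∞} {β : ℝ} (hq : Ex q β)
    (m h : α → ℝ≥0∞) (c E : ℝ≥0∞) (hc : c ≠ ∞) (hm : ∀ᵐ x ∂ν, m x ≤ c * h x ^ β) (hE : ∫⁻ x, h x ∂ν ≤ E) :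
    eLpGen ν q m ≤ c * E ^ β := by
  rcases hq with ⟨rfl, rfl⟩ | ⟨hq, hβ, hqβ⟩
  · simp only [eLpGen, if_true]
    simp only [ENNReal.rpow_zero, mul_one] at hm ⊢
    exact essSup_le_of_ae_le _ hm
  · have hq0 : 0 < q.toReal := by
      by_contra hcon
      have : q.toReal = 0 := le_antisymm (not_lt.1 hcon) ENNReal.toReal_nonneg
      rw [this] at hqβ; simp at hqβ
    have hb : 1 / q.toReal = β := by field_simp; linarith
    rw [eLpGen, if_neg hq, hb]
    have h1 : ∫⁻ x, m x ^ q.toReal ∂ν ≤ c ^ q.toReal * E := by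
      calc ∫⁻ x, m x ^ q.toReal ∂ν ≤ ∫⁻ x, c ^ q.toReal * h x ∂ν := by
            apply lintegral_mono_ae
            filter_upwards [hm] with x hx
            calc m x ^ q.toReal ≤ (c * h x ^ β) ^ q.toReal := by gcongr
              _ = c ^ q.toReal * h x := by
                rw [ENNReal.mul_rpow_of_nonneg _ _ hq0.le, ← ENNReal.rpow_mul, mul_comm β, hqβ, ENNReal.rpow_one]
        _ = c ^ q.toReal * ∫⁻ x, h x ∂ν := lintegral_const_mul' _ _ (by
            apply ENNReal.rpow_ne_top_of_nonneg hq0.le hc)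
        _ ≤ _ := by gcongr
    calc (∫⁻ x, m x ^ q.toReal ∂ν) ^ β ≤ (c ^ q.toReal * E) ^ β := by gcongr
      _ = c * E ^ β := by
        rw [ENNReal.mul_rpow_of_nonneg _ _ hβ.le, ← ENNReal.rpow_mul, hqβ, ENNReal.rpow_one]

theorem osc2 {X : Type*} [PseudoMetricSpace X] {K : Set X} (hK : IsCompact K) (f : X → ℝ) (hf : Continuous f)
    (hpos : ∀ z, 0 < f z) : ∃ η > 0, ∀ z ∈ K, ∀ z' ∈ K, dist z z' ≤ η → f z ≤ 2 * f z' := by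
  have hu := hK.uniformContinuousOn_of_continuous
    (f := fun z => Real.log (f z)) (hf.log fun z => (hpos z).ne').continuousOn
  rw [Metric.uniformContinuousOn_iff_le] at hu
  obtain ⟨η, h1, h2⟩ := hu (Real.log 2) (Real.log_pos (by norm_num))
  refine ⟨η, h1, fun z hz z' hz' hd => ?_⟩
  have h3 := h2 z hz z' hz' hd
  rw [Real.dist_eq] at h3
  have h4 := (abs_le.1 h3).2
  have h5 : Real.log (f z) ≤ Real.log (2 * f z') := by
    rw [Real.log_mul (by norm_num) (hpos z').ne']; linarith
  exact (Real.log_le_log_iff (hpos z) (by linarith [hpos z'])).1 h5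

/-- space-time `L^1` norm -/
def N1 (T : ℝ) (f : SF d) : ℝ≥0∞ := ∫⁻ t in Set.Ioo 0 T, ∫⁻ x in fundCube d, ENNReal.ofReal |f.1 (t, x)|

theorem cube_compact : IsCompact (fundCube d) := isCompact_Icc
theorem cube_meas : MeasurableSet (fundCube d) := measurableSet_Icc

theorem sqrt_abs_le (x δ : ℝ) : |x| ≤ √(x ^ 2 + δ ^ 2) := by
  rw [← Real.sqrt_sq_eq_abs]; exact Real.sqrt_le_sqrt (by nlinarith [sq_nonneg δ])
theorem sqrt_le_abs (x δ : ℝ) (hδ : 0 ≤ δ) : √(x ^ 2 + δ ^ 2) ≤ |x| + δ := by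
  rw [Real.sqrt_le_left (by positivity)]
  nlinarith [abs_nonneg x, sq_abs x]

/-- choice of amplitude majorants -/
theorem exists_coeff (R : SF d) {T : ℝ} (hT : 0 < T) {ε : ℝ} (hR : N1 T R < ENNReal.ofReal ε) :
    ∃ (A : SF d) (r : ℝ → ℝ), (∀ z, 0 < A.1 z) ∧ (∀ t, 0 < r t) ∧ ContDiff ℝ (⊤ : ℕ∞) r ∧
      (∀ z, |R.1 z| ≤ A.1 z) ∧
      (∀ t ∈ Set.Icc 0 T, ∫⁻ x in fundCube d, ENNReal.ofReal (A.1 (t, x)) ≤ ENNReal.ofReal (r t)) ∧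
      ∫⁻ t in Set.Ioo 0 T, ENNReal.ofReal (r t) ≤ ENNReal.ofReal ε := by
  set c : ℝ → ℝ := fun t => ∫ x in fundCube d, |R.1 (t, x)| with hc
  have hcc : Continuous c := by
    apply continuous_parametric_integral_of_continuous _ cube_compact
    exact R.cont.abs
  have hint : ∀ (f : SF d) t, Integrable (fun x => f.1 (t, x)) (volume.restrict (fundCube d)) := fun f t =>
    (f.cont.comp (by fun_prop : Continuous fun x : Vec d => (t, x))).continuousOn.integrableOn_compact cube_compact
  have hc0 : ∀ t, 0 ≤ c t := fun t => integral_nonneg fun x => abs_nonneg _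
  have hcl : ∀ t, ∫⁻ x in fundCube d, ENNReal.ofReal |R.1 (t, x)| = ENNReal.ofReal (c t) := fun t =>
    (ofReal_integral_eq_lintegral_ofReal (hint R t).abs (Filter.Eventually.of_forall fun x => abs_nonneg _)).symm
  have hci : IntegrableOn c (Set.Ioo 0 T) :=
    (hcc.continuousOn.integrableOn_compact (isCompact_Icc (a := (0:ℝ)) (b := T))).mono_set Set.Ioo_subset_Icc_self
  have hN : N1 T R = ENNReal.ofReal (∫ t in Set.Ioo 0 T, c t) := by
    unfold N1
    simp_rw [hcl]
    exact (ofReal_integral_eq_lintegral_ofReal hci (Filter.Eventually.of_forall hc0)).symm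
  set I := ∫ t in Set.Ioo 0 T, c t with hI
  have hIε : I < ε := by
    rw [hN] at hR
    exact (ENNReal.ofReal_lt_ofReal_iff_of_nonneg (integral_nonneg hc0)).1 hR
  set δ := (ε - I) / (4 * T) with hδ
  have hδ0 : 0 < δ := by have : 0 < ε - I := by linarith
                         positivity
  obtain ⟨q, hq⟩ := exists_polynomial_near_of_continuousOn 0 T c hcc.continuousOn δ hδ0
  refine ⟨⟨fun z => √((R.1 z) ^ 2 + δ ^ 2), ?_, ?_⟩, fun t => √((q.eval t + 2 * δ) ^ 2 + δ ^ 2), ?_, ?_, ?_, ?_, ?_, ?_⟩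
  · exact ((R.smooth.pow 2).add contDiff_const).sqrt fun z => by positivity
  · intro t x k
    simp only [R.per]
  · intro z; show 0 < √_; positivity
  · intro t; show 0 < √_; positivity
  · refine ContDiff.sqrt ?_ fun t => by positivity
    have : ContDiff ℝ (⊤ : ℕ∞) fun t => q.eval t := by
      have := Polynomial.contDiff_aeval (𝕜 := ℝ) q ((⊤ : ℕ∞) : WithTop ℕ∞)
      simpa using this
    exact ((this.add contDiff_const).pow 2).add contDiff_const
  · intro z; exact sqrt_abs_le _ _
  · intro t ht
    have h1 : ∫⁻ x in fundCube d, ENNReal.ofReal (√((R.1 (t, x)) ^ 2 + δ ^ 2)) ≤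
        ∫⁻ x in fundCube d, (ENNReal.ofReal |R.1 (t, x)| + ENNReal.ofReal δ) := by
      apply lintegral_mono
      intro x
      beta_reduce
      rw [← ENNReal.ofReal_add (abs_nonneg _) hδ0.le]
      exact ENNReal.ofReal_le_ofReal (sqrt_le_abs _ _ hδ0.le)
    refine h1.trans ?_
    rw [lintegral_add_right _ measurable_const, hcl, lintegral_const, Measure.restrict_apply MeasurableSet.univ,
      Set.univ_inter, cube_vol, mul_one, ← ENNReal.ofReal_add (hc0 t) hδ0.le]
    apply ENNReal.ofReal_le_ofReal
    have h2 := (abs_lt.1 (hq t ht)).1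
    refine le_trans ?_ (sqrt_abs_le _ _)
    refine le_trans ?_ (le_abs_self _)
    linarith
  · have h1 : ∫⁻ t in Set.Ioo 0 T, ENNReal.ofReal (√((q.eval t + 2 * δ) ^ 2 + δ ^ 2)) ≤
        ∫⁻ t in Set.Ioo 0 T, ENNReal.ofReal (c t + 4 * δ) := by
      apply setLIntegral_mono (by fun_prop)
      intro t ht
      apply ENNReal.ofReal_le_ofReal
      refine (sqrt_le_abs _ _ hδ0.le).trans ?_
      have h2 := abs_lt.1 (hq t ⟨ht.1.le, ht.2.le⟩)
      rw [abs_of_nonneg (by linarith [hc0 t, h2.1])]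
      linarith [h2.2]
    refine h1.trans ?_
    rw [← ofReal_integral_eq_lintegral_ofReal (f := fun t => c t + 4 * δ) (hci.add (integrable_const _))
      (Filter.Eventually.of_forall fun t => by have := hc0 t; show 0 ≤ c t + 4 * δ; positivity)]
    apply ENNReal.ofReal_le_ofReal
    rw [integral_add hci (integrable_const _)]
    simp only [integral_const, smul_eq_mul, measureReal_restrict_apply, MeasurableSet.univ, Set.univ_inter,
      Real.volume_real_Ioo_of_le hT.le]
    rw [hδ]
    field_simp
    linarith

theorem N1_le {i : Fin d} {T : ℝ} (hT : 0 < T) {N σ : ℕ} (hN : 0 < N) (hσ : 0 < σ) {κ μ : ℝ} (hκ : 1 ≤ κ) (hμ : 1 ≤ μ)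
    (f : SF d) {c1 c2 c3 : ℝ} (h1 : 0 ≤ c1) (h2 : 0 ≤ c2) (h3 : 0 ≤ c3)
    (hf : ∀ t ∈ Set.Icc 0 T, ∀ x, |f.1 (t, x)| ≤ c1 + c2 * chi κ (N / T * t) + c3 * (chi κ (N / T * t) * chi μ (σ * x i))) :
    N1 T f ≤ ENNReal.ofReal (T * (c1 + c2 / κ + c3 / (κ * μ))) := by
  have hm : ∀ x : ℝ, 0 ≤ chi κ (N / T * x) := fun x => chi_nonneg _ _
  have hmx : ∀ x : Vec d, 0 ≤ chi μ (σ * x i) := fun x => chi_nonneg _ _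
  have hmeasx : Measurable fun x : Vec d => ENNReal.ofReal (chi μ (σ * x i)) :=
    (ofReal_chi_meas μ).comp ((measurable_pi_apply i).const_mul _)
  have hmeast : Measurable fun t : ℝ => ENNReal.ofReal (chi κ (N / T * t)) :=
    (ofReal_chi_meas κ).comp (measurable_id.const_mul _)
  have a1 : ∀ t ∈ Set.Ioo 0 T, ∫⁻ x in fundCube d, ENNReal.ofReal |f.1 (t, x)| ≤
      ENNReal.ofReal c1 + ENNReal.ofReal (c2 + c3 / μ) * ENNReal.ofReal (chi κ (N / T * t)) := by
    intro t ht
    calc ∫⁻ x in fundCube d, ENNReal.ofReal |f.1 (t, x)| ≤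
        ∫⁻ x in fundCube d, ((ENNReal.ofReal (c1 + c2 * chi κ (N / T * t)))
          + (ENNReal.ofReal (c3 * chi κ (N / T * t))) * ENNReal.ofReal (chi μ (σ * x i))) := by
          apply lintegral_mono
          intro x
          have p1 := hm t
          have p2 := hmx x
          beta_reduce
          rw [← ENNReal.ofReal_mul (by positivity), ← ENNReal.ofReal_add (by positivity) (by positivity)]
          apply ENNReal.ofReal_le_ofReal
          refine (hf t ⟨ht.1.le, ht.2.le⟩ x).trans (le_of_eq (by ring))
      _ ≤ ENNReal.ofReal (c1 + c2 * chi κ (N / T * t)) + ENNReal.ofReal (c3 * chi κ (N / T * t)) * ENNReal.ofReal μ⁻¹ := by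
          rw [lintegral_add_left measurable_const, lintegral_const_mul _ hmeasx]
          simp only [lintegral_const, Measure.restrict_apply MeasurableSet.univ,
            Set.univ_inter, cube_vol, mul_one]
          gcongr
          exact chi_cube i hμ hσ
      _ = _ := by
          have p1 := hm t
          rw [← ENNReal.ofReal_mul (by positivity), ← ENNReal.ofReal_mul (by positivity), ← ENNReal.ofReal_add (by positivity) (by positivity),
            ← ENNReal.ofReal_add (by positivity) (by positivity)]
          congr 1; field_simp; ring
  calc N1 T f ≤ ∫⁻ t in Set.Ioo 0 T, (ENNReal.ofReal c1 + ENNReal.ofReal (c2 + c3 / μ) * ENNReal.ofReal (chi κ (N / T * t))) :=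
        setLIntegral_mono (by fun_prop) a1
    _ ≤ ENNReal.ofReal c1 * ENNReal.ofReal T + ENNReal.ofReal (c2 + c3 / μ) * ENNReal.ofReal (T * κ⁻¹) := by
        rw [lintegral_add_left measurable_const, lintegral_const_mul _ hmeast]
        simp only [lintegral_const, Measure.restrict_apply MeasurableSet.univ, Set.univ_inter, Real.volume_Ioo, sub_zero]
        gcongr
        exact chi_time hT hN hκ
    _ = _ := by
        rw [← ENNReal.ofReal_mul (by positivity), ← ENNReal.ofReal_mul (by positivity),
            ← ENNReal.ofReal_add (by positivity) (by positivity)]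
        congr 1; field_simp; ring
end NU
end

noncomputable section
namespace NU
variable {d : ℕ}

/-- constants -/
abbrev cst (c : ℝ) : SF d := algebraMap ℝ (SF d) c
theorem cst_ap (c : ℝ) (z) : (cst (d := d) c).1 z = c := rfl
theorem D_cst (v : ℝ × Vec d) (c : ℝ) : D v (cst c) = 0 := Derivation.map_algebraMap _ _
theorem SF.pow_ap (f : SF d) (n : ℕ) (z) : (f ^ n).1 z = f.1 z ^ n := rfl

theorem deriv_scale {f : ℝ → ℝ} (hf : Differentiable ℝ f) (c a y : ℝ) :
    deriv (fun y => c * f (a * y)) y = c * (a * deriv f (a * y)) := by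
  have h := ((hf (a * y)).hasDerivAt.comp y ((hasDerivAt_id y).const_mul a)).const_mul c
  simp only [Function.comp_def, mul_one, id] at h
  rw [h.deriv]; ring

theorem exists_Q (P : Prof) (j : Fin d) {σ : ℕ} (hσ : 0 < σ) {μ : ℝ} (hμ : 1 ≤ μ) :
    ∃ Q L : SF d, (∀ k, k ≠ j → D (ex k) Q = 0) ∧ D e0 Q = 0 ∧ (∀ k, k ≠ j → D (ex k) L = 0) ∧
      D (ex j) L = cst μ * (D (ex j) Q) ^ 2 - 1 ∧
      (∀ z, |Q.1 z| ≤ P.M / (σ * μ) * chi μ (σ * z.2 j)) ∧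
      (∀ z, |(D (ex j) Q).1 z| ≤ P.M * chi μ (σ * z.2 j)) ∧
      (∀ z, |(D (ex j) (D (ex j) Q)).1 z| ≤ σ * μ * P.M * chi μ (σ * z.2 j)) ∧
      (∀ z, |L.1 z| ≤ 1 / σ) := by
  have hσ' : (0:ℝ) < σ := by exact_mod_cast hσ
  have hμ0 : 0 < μ := by linarith
  have hsc : ContDiff ℝ (⊤ : ℕ∞) fun y : ℝ => (σ:ℝ) * y := contDiff_const.mul contDiff_id
  have hpi : ∀ (f : ℝ → ℝ), (∀ (y : ℝ) (n : ℤ), f (y + n) = f y) → ∀ (y : ℝ) (n : ℤ), f (σ * (y + n)) = f (σ * y) := by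
    intro f hf y n
    have := hf (σ * y) (σ * n)
    rw [← this]; push_cast; ring_nf
  have s0 := per_smooth hμ P.sm P.supp
  have s1 := per_smooth hμ P.sm1 P.supp1
  have hq : ContDiff ℝ (⊤ : ℕ∞) fun y => (σ * μ)⁻¹ * per μ P.ψ (σ * y) := contDiff_const.mul (s0.comp hsc)
  have hl : ContDiff ℝ (⊤ : ℕ∞) fun y => (σ:ℝ)⁻¹ * prim P μ (σ * y) :=
    contDiff_const.mul ((prim_smooth P hμ).comp hsc)
  have hq1 : ContDiff ℝ (⊤ : ℕ∞) fun y => 1 * per μ (deriv P.ψ) (σ * y) := contDiff_const.mul (s1.comp hsc)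
  let Q : SF d := ofX j _ hq (fun y n => by rw [hpi _ (per_int μ P.ψ)])
  let L : SF d := ofX j _ hl (fun y n => by rw [hpi _ (prim_int P hμ)])
  let Q1 : SF d := ofX j _ hq1 (fun y n => by rw [hpi _ (per_int μ _)])
  have hQ1 : D (ex j) Q = Q1 := by
    apply SF.ext'; intro z
    rw [D_ofX_j, deriv_scale (s0.differentiable (by simp)), per_deriv hμ P.sm P.supp]
    show _ = 1 * per μ (deriv P.ψ) (σ * z.2 j)
    field_simp
  refine ⟨Q, L, fun k hk => D_ofX_ne _ _ hk _ _ _, D_ofX_t _ _ _ _, fun k hk => D_ofX_ne _ _ hk _ _ _, ?_, ?_, ?_, ?_, ?_⟩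
  · apply SF.ext'; intro z
    rw [D_ofX_j, deriv_scale ((prim_smooth P hμ).differentiable (by simp)), (prim_hasDeriv P hμ _).deriv, hQ1]
    show _ = μ * (1 * per μ (deriv P.ψ) (σ * z.2 j)) ^ 2 - 1
    unfold ker
    field_simp
  · intro z
    show |(σ * μ)⁻¹ * per μ P.ψ (σ * z.2 j)| ≤ _
    rw [abs_mul, abs_of_pos (by positivity)]
    have := per_bound hμ P.b0 P.supp (σ * z.2 j)
    calc _ ≤ (σ * μ)⁻¹ * (P.M * chi μ (σ * z.2 j)) := by gcongr
      _ = _ := by field_simp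
  · intro z
    rw [hQ1]
    show |1 * per μ (deriv P.ψ) (σ * z.2 j)| ≤ _
    rw [one_mul]
    exact per_bound hμ P.b1 P.supp1 _
  · intro z
    rw [hQ1, D_ofX_j, deriv_scale (s1.differentiable (by simp)), per_deriv hμ P.sm1 P.supp1, one_mul]
    rw [abs_mul, abs_mul, abs_of_pos hσ', abs_of_pos hμ0]
    have := per_bound hμ P.b2 P.supp2 (σ * z.2 j)
    calc _ ≤ σ * (μ * (P.M * chi μ (σ * z.2 j))) := by gcongr
      _ = _ := by ring
  · intro z
    show |(σ:ℝ)⁻¹ * prim P μ (σ * z.2 j)| ≤ _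
    rw [abs_mul, abs_of_pos (by positivity), one_div]
    have := prim_bound P hμ (σ * z.2 j)
    exact mul_le_of_le_one_right (by positivity) this

theorem exists_G (P : Prof) {ν : ℝ} (hν : 0 < ν) {κ : ℝ} (hκ : 1 ≤ κ) :
    ∃ g K G : SF d, (∀ k, D (ex k) g = 0) ∧ (∀ k, D (ex k) K = 0) ∧ (∀ k, D (ex k) G = 0) ∧
      K = cst κ * g ^ 2 ∧ D e0 G = K - 1 ∧ (∀ x, G.1 (0, x) = 0) ∧ (∀ x, g.1 (0, x) = 0) ∧
      (∀ z, |g.1 z| ≤ P.M * chi κ (ν * z.1)) ∧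
      (∀ z, |(D e0 g).1 z| ≤ κ * ν * P.M * chi κ (ν * z.1)) ∧
      (∀ z, |K.1 z| ≤ P.M ^ 2 * (κ * chi κ (ν * z.1))) ∧
      (∀ z, |G.1 z| ≤ 1 / ν) := by
  have hκ0 : 0 < κ := by linarith
  have hsc : ContDiff ℝ (⊤ : ℕ∞) fun y : ℝ => ν * y := contDiff_const.mul contDiff_id
  have s1 := per_smooth hκ P.sm1 P.supp1
  have hg1 : ContDiff ℝ (⊤ : ℕ∞) fun y => 1 * per κ (deriv P.ψ) (ν * y) := contDiff_const.mul (s1.comp hsc)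
  have hl : ContDiff ℝ (⊤ : ℕ∞) fun y => ν⁻¹ * prim P κ (ν * y) :=
    contDiff_const.mul ((prim_smooth P hκ).comp hsc)
  have hk : ContDiff ℝ (⊤ : ℕ∞) fun y => ker P κ (ν * y) := (ker_smooth P hκ).comp hsc
  refine ⟨ofT _ hg1, ofT _ hk, ofT _ hl, fun k => D_ofT_x _ _ _, fun k => D_ofT_x _ _ _, fun k => D_ofT_x _ _ _,
    ?_, ?_, ?_, ?_, ?_, ?_, ?_, ?_⟩
  · apply SF.ext'; intro z
    show κ * (per κ (deriv P.ψ) (ν * z.1)) ^ 2 = κ * (1 * per κ (deriv P.ψ) (ν * z.1)) ^ 2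
    rw [one_mul]
  · apply SF.ext'; intro z
    rw [D_ofT_t, deriv_scale ((prim_smooth P hκ).differentiable (by simp)), (prim_hasDeriv P hκ _).deriv]
    show _ = ker P κ (ν * z.1) - 1
    field_simp
  · intro x
    show ν⁻¹ * prim P κ (ν * 0) = 0
    rw [mul_zero, prim_zero, mul_zero]
  · intro x
    show 1 * per κ (deriv P.ψ) (ν * 0) = 0
    rw [mul_zero, one_mul]; unfold per; rw [Int.fract_zero, mul_zero]
    exact P.supp1 0 (Or.inl (by norm_num))
  · intro z
    show |1 * per κ (deriv P.ψ) (ν * z.1)| ≤ _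
    rw [one_mul]
    exact per_bound hκ P.b1 P.supp1 _
  · intro z
    rw [D_ofT_t, deriv_scale (s1.differentiable (by simp)), per_deriv hκ P.sm1 P.supp1, one_mul]
    rw [abs_mul, abs_mul, abs_of_pos hν, abs_of_pos hκ0]
    have := per_bound hκ P.b2 P.supp2 (ν * z.1)
    calc _ ≤ ν * (κ * (P.M * chi κ (ν * z.1))) := by gcongr
      _ = _ := by ring
  · intro z
    show |ker P κ (ν * z.1)| ≤ _
    rw [abs_of_nonneg (ker_nonneg P hκ _)]
    exact ker_bound P hκ _
  · intro z
    show |ν⁻¹ * prim P κ (ν * z.1)| ≤ _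
    rw [abs_mul, abs_of_pos (by positivity), one_div]
    have := prim_bound P hκ (ν * z.1)
    exact mul_le_of_le_one_right (by positivity) this

/-- perturbation velocity -/
def wv (i j : Fin d) (B : SF d) (t : ℝ) (x : Vec d) : Vec d :=
  (D (ex j) B).1 (t, x) • Pi.single i 1 - (D (ex i) B).1 (t, x) • Pi.single j 1

theorem wv_norm (i j : Fin d) (B : SF d) (t x) :
    ‖wv i j B t x‖ ≤ |(D (ex j) B).1 (t, x)| + |(D (ex i) B).1 (t, x)| := by
  refine (norm_sub_le _ _).trans ?_
  simp [norm_smul, Pi.norm_single]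

theorem slice_fderiv (f : SF d) (t : ℝ) (x v : Vec d) :
    fderiv ℝ (fun y => f.1 (t, y)) x v = fderiv ℝ f.1 (t, x) (0, v) := by
  have h1 : HasFDerivAt (fun y : Vec d => (t, y)) (ContinuousLinearMap.inr ℝ ℝ (Vec d)) x :=
    hasFDerivAt_prodMk_right t x
  have h := ((f.diff (t, x)).hasFDerivAt).comp x h1
  have : fderiv ℝ (fun y => f.1 (t, y)) x = _ := h.fderiv
  rw [this]; simp

theorem slice_diff (f : SF d) (t : ℝ) : Differentiable ℝ fun y => f.1 (t, y) :=
  f.diff.comp (by fun_prop : Differentiable ℝ fun y : Vec d => (t, y))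

theorem vec_sum (v : Vec d) : v = ∑ k, v k • (Pi.single k 1 : Vec d) := by
  ext l; simp [Finset.sum_apply, Pi.single_apply]

theorem slice_fderiv_norm (f : SF d) (t : ℝ) (x : Vec d) (c : ℝ) (hc : 0 ≤ c) (h : ∀ k, |(D (ex k) f).1 (t, x)| ≤ c) :
    ‖fderiv ℝ (fun y => f.1 (t, y)) x‖ ≤ d * c := by
  apply ContinuousLinearMap.opNorm_le_bound _ (by positivity)
  intro v
  conv_lhs => rw [vec_sum v, map_sum]
  refine (norm_sum_le _ _).trans ?_
  have : ∀ k ∈ Finset.univ, ‖fderiv ℝ (fun y => f.1 (t, y)) x (v k • (Pi.single k 1 : Vec d))‖ ≤ c * ‖v‖ := by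
    intro k _
    rw [map_smul, slice_fderiv, norm_smul, mul_comm]
    have := h k
    rw [D_ap] at this
    exact mul_le_mul this (norm_le_pi_norm v k) (norm_nonneg _) hc
  refine (Finset.sum_le_sum this).trans (le_of_eq ?_)
  simp; ring

theorem wv_fderiv_norm (i j : Fin d) (B : SF d) (t : ℝ) (x : Vec d) (c : ℝ) (hc : 0 ≤ c)
    (h : ∀ k l, |(D (ex k) (D (ex l) B)).1 (t, x)| ≤ c) :
    ‖fderiv ℝ (wv i j B t) x‖ ≤ 2 * d * c := by
  have e : wv i j B t = fun x => (D (ex j) B).1 (t, x) • (Pi.single i 1 : Vec d) - (D (ex i) B).1 (t, x) • (Pi.single j 1 : Vec d) := rfl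
  rw [e, fderiv_fun_sub ((slice_diff (D (ex j) B) t x).smul_const _) ((slice_diff (D (ex i) B) t x).smul_const _),
    fderiv_smul_const (slice_diff (D (ex j) B) t x), fderiv_smul_const (slice_diff (D (ex i) B) t x)]
  refine (norm_sub_le _ _).trans ?_
  rw [ContinuousLinearMap.norm_smulRight_apply, ContinuousLinearMap.norm_smulRight_apply, Pi.norm_single, Pi.norm_single, norm_one,
    mul_one, mul_one]
  have h1 := slice_fderiv_norm (D (ex j) B) t x c hc (fun k => h k j)
  have h2 := slice_fderiv_norm (D (ex i) B) t x c hc (fun k => h k i)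
  linarith
end NU
end

noncomputable section
namespace NU
variable {d : ℕ}

theorem am {x y X Y : ℝ} (hx : |x| ≤ X) (hy : |y| ≤ Y) : |x * y| ≤ X * Y := by
  rw [abs_mul]; exact mul_le_mul hx hy (abs_nonneg _) ((abs_nonneg _).trans hx)
theorem aa {x y X Y : ℝ} (hx : |x| ≤ X) (hy : |y| ≤ Y) : |x + y| ≤ X + Y :=
  (abs_add_le x y).trans (add_le_add hx hy)
theorem as {x y X Y : ℝ} (hx : |x| ≤ X) (hy : |y| ≤ Y) : |x - y| ≤ X + Y :=
  (abs_sub x y).trans (add_le_add hx hy)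
theorem an {x X : ℝ} (hx : |x| ≤ X) : |-x| ≤ X := by rwa [abs_neg]


section reals
variable {M H σ ν μ κ c1 c2 ck cm : ℝ}

theorem rb_T {Q x1 x2 q : ℝ} (hσ : 0 < σ) (hμ : 0 < μ) (hM : 0 < M) (hH : 0 < H) (hcm1 : cm ≤ 1)
    (bQ : |Q| ≤ M / (σ * μ) * cm) (h1 : |x1| ≤ H) (h2 : |x2| ≤ H) (hq : |q| ≤ M) :
    |μ * (x1 * x2 * (Q * q))| ≤ H ^ 2 * M ^ 2 / σ := by
  refine (am (le_of_eq (abs_of_pos hμ)) (am (am h1 h2) (am bQ hq))).trans ?_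
  calc μ * (H * H * (M / (σ * μ) * cm * M)) = H ^ 2 * M ^ 2 / σ * cm := by field_simp
    _ ≤ H ^ 2 * M ^ 2 / σ * 1 := by gcongr
    _ = _ := by ring

theorem rb_L {L y : ℝ} (hσ : 0 < σ) (hM : 1 ≤ M) (hH : 1 ≤ H) (bL : |L| ≤ 1 / σ) (hy : |y| ≤ H) :
    |y * L| ≤ H ^ 2 * M ^ 2 / σ := by
  refine (am hy bL).trans ?_
  have : H ≤ H ^ 2 * M ^ 2 := by
    have : 1 ≤ M ^ 2 := by nlinarith
    nlinarith
  rw [mul_one_div]; gcongr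

theorem rb_θ {a aj Q Qj g Y : ℝ} (hM : 0 < M) (hc : 0 < c1) (hck : 0 ≤ ck) (hcm : 0 ≤ cm)
    (bg : |g| ≤ c1 * (M * ck)) (bQ' : |Q| ≤ M / σ * cm) (bQj : |Qj| ≤ M * cm) (baj : |aj| ≤ H)
    (h1 : |a| ≤ Y) (h2 : H / σ ≤ Y) : |g * (a * Qj + aj * Q)| ≤ 2 * M ^ 2 * c1 * (ck * cm) * Y := by
  refine (am bg (aa (am h1 bQj) (am baj bQ'))).trans ?_
  have : H * (M / σ * cm) = H / σ * (M * cm) := by ring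
  rw [this]
  calc c1 * (M * ck) * (Y * (M * cm) + H / σ * (M * cm)) ≤ c1 * (M * ck) * (Y * (M * cm) + Y * (M * cm)) := by gcongr
    _ = _ := by ring

theorem rb_w {a aj ai Q Qj g Y : ℝ} (hM : 0 < M) (hc : 0 < c1) (hck : 0 ≤ ck) (hcm : 0 ≤ cm)
    (bg : |g| ≤ c1 * (M * ck)) (bQ' : |Q| ≤ M / σ * cm) (bQj : |Qj| ≤ M * cm) (baj : |aj| ≤ H) (bai : |ai| ≤ H)
    (h1 : |a| ≤ Y) (h2 : H / σ ≤ Y) : |g * (a * Qj + aj * Q)| + |g * (ai * Q)| ≤ 3 * M ^ 2 * c1 * (ck * cm) * Y := by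
  refine (add_le_add (rb_θ hM hc hck hcm bg bQ' bQj baj h1 h2) (am bg (am bai bQ'))).trans ?_
  have : H * (M / σ * cm) = H / σ * (M * cm) := by ring
  rw [this]
  calc 2 * M ^ 2 * c1 * (ck * cm) * Y + c1 * (M * ck) * (H / σ * (M * cm))
      ≤ 2 * M ^ 2 * c1 * (ck * cm) * Y + c1 * (M * ck) * (Y * (M * cm)) := by gcongr
    _ = _ := by ring

theorem rb_R1 {a b aj bj Q Qj L K G Rt Rij ui ρ θ θo w : ℝ} (hM : 1 ≤ M) (hH : 1 ≤ H) (hσ : 1 ≤ σ) (hν : 1 ≤ ν)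
    (hμ : 1 ≤ μ) (hc1 : 0 < c1) (hc2 : 0 < c2) (hck : 0 ≤ ck) (hcm : 0 ≤ cm) (hcm1 : cm ≤ 1)
    (ba : |a| ≤ H) (bb : |b| ≤ H) (baj : |aj| ≤ H) (bbj : |bj| ≤ H) (bQ : |Q| ≤ M / (σ * μ) * cm)
    (bQM : |Q| ≤ M) (bQjM : |Qj| ≤ M) (bL : |L| ≤ 1 / σ) (bK : |K| ≤ M ^ 2 * (κ * ck)) (bG : |G| ≤ 1 / ν)
    (bRt : |Rt| ≤ H) (bRij : |Rij| ≤ H) (bui : |ui| ≤ H) (bρ : |ρ| ≤ H)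
    (bθ : |θ| ≤ 2 * M ^ 2 * c1 * (ck * cm) * H) (bθo : |θo| ≤ H / ν) (bw : |w| ≤ 3 * M ^ 2 * c2 * (ck * cm) * H) :
    |G * Rt + θ * ui + ρ * w + θo * ui + θo * w + K * (μ * (aj * Q * b * Qj + a * Qj * bj * Q + aj * bj * Q ^ 2) + Rij * L)|
      ≤ 2 * H ^ 2 / ν + (4 * M ^ 4 * H ^ 2 * κ / σ) * ck + (6 * M ^ 2 * H ^ 2 * (c1 + c2)) * (ck * cm) := by
  have hσ0 : 0 < σ := by linarith
  have hμ0 : 0 < μ := by linarith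
  have hM0 : 0 < M := by linarith
  have hH0 : 0 < H := by linarith
  have hν0 : 0 < ν := by linarith
  have bθoH : |θo| ≤ H := bθo.trans (div_le_self hH0.le hν)
  have hE : |μ * (aj * Q * b * Qj + a * Qj * bj * Q + aj * bj * Q ^ 2) + Rij * L| ≤ 4 * (H ^ 2 * M ^ 2 / σ) := by
    have := aa (aa (aa (rb_T hσ0 hμ0 hM0 hH0 hcm1 bQ baj bb bQjM) (rb_T hσ0 hμ0 hM0 hH0 hcm1 bQ ba bbj bQjM))
      (rb_T hσ0 hμ0 hM0 hH0 hcm1 bQ baj bbj bQM)) (rb_L hσ0 hM hH bL bRij)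
    refine le_trans (le_of_eq ?_) (this.trans (le_of_eq (by ring)))
    congr 1; ring
  refine (aa (aa (aa (aa (aa (am bG bRt) (am bθ bui)) (am bρ bw)) (am bθo bui)) (am bθoH bw)) (am bK hE)).trans ?_
  have hp : 0 ≤ M ^ 2 * H ^ 2 * c1 * (ck * cm) := by positivity
  have hH2 : H / ν ≤ H ^ 2 / ν := by gcongr; nlinarith
  have e1 : 1 / ν * H = H / ν := by ring
  have e2 : H / ν * H = H ^ 2 / ν := by ring
  have e3 : M ^ 2 * (κ * ck) * (4 * (H ^ 2 * M ^ 2 / σ)) = 4 * M ^ 4 * H ^ 2 * κ / σ * ck := by ring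
  have e4 : 2 * H ^ 2 / ν = H ^ 2 / ν + H ^ 2 / ν := by ring
  rw [e1, e2, e3, e4]
  have e5 : 2 * M ^ 2 * c1 * (ck * cm) * H * H + H * (3 * M ^ 2 * c2 * (ck * cm) * H) + H * (3 * M ^ 2 * c2 * (ck * cm) * H)
    ≤ 6 * M ^ 2 * H ^ 2 * (c1 + c2) * (ck * cm) := by
    have : 6 * M ^ 2 * H ^ 2 * (c1 + c2) * (ck * cm) = 2 * M ^ 2 * c1 * (ck * cm) * H * H + H * (3 * M ^ 2 * c2 * (ck * cm) * H) + H * (3 * M ^ 2 * c2 * (ck * cm) * H) + 4 * (M ^ 2 * H ^ 2 * c1 * (ck * cm)) := by ring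
    linarith
  linarith

theorem rb_R2 {a aj bi Q Qj L K Rii uj ρ θ θo w DP Rj E : ℝ} (hM : 1 ≤ M) (hH : 1 ≤ H) (hσ : 1 ≤ σ) (hν : 1 ≤ ν)
    (hμ : 1 ≤ μ) (hc1 : 0 < c1) (hc2 : 0 < c2) (hck : 0 ≤ ck) (hcm : 0 ≤ cm) (hcm1 : cm ≤ 1)
    (ba : |a| ≤ H) (baj : |aj| ≤ H) (bbi : |bi| ≤ H) (bQ : |Q| ≤ M / (σ * μ) * cm)
    (bQM : |Q| ≤ M) (bQjM : |Qj| ≤ M) (bL : |L| ≤ 1 / σ) (bK : |K| ≤ M ^ 2 * (κ * ck))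
    (bRii : |Rii| ≤ H) (buj : |uj| ≤ H) (bρ : |ρ| ≤ H)
    (bθ : |θ| ≤ 2 * M ^ 2 * c1 * (ck * cm) * H) (bθo : |θo| ≤ H / ν) (bw : |w| ≤ 3 * M ^ 2 * c2 * (ck * cm) * H)
    (bD : |DP| ≤ E * (ck * cm)) :
    |Rj + DP + θ * uj + ρ * -w + θo * uj + θo * -w + K * (-(μ * (a * Qj + aj * Q) * bi * Q) - Rii * L) - Rj|
      ≤ 2 * H ^ 2 / ν + (4 * M ^ 4 * H ^ 2 * κ / σ) * ck + (6 * M ^ 2 * H ^ 2 * (c1 + c2) + E) * (ck * cm) := by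
  have hσ0 : 0 < σ := by linarith
  have hμ0 : 0 < μ := by linarith
  have hM0 : 0 < M := by linarith
  have hH0 : 0 < H := by linarith
  have hν0 : 0 < ν := by linarith
  have bθoH : |θo| ≤ H := bθo.trans (div_le_self hH0.le hν)
  have hE : |-(μ * (a * Qj + aj * Q) * bi * Q) - Rii * L| ≤ 4 * (H ^ 2 * M ^ 2 / σ) := by
    have := as (an (aa (rb_T hσ0 hμ0 hM0 hH0 hcm1 bQ ba bbi bQjM) (rb_T hσ0 hμ0 hM0 hH0 hcm1 bQ baj bbi bQM)))
      (rb_L hσ0 hM hH bL bRii)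
    have h0 : 0 ≤ H ^ 2 * M ^ 2 / σ := by positivity
    refine le_trans (le_of_eq ?_) (this.trans (by linarith))
    congr 1; ring
  have := (aa (aa (aa (aa (aa bD (am bθ buj)) (am bρ (an bw))) (am bθo buj)) (am bθoH (an bw))) (am bK hE))
  refine le_trans (le_of_eq ?_) (this.trans ?_)
  · congr 1; ring
  have hp : 0 ≤ M ^ 2 * H ^ 2 * c1 * (ck * cm) := by positivity
  have hp' : 0 ≤ H ^ 2 / ν := by positivity
  have e2 : H / ν * H = H ^ 2 / ν := by ring
  have e3 : M ^ 2 * (κ * ck) * (4 * (H ^ 2 * M ^ 2 / σ)) = 4 * M ^ 4 * H ^ 2 * κ / σ * ck := by ring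
  have e4 : 2 * H ^ 2 / ν = H ^ 2 / ν + H ^ 2 / ν := by ring
  rw [e2, e3, e4]
  have e5 : 2 * M ^ 2 * c1 * (ck * cm) * H * H + H * (3 * M ^ 2 * c2 * (ck * cm) * H) + H * (3 * M ^ 2 * c2 * (ck * cm) * H)
    ≤ 6 * M ^ 2 * H ^ 2 * (c1 + c2) * (ck * cm) := by
    have : 6 * M ^ 2 * H ^ 2 * (c1 + c2) * (ck * cm) = 2 * M ^ 2 * c1 * (ck * cm) * H * H + H * (3 * M ^ 2 * c2 * (ck * cm) * H) + H * (3 * M ^ 2 * c2 * (ck * cm) * H) + 4 * (M ^ 2 * H ^ 2 * c1 * (ck * cm)) := by ring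
    linarith
  rw [add_mul (6 * M ^ 2 * H ^ 2 * (c1 + c2))]
  linarith

theorem rb_D {g gt a at' Q : ℝ} (hM : 1 ≤ M) (hH : 1 ≤ H) (hσ : 1 ≤ σ) (hμ : 1 ≤ μ) (hκ : 1 ≤ κ) (hc1 : 0 < c1)
    (hck : 0 ≤ ck) (hcm : 0 ≤ cm) (bgt : |gt| ≤ κ * ν * M * ck) (bg : |g| ≤ M * ck)
    (ba : |a| ≤ H) (bat : |at'| ≤ H) (bQ : |Q| ≤ M / (σ * μ) * cm) :
    |c1 * (gt * (a * Q) + g * (at' * Q))| ≤ M ^ 2 * H * c1 * κ * (ν + 1) / μ * (ck * cm) := by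
  have hM0 : 0 < M := by linarith
  have hH0 : 0 < H := by linarith
  have hμ0 : 0 < μ := by linarith
  have bQ3 : |Q| ≤ M / μ * cm := bQ.trans (by gcongr; nlinarith)
  refine (am (le_of_eq (abs_of_pos hc1)) (aa (am bgt (am ba bQ3)) (am bg (am bat bQ3)))).trans ?_
  have : M * ck * (H * (M / μ * cm)) ≤ κ * (M * ck * (H * (M / μ * cm))) := by
    have : 0 ≤ M * ck * (H * (M / μ * cm)) := by positivity
    nlinarith
  calc c1 * (κ * ν * M * ck * (H * (M / μ * cm)) + M * ck * (H * (M / μ * cm)))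
    ≤ c1 * (κ * ν * M * ck * (H * (M / μ * cm)) + κ * (M * ck * (H * (M / μ * cm)))) := by gcongr
    _ = _ := by ring

theorem rb_W {g bkl bk bl b Q Qk Ql Qkl : ℝ} (hM : 1 ≤ M) (hH : 1 ≤ H) (hσ : 1 ≤ σ) (hμ : 1 ≤ μ) (hc2 : 0 < c2)
    (hck : 0 ≤ ck) (hcm : 0 ≤ cm) (bg : |g| ≤ c2 * (M * ck)) (h1 : |bkl| ≤ H) (h2 : |bk| ≤ H) (h3 : |bl| ≤ H) (h4 : |b| ≤ H)
    (q1 : |Q| ≤ M * cm) (q2 : |Qk| ≤ M * cm) (q3 : |Ql| ≤ M * cm) (q4 : |Qkl| ≤ σ * μ * M * cm) :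
    |g * (bkl * Q + bl * Qk + bk * Ql + b * Qkl)| ≤ 4 * M ^ 2 * c2 * H * σ * μ * (ck * cm) := by
  have hM0 : 0 < M := by linarith
  have hH0 : 0 < H := by linarith
  refine (am bg (aa (aa (aa (am h1 q1) (am h3 q2)) (am h2 q3)) (am h4 q4))).trans ?_
  have : M * cm ≤ σ * μ * M * cm := by
    have h0 : 0 ≤ M * cm := by positivity
    have : 1 ≤ σ * μ := by nlinarith
    nlinarith
  calc c2 * (M * ck) * (H * (M * cm) + H * (M * cm) + H * (M * cm) + H * (σ * μ * M * cm))
    ≤ c2 * (M * ck) * (H * (σ * μ * M * cm) + H * (σ * μ * M * cm) + H * (σ * μ * M * cm) + H * (σ * μ * M * cm)) := by gcongr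
    _ = _ := by ring
end reals

set_option maxHeartbeats 1000000 in
theorem step_core (P : Prof) {i j : Fin d} (hij : i ≠ j) {T : ℝ}
    (ρ ui uj Ri Rj a b ah bh : SF d)
    (hpde : D e0 ρ + D (ex i) (ρ * ui) + D (ex j) (ρ * uj) = D (ex i) Ri + D (ex j) Rj)
    (hab : a * b = -Ri) (haa : ∀ z, |a.1 z| ≤ ah.1 z) (hbb : ∀ z, |b.1 z| ≤ bh.1 z)
    {H : ℝ} (hH : 1 ≤ H) {σ : ℕ} (hσ : 0 < σ) {ν c1 c2 μ κ : ℝ} (hν : 1 ≤ ν)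
    (hμ : 1 ≤ μ) (hκ : 1 ≤ κ) (hc1 : 0 < c1) (hc2 : 0 < c2) (hcc : c1 * c2 = κ * μ)
    (hb0 : ∀ t ∈ Set.Icc 0 T, ∀ x, |a.1 (t, x)| ≤ H ∧ |b.1 (t, x)| ≤ H ∧ |(D (ex j) a).1 (t, x)| ≤ H
      ∧ |(D e0 a).1 (t, x)| ≤ H ∧ |(D (ex i) Ri).1 (t, x)| ≤ H ∧ |(D (ex j) Ri).1 (t, x)| ≤ H ∧
      |(D e0 Ri).1 (t, x)| ≤ H ∧ |ui.1 (t, x)| ≤ H ∧ |uj.1 (t, x)| ≤ H ∧ |ρ.1 (t, x)| ≤ H ∧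
      (∀ k, |(D (ex k) b).1 (t, x)| ≤ H) ∧ (∀ k l, |(D (ex k) (D (ex l) b)).1 (t, x)| ≤ H))
    (hha : ∀ t ∈ Set.Icc 0 T, ∀ x, H / σ ≤ ah.1 (t, x))
    (hhb : ∀ t ∈ Set.Icc 0 T, ∀ x, H / σ ≤ bh.1 (t, x)) :
    ∃ θ θo B Ri' Rj' : SF d,
      (D e0 (ρ + θ + θo) + D (ex i) ((ρ + θ + θo) * (ui + D (ex j) B)) + D (ex j) ((ρ + θ + θo) * (uj + -D (ex i) B))
        = D (ex i) Ri' + D (ex j) Rj') ∧ (∀ x, θ.1 (0, x) = 0) ∧ (∀ x, θo.1 (0, x) = 0) ∧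
      ∀ t ∈ Set.Icc 0 T, ∀ x,
        |θ.1 (t, x)| ≤ (2 * P.M ^ 2 * c1) * (chi κ (ν * t) * chi μ (σ * x j)) * ah.1 (t, x) ∧
        |θo.1 (t, x)| ≤ H / ν ∧
        |(D (ex j) B).1 (t, x)| + |(D (ex i) B).1 (t, x)| ≤
          (3 * P.M ^ 2 * c2) * (chi κ (ν * t) * chi μ (σ * x j)) * bh.1 (t, x) ∧
        |(D (ex j) B).1 (t, x)| + |(D (ex i) B).1 (t, x)| ≤
          (3 * P.M ^ 2 * c2) * (chi κ (ν * t) * chi μ (σ * x j)) * H ∧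
        (∀ k l', |(D (ex k) (D (ex l') B)).1 (t, x)| ≤
          (4 * P.M ^ 2 * c2 * H * σ * μ) * (chi κ (ν * t) * chi μ (σ * x j))) ∧
        |Ri'.1 (t, x)| ≤ 2 * H ^ 2 / ν + (4 * P.M ^ 4 * H ^ 2 * κ / σ) * chi κ (ν * t)
          + (6 * P.M ^ 2 * H ^ 2 * (c1 + c2)) * (chi κ (ν * t) * chi μ (σ * x j)) ∧
        |(Rj' - Rj).1 (t, x)| ≤ 2 * H ^ 2 / ν + (4 * P.M ^ 4 * H ^ 2 * κ / σ) * chi κ (ν * t)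
          + (6 * P.M ^ 2 * H ^ 2 * (c1 + c2) + P.M ^ 2 * H * c1 * κ * (ν + 1) / μ)
            * (chi κ (ν * t) * chi μ (σ * x j)) := by
  obtain ⟨Q, L, hQk, hQt, hLk, hLj, bQ, bQj, bQjj, bL⟩ := exists_Q P j hσ hμ
  obtain ⟨g, K, G, hgk, hKk, hGk, hK, hGt, hG0, hg0, bg, bgt, bK, bG⟩ := exists_G (d := d) P (by linarith : 0 < ν) hκ
  obtain ⟨g1, hg1⟩ : ∃ g1 : SF d, g1 = cst c1 * g := ⟨_, rfl⟩
  obtain ⟨g2, hg2⟩ : ∃ g2 : SF d, g2 = cst c2 * g := ⟨_, rfl⟩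
  have dg1 : ∀ k, D (ex k) g1 = 0 := fun k => by
    rw [hg1, Derivation.leibniz, D_cst, hgk]; simp
  have dg2 : ∀ k, D (ex k) g2 = 0 := fun k => by
    rw [hg2, Derivation.leibniz, D_cst, hgk]; simp
  have hgg : g1 * g2 = K * cst μ := by
    apply SF.ext'; intro z
    rw [hK]
    simp only [hg1, hg2, SF.mul_ap, cst_ap, SF.pow_ap]
    linear_combination (g.1 z) ^ 2 * hcc
  have hM := P.hM
  have hM0 : 0 < P.M := by linarith
  have hσ1 : (1:ℝ) ≤ σ := by exact_mod_cast hσ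
  have hσ0 : (0:ℝ) < σ := by linarith
  have hμ0 : 0 < μ := by linarith
  have hν0 : 0 < ν := by linarith
  have hH0 : 0 < H := by linarith
  have eθ : D (ex j) (g1 * a * Q) = g1 * (a * (D (ex j) Q) + (D (ex j) a) * Q) := by
    simp only [Derivation.leibniz, smul_eq_mul, dg1 j]; ring
  have ewi : D (ex j) (g2 * b * Q) = g2 * (b * D (ex j) Q + D (ex j) b * Q) := by
    simp only [Derivation.leibniz, smul_eq_mul, dg2 j]; ring
  have ewj : D (ex i) (g2 * b * Q) = g2 * (D (ex i) b * Q) := by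
    simp only [Derivation.leibniz, smul_eq_mul, dg2 i, hQk i hij]; ring
  have eD : D e0 (g1 * a * Q) = cst c1 * (D e0 g * (a * Q) + g * (D e0 a * Q)) := by
    simp only [hg1, Derivation.leibniz, smul_eq_mul, hQt, D_cst]; ring
  have eW : ∀ k l', D (ex k) (D (ex l') (g2 * b * Q)) = g2 * (D (ex k) (D (ex l') b) * Q
        + D (ex l') b * D (ex k) Q + D (ex k) b * D (ex l') Q + b * D (ex k) (D (ex l') Q)) := by
    intro k l'
    simp only [Derivation.leibniz, smul_eq_mul, dg2, mul_zero, map_add, add_zero]; ring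
  have alg := step_alg i j ρ ui uj Ri Rj a b Q L g1 g2 K G (cst μ) hpde hab (hQk i hij) (hLk i hij) hLj (dg1 j) (dg2 i) (dg2 j)
      (hKk i) (hKk j) (hGk i) hGt hgg _ _ _ _ rfl rfl rfl rfl
  obtain ⟨θ, hθ⟩ : ∃ θ : SF d, θ = D (ex j) (g1 * a * Q) := ⟨_, rfl⟩
  obtain ⟨B, hB⟩ : ∃ B : SF d, B = g2 * b * Q := ⟨_, rfl⟩
  obtain ⟨θo, hθo⟩ : ∃ B : SF d, B = G * D (ex i) Ri := ⟨_, rfl⟩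
  obtain ⟨DP, hDP⟩ : ∃ B : SF d, B = D e0 (g1 * a * Q) := ⟨_, rfl⟩
  rw [← hθ, ← hθo, ← hB, ← hDP] at alg
  rw [← hθ] at eθ
  rw [← hB] at ewi ewj
  rw [← hDP] at eD
  simp only [← hB] at eW
  clear hpde hab hθ hB hDP
  refine ⟨θ, θo, B, _, _, alg, ?_, ?_, ?_⟩
  · intro x
    rw [eθ, SF.mul_ap, hg1, SF.mul_ap, hg0, mul_zero, zero_mul]
  · intro x
    rw [hθo, SF.mul_ap, hG0, zero_mul]
  clear alg
  intro t ht x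
  obtain ⟨ba, bb, baj, bat, bRi, bRj, bRt, bui, buj, bρ, bbk, bbkl⟩ := hb0 t ht x
  have hha' := hha t ht x
  have hhb' := hhb t ht x
  have hck0 : 0 ≤ chi κ (ν * t) := chi_nonneg _ _
  have hcm0 : 0 ≤ chi μ (σ * x j) := chi_nonneg _ _
  have hcm1 : chi μ (σ * x j) ≤ 1 := chi_le_one _ _
  replace bQ : |Q.1 (t, x)| ≤ P.M / (σ * μ) * chi μ (σ * x j) := bQ (t, x)
  replace bQj : |(D (ex j) Q).1 (t, x)| ≤ P.M * chi μ (σ * x j) := bQj (t, x)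
  replace bQjj : |(D (ex j) (D (ex j) Q)).1 (t, x)| ≤ σ * μ * P.M * chi μ (σ * x j) := bQjj (t, x)
  replace bL := bL (t, x)
  replace bg : |g.1 (t, x)| ≤ P.M * chi κ (ν * t) := bg (t, x)
  replace bgt : |(D e0 g).1 (t, x)| ≤ κ * ν * P.M * chi κ (ν * t) := bgt (t, x)
  replace bK : |K.1 (t, x)| ≤ P.M ^ 2 * (κ * chi κ (ν * t)) := bK (t, x)
  replace bG := bG (t, x)
  have haa' := haa (t, x)
  have hbb' := hbb (t, x)
  generalize chi κ (ν * t) = ck at *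
  generalize chi μ (σ * x j) = cm at *
  have bg1 : |g1.1 (t, x)| ≤ c1 * (P.M * ck) := by
    rw [hg1, SF.mul_ap, cst_ap, abs_mul, abs_of_pos hc1]; gcongr
  have bg2 : |g2.1 (t, x)| ≤ c2 * (P.M * ck) := by
    rw [hg2, SF.mul_ap, cst_ap, abs_mul, abs_of_pos hc2]; gcongr
  have bQ' : |Q.1 (t, x)| ≤ P.M / σ * cm := bQ.trans (by
    gcongr; nlinarith)
  have bQ'' : |Q.1 (t, x)| ≤ P.M * cm := bQ'.trans (by
    gcongr; exact div_le_self hM0.le hσ1)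
  have bQM : |Q.1 (t, x)| ≤ P.M := bQ''.trans (mul_le_of_le_one_right hM0.le hcm1)
  have bQjM : |(D (ex j) Q).1 (t, x)| ≤ P.M := bQj.trans (mul_le_of_le_one_right hM0.le hcm1)
  have hHσ : H / σ ≤ H := div_le_self hH0.le hσ1
  have eθ' : θ.1 (t, x) = g1.1 (t, x) * (a.1 (t, x) * (D (ex j) Q).1 (t, x) + (D (ex j) a).1 (t, x) * Q.1 (t, x)) := by
    rw [eθ]; rfl
  have ewi' : (D (ex j) B).1 (t, x) = g2.1 (t, x) * (b.1 (t, x) * (D (ex j) Q).1 (t, x) + (D (ex j) b).1 (t, x) * Q.1 (t, x)) := by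
    rw [ewi]; rfl
  have ewj' : (D (ex i) B).1 (t, x) = g2.1 (t, x) * ((D (ex i) b).1 (t, x) * Q.1 (t, x)) := by
    rw [ewj]; rfl
  have hθH : |θ.1 (t, x)| ≤ 2 * P.M ^ 2 * c1 * (ck * cm) * H := by rw [eθ']; exact rb_θ hM0 hc1 hck0 hcm0 bg1 bQ' bQj baj ba hHσ
  have hwH : |(D (ex j) B).1 (t, x)| + |(D (ex i) B).1 (t, x)| ≤ 3 * P.M ^ 2 * c2 * (ck * cm) * H := by
    rw [ewi', ewj']; exact rb_w hM0 hc2 hck0 hcm0 bg2 bQ' bQj (bbk j) (bbk i) bb hHσ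
  have hwiH := le_trans (le_add_of_nonneg_right (abs_nonneg _)) hwH
  have hwjH := le_trans (le_add_of_nonneg_left (abs_nonneg _)) hwH
  have bθo : |θo.1 (t, x)| ≤ H / ν := by
    rw [hθo, SF.mul_ap]; exact (am bG bRi).trans (le_of_eq (by ring))
  have hQQ1 : ∀ k, |(D (ex k) Q).1 (t, x)| ≤ P.M * cm := by
    intro k
    by_cases hk : k = j
    · rw [hk]; exact bQj
    · rw [hQk k hk, SF.zero_ap, abs_zero]; positivity
  have hQQ2 : ∀ k l', |(D (ex k) (D (ex l') Q)).1 (t, x)| ≤ σ * μ * P.M * cm := by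
    intro k l'
    by_cases hl' : l' = j
    · rw [hl']
      by_cases hk : k = j
      · rw [hk]; exact bQjj
      · rw [D_comm, hQk k hk, map_zero, SF.zero_ap, abs_zero]; positivity
    · rw [hQk l' hl', map_zero, SF.zero_ap, abs_zero]; positivity
  refine ⟨?_, bθo, ?_, hwH, ?_, ?_, ?_⟩
  · rw [eθ']; exact rb_θ hM0 hc1 hck0 hcm0 bg1 bQ' bQj baj haa' hha'
  · rw [ewi', ewj']; exact rb_w hM0 hc2 hck0 hcm0 bg2 bQ' bQj (bbk j) (bbk i) hbb' hhb'
  · intro k l'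
    rw [eW]
    exact rb_W hM hH hσ1 hμ hc2 hck0 hcm0 bg2 (bbkl k l') (bbk k) (bbk l') bb bQ'' (hQQ1 k) (hQQ1 l') (hQQ2 k l')
  · exact rb_R1 hM hH hσ1 hν hμ hc1 hc2 hck0 hcm0 hcm1 ba bb baj (bbk j) bQ bQM bQjM bL bK bG bRt bRj bui bρ hθH bθo hwiH
  · have bD : |DP.1 (t, x)| ≤ P.M ^ 2 * H * c1 * κ * (ν + 1) / μ * (ck * cm) := by
      rw [eD]; exact rb_D hM hH hσ1 hμ hκ hc1 hck0 hcm0 bgt bg ba bat bQ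
    exact rb_R2 hM hH hσ1 hν hμ hc1 hc2 hck0 hcm0 hcm1 ba baj (bbk i) bQ bQM bQjM bL bK bRi buj bρ hθH bθo hwjH bD
end NU
end

noncomputable section
namespace NU
variable {d : ℕ}

theorem chi_01 (μ y : ℝ) : chi μ y = 0 ∨ chi μ y = 1 := by
  unfold chi; split_ifs <;> simp

theorem chi_rpow (μ y : ℝ) {α : ℝ} (hα : 0 < α) : chi μ y ^ α = chi μ y := by
  rcases chi_01 μ y with h | h <;> rw [h]
  · exact Real.zero_rpow hα.ne'
  · exact Real.one_rpow _

theorem Ex_real {q : ℝ} (hq : 0 < q) : Ex (ENNReal.ofReal q) (1 / q) := by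
  right
  refine ⟨ofReal_ne_top, by positivity, ?_⟩
  rw [ENNReal.toReal_ofReal hq.le]; field_simp

theorem spat {E : Type*} [NormedAddCommGroup E] (j : Fin d) (f : Vec d → E) (A : Vec d → ℝ)
    (hA : Continuous A) (hApos : ∀ x, 0 < A x) {r μ C γ q : ℝ} (hr : 0 < r) (hμ : 1 ≤ μ) (hC : 0 ≤ C) (hq : 1 ≤ q)
    {σ : ℕ} (hσ : 0 < σ)
    (hosc : ∀ x ∈ fundCube d, ∀ x' ∈ fundCube d, dist x x' ≤ 1 / σ → A x ≤ 2 * A x')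
    (hint : ∫⁻ x in fundCube d, ENNReal.ofReal (A x) ≤ ENNReal.ofReal r)
    (hf : ∀ x, ‖f x‖ ≤ C * chi μ (σ * x j) * (r ^ γ * A x ^ (1 / q))) :
    spLp (ENNReal.ofReal q) f ≤ ENNReal.ofReal (2 * (C * μ ^ (-(1 / q)) * r ^ (γ + 1 / q))) := by
  have hq0 : 0 < q := by linarith
  have hα : 0 < 1 / q := by positivity
  have hμ0 : 0 < μ := by linarith
  have hF : Measurable fun y => ENNReal.ofReal (μ * chi μ y) :=
    ((chi_meas μ).const_mul μ).ennreal_ofReal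
  have key := cube_bound j (fun x => ENNReal.ofReal (A x)) (fun y => ENNReal.ofReal (μ * chi μ y))
    hA.measurable.ennreal_ofReal hF (fun y n => by simp only [chi_int]) hσ 2 (by
      intro x hx x' hx' h
      refine (ENNReal.ofReal_le_ofReal (hosc x hx x' hx' h)).trans ?_
      rw [ENNReal.ofReal_mul (by norm_num)]; simp)
  have hF1 : ∫⁻ y in Set.Ico (0:ℝ) 1, ENNReal.ofReal (μ * chi μ y) = 1 := by
    simp only [ENNReal.ofReal_mul hμ0.le]
    rw [lintegral_const_mul _ (ofReal_chi_meas μ), chi_lint hμ, ← ENNReal.ofReal_mul hμ0.le,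
      mul_inv_cancel₀ hμ0.ne', ENNReal.ofReal_one]
  rw [hF1, mul_one] at key
  have := eLpGen_le (ν := volume.restrict (fundCube d)) (Ex_real hq0) (fun x => (‖f x‖₊ : ℝ≥0∞)) _
    (ENNReal.ofReal (C * μ ^ (-(1 / q)) * r ^ γ)) (2 * ENNReal.ofReal r) ofReal_ne_top ?_ (key.trans (by gcongr))
  · refine this.trans ?_
    rw [ENNReal.mul_rpow_of_nonneg _ _ hα.le, ENNReal.ofReal_rpow_of_pos hr, Real.rpow_add hr]
    have h2 : (2 : ℝ≥0∞) ^ (1 / q) ≤ 2 := by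
      calc (2 : ℝ≥0∞) ^ (1 / q) ≤ (2 : ℝ≥0∞) ^ (1:ℝ) := by
            apply ENNReal.rpow_le_rpow_of_exponent_le (by norm_num)
            rw [div_le_one hq0]; exact hq
        _ = 2 := by simp
    calc _ ≤ ENNReal.ofReal (C * μ ^ (-(1 / q)) * r ^ γ) * (2 * ENNReal.ofReal (r ^ (1 / q))) := by gcongr
      _ = _ := by
        rw [show (2:ℝ≥0∞) = ENNReal.ofReal 2 by simp, ← ENNReal.ofReal_mul (by norm_num), ← ENNReal.ofReal_mul (by positivity)]
        congr 1; ring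
  · refine Filter.Eventually.of_forall fun x => ?_
    rw [← ENNReal.ofReal_mul (hApos x).le, ENNReal.ofReal_rpow_of_nonneg (mul_nonneg (hApos x).le (mul_nonneg hμ0.le (chi_nonneg _ _))) hα.le,
      ← ENNReal.ofReal_mul (by positivity), ← enorm_eq_nnnorm, ← ofReal_norm]
    apply ENNReal.ofReal_le_ofReal
    refine (hf x).trans (le_of_eq ?_)
    rw [Real.mul_rpow (hApos x).le (mul_nonneg hμ0.le (chi_nonneg _ _)), Real.mul_rpow hμ0.le (chi_nonneg _ _), chi_rpow _ _ hα,
      Real.rpow_neg hμ0.le]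
    field_simp

theorem params {p q s l X : ℝ} (hp : 1 < p) (hq : 1 < q) (hpq : 1 / p + 1 / q = 1) (hs : 1 ≤ s) (hl : 0 < l) (hX : 1 ≤ X) :
    ∃ μ κ c1 c2 : ℝ, 1 ≤ μ ∧ 1 ≤ κ ∧ 0 < c1 ∧ 0 < c2 ∧ c1 * c2 = κ * μ ∧
      c1 * μ ^ (-(1 / p)) = l * κ ^ (1 / s) ∧ c2 * μ ^ (-(1 / q)) = l⁻¹ * κ ^ (1 - 1 / s) ∧
      c1 / (κ * μ) ≤ l / X ∧ c2 / (κ * μ) ≤ l⁻¹ / X ∧ (c1 * κ / μ) / (κ * μ) ≤ l / X ∧ X ≤ κ ∧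
      μ * κ ^ (1 - 1 / s) / κ = 1 / X := by
  have hX0 : 0 < X := by linarith
  obtain ⟨μ, hμ⟩ : ∃ μ, μ = X ^ (2 * q) := ⟨_, rfl⟩
  have hμ1 : 1 ≤ μ := hμ ▸ Real.one_le_rpow hX (by linarith)
  have hμ0 : 0 < μ := by linarith
  obtain ⟨κ, hκ⟩ : ∃ κ, κ = (μ * X) ^ s := ⟨_, rfl⟩
  have hμX : 1 ≤ μ * X := by nlinarith
  have hκ1 : 1 ≤ κ := hκ ▸ Real.one_le_rpow hμX (by linarith)
  have hκ0 : 0 < κ := by linarith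
  have hmq : μ ^ (1 / q) = X ^ 2 := by
    rw [hμ, ← Real.rpow_mul hX0.le, ← Real.rpow_natCast]
    congr 1; push_cast; field_simp
  have hks : κ ^ (1 / s) = μ * X := by
    rw [hκ, ← Real.rpow_mul (by linarith), mul_one_div_cancel (by linarith), Real.rpow_one]
  have hm : μ ^ (1 / p) * X ^ 2 = μ := by
    rw [← hmq, ← Real.rpow_add hμ0, hpq, Real.rpow_one]
  have hk : μ * X * κ ^ (1 - 1 / s) = κ := by
    rw [← hks, ← Real.rpow_add hκ0]; simp
  have hmp1 : 1 ≤ μ ^ (1 / p) := Real.one_le_rpow hμ1 (by positivity)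
  have hkb1 : 1 ≤ κ ^ (1 - 1 / s) := Real.one_le_rpow hκ1 (by
    rw [sub_nonneg, div_le_one (by linarith)]; exact hs)
  have hXκ : X ≤ κ := by
    rw [← hk]
    calc X = 1 * X * 1 := by ring
      _ ≤ _ := by gcongr
  have hX2 : X ≤ X ^ 2 := by nlinarith
  have hn1 := Real.rpow_neg hμ0.le (1 / p)
  have hn2 := Real.rpow_neg hμ0.le (1 / q)
  rw [hmq] at hn2
  obtain ⟨mp, hmp⟩ : ∃ mp, mp = μ ^ (1 / p) := ⟨_, rfl⟩
  obtain ⟨kb, hkb⟩ : ∃ kb, kb = κ ^ (1 - 1 / s) := ⟨_, rfl⟩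
  rw [← hmp] at hn1 hm hmp1
  rw [← hkb] at hk hkb1
  have hmp0 : 0 < mp := by linarith
  have hkb0 : 0 < kb := by linarith
  refine ⟨μ, κ, l * mp * (μ * X), l⁻¹ * X ^ 2 * kb, hμ1, hκ1, by positivity, by positivity, ?_, ?_, ?_, ?_, ?_, ?_, hXκ, ?_⟩
  · rw [← hk, ← hm]; field_simp
  · rw [hn1, hks]; field_simp
  · rw [hn2, ← hkb]; field_simp
  · rw [show l * mp * (μ * X) / (κ * μ) = l / (X ^ 2 * kb) by rw [← hk, ← hm]; field_simp]
    gcongr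
    nlinarith
  · rw [show l⁻¹ * X ^ 2 * kb / (κ * μ) = l⁻¹ / (μ * X * mp) by rw [← hk, ← hm]; field_simp]
    gcongr
    nlinarith
  · rw [show l * mp * (μ * X) * κ / μ / (κ * μ) = l / X by rw [← hk, ← hm]; field_simp]
  · rw [← hkb, ← hk]; field_simp

theorem coeff (R A : SF d) (hA : ∀ z, 0 < A.1 z) (hR : ∀ z, |R.1 z| ≤ A.1 z) (r : ℝ → ℝ) (hr : ∀ t, 0 < r t)
    (hrs : ContDiff ℝ (⊤ : ℕ∞) r) {p q s : ℝ} (hpq : 1 / p + 1 / q = 1) :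
    ∃ a b bh : SF d, a * b = -R ∧ (∀ z, a.1 z = r z.1 ^ (1 / s - 1 / p) * A.1 z ^ (1 / p)) ∧
      (∀ z, bh.1 z = r z.1 ^ (1 - 1 / s - 1 / q) * A.1 z ^ (1 / q)) ∧ (∀ z, |b.1 z| ≤ bh.1 z) ∧
      (∀ z, 0 < a.1 z) ∧ (∀ z, 0 < bh.1 z) := by
  obtain ⟨a, ha⟩ : ∃ a : SF d, ∀ z, a.1 z = r z.1 ^ (1 / s - 1 / p) * A.1 z ^ (1 / p) :=
    ⟨rpw (ofT r hrs) (fun z => hr _) (1 / s - 1 / p) * rpw A hA (1 / p), fun z => rfl⟩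
  obtain ⟨bh, hb⟩ : ∃ a : SF d, ∀ z, a.1 z = r z.1 ^ (1 - 1 / s - 1 / q) * A.1 z ^ (1 / q) :=
    ⟨rpw (ofT r hrs) (fun z => hr _) (1 - 1 / s - 1 / q) * rpw A hA (1 / q), fun z => rfl⟩
  have pa : ∀ z, 0 < a.1 z := fun z => by
    rw [ha]; exact mul_pos (Real.rpow_pos_of_pos (hr _) _) (Real.rpow_pos_of_pos (hA _) _)
  have pb : ∀ z, 0 < bh.1 z := fun z => by
    rw [hb]; exact mul_pos (Real.rpow_pos_of_pos (hr _) _) (Real.rpow_pos_of_pos (hA _) _)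
  have key : ∀ z, a.1 z * bh.1 z = A.1 z := fun z => by
    rw [ha, hb, mul_mul_mul_comm, ← Real.rpow_add (hr _), ← Real.rpow_add (hA _), hpq, Real.rpow_one,
      show 1 / s - 1 / p + (1 - 1 / s - 1 / q) = 0 by linarith, Real.rpow_zero, one_mul]
  refine ⟨a, -(R * rpw A hA (-1)) * bh, bh, ?_, ha, hb, ?_, pa, pb⟩
  · apply SF.ext'; intro z
    have h1 := key z
    have h2 := hA z
    rw [SF.mul_ap, SF.mul_ap, SF.neg_ap, SF.neg_ap, SF.mul_ap, rpw_ap, Real.rpow_neg_one]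
    calc a.1 z * (-(R.1 z * (A.1 z)⁻¹) * bh.1 z) = -(R.1 z * (A.1 z)⁻¹) * (a.1 z * bh.1 z) := by ring
      _ = _ := by rw [h1]; field_simp
  · intro z
    have h2 := hA z
    rw [SF.mul_ap, SF.neg_ap, SF.mul_ap, rpw_ap, Real.rpow_neg_one, abs_mul, abs_of_pos (pb z), abs_neg, abs_mul,
      abs_of_pos (inv_pos.2 h2)]
    apply mul_le_of_le_one_left (pb z).le
    rw [← div_eq_mul_inv, div_le_one h2]; exact hR z

end NU
end

noncomputable section
namespace NU
variable {d : ℕ}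

theorem ev_nat (C : ℝ) {e : ℝ} (he : 0 < e) : ∀ᶠ N : ℕ in Filter.atTop, C / N ≤ e :=
  ((tendsto_const_div_atTop_nhds_zero_nat C).eventually (ge_mem_nhds he))

theorem tnorm {q : ℝ≥0∞} {β : ℝ} (hq : Ex q β) {T : ℝ} (hT : 0 < T) {N : ℕ} (hN : 0 < N) {κ : ℝ} (hκ : 1 ≤ κ)
    (r : ℝ → ℝ) (hr : ∀ t, 0 < r t) (hrc : Continuous r) {ε : ℝ}
    (hosc : ∀ y ∈ Set.Icc 0 T, ∀ y' ∈ Set.Icc 0 T, |y - y'| ≤ T / N → r y ≤ 2 * r y')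
    (hint : ∫⁻ t in Set.Ioo 0 T, ENNReal.ofReal (r t) ≤ ENNReal.ofReal ε) (c : ℝ) :
    eLpGen (volume.restrict (Set.Ioo 0 T)) q
      (fun t => ENNReal.ofReal c * ENNReal.ofReal (κ * chi κ (N / T * t) * r t) ^ β)
      ≤ ENNReal.ofReal c * ENNReal.ofReal (2 * ε) ^ β := by
  have hκ0 : 0 < κ := by linarith
  refine eLpGen_le hq _ _ _ _ ofReal_ne_top (Filter.Eventually.of_forall fun t => le_rfl) ?_
  have hF1 : ∫⁻ y in Set.Ico (0:ℝ) 1, ENNReal.ofReal (κ * chi κ y) = 1 := by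
    simp only [ENNReal.ofReal_mul hκ0.le]
    rw [lintegral_const_mul _ (ofReal_chi_meas κ), chi_lint hκ, ← ENNReal.ofReal_mul hκ0.le,
      mul_inv_cancel₀ hκ0.ne', ENNReal.ofReal_one]
  have key := time_bound hT hN (fun t => ENNReal.ofReal (r t)) (fun y => ENNReal.ofReal (κ * chi κ y))
    hrc.measurable.ennreal_ofReal ((chi_meas κ).const_mul κ).ennreal_ofReal (fun y n => by simp only [chi_int]) 2 (by
      intro x hx x' hx' h
      refine (ENNReal.ofReal_le_ofReal (hosc x hx x' hx' h)).trans ?_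
      rw [ENNReal.ofReal_mul (by norm_num)]; simp)
  rw [hF1, mul_one] at key
  calc _ = ∫⁻ t in Set.Ioo 0 T, ENNReal.ofReal (r t) * ENNReal.ofReal (κ * chi κ (N / T * t)) := by
        apply lintegral_congr; intro t
        rw [← ENNReal.ofReal_mul (hr t).le, mul_comm]
    _ ≤ _ := key
    _ ≤ 2 * ENNReal.ofReal ε := by gcongr
    _ = _ := by rw [ENNReal.ofReal_mul (by norm_num)]; simp

theorem c3_bound {M H c1 c2 κ μ ν l X : ℝ} (hM : 0 < M) (hH : 0 < H) (hν : 0 < ν) 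
    (h1 : c1 / (κ * μ) ≤ l / X) (h2 : c2 / (κ * μ) ≤ l⁻¹ / X) (h3 : (c1 * κ / μ) / (κ * μ) ≤ l / X) :
    (6 * M ^ 2 * H ^ 2 * (c1 + c2) + M ^ 2 * H * c1 * κ * (ν + 1) / μ) / (κ * μ) ≤
      (6 * M ^ 2 * H ^ 2 * (l + l⁻¹) + M ^ 2 * H * (ν + 1) * l) / X := by
  calc _ = 6 * M ^ 2 * H ^ 2 * (c1 / (κ * μ) + c2 / (κ * μ)) + M ^ 2 * H * (ν + 1) * ((c1 * κ / μ) / (κ * μ)) := by ring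
    _ ≤ 6 * M ^ 2 * H ^ 2 * (l / X + l⁻¹ / X) + M ^ 2 * H * (ν + 1) * (l / X) := by gcongr
    _ = _ := by ring

theorem spLp_le_const {E : Type*} [NormedAddCommGroup E] (f : Vec d → E) {q δ : ℝ} (hq : 0 < q)
    (hf : ∀ x, ‖f x‖ ≤ δ) : spLp (ENNReal.ofReal q) f ≤ ENNReal.ofReal δ := by
  have := eLpGen_le (ν := volume.restrict (fundCube d)) (Ex_real hq) (fun x => (‖f x‖₊ : ℝ≥0∞)) (fun _ => 1)
    (ENNReal.ofReal δ) 1 ofReal_ne_top ?_ (by simp [cube_vol])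
  · unfold spLp; simpa using this
  · refine Filter.Eventually.of_forall fun x => ?_
    rw [ENNReal.one_rpow, mul_one, ← enorm_eq_nnnorm, ← ofReal_norm]
    exact ENNReal.ofReal_le_ofReal (hf x)

theorem spLp_add_le {E : Type*} [NormedAddCommGroup E] (f g : Vec d → E) {q : ℝ} (hq : 1 ≤ q)
    (hf : Continuous f) (hg : Continuous g) :
    spLp (ENNReal.ofReal q) (fun x => f x + g x) ≤ spLp (ENNReal.ofReal q) f + spLp (ENNReal.ofReal q) g := by
  unfold spLp eLpGen
  rw [if_neg ofReal_ne_top, if_neg ofReal_ne_top, if_neg ofReal_ne_top, ENNReal.toReal_ofReal (by linarith)]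
  refine le_trans ?_ (ENNReal.lintegral_Lp_add_le (f := fun x => (‖f x‖₊ : ℝ≥0∞)) (g := fun x => (‖g x‖₊ : ℝ≥0∞))
    (ENNReal.continuous_coe.comp hf.nnnorm).measurable.aemeasurable
    (ENNReal.continuous_coe.comp hg.nnnorm).measurable.aemeasurable hq)
  gcongr with x
  rw [Pi.add_apply]
  beta_reduce
  exact_mod_cast nnnorm_add_le _ _

end NU
end

noncomputable section
namespace NU
variable {d : ℕ}

set_option maxHeartbeats 1000000 in
theorem step (P : Prof) {i j : Fin d} (hij : i ≠ j) {T : ℝ} (hT : 0 < T) {p q s : ℝ} {s' : ℝ≥0∞}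
    (hp : 1 < p) (hq : 1 < q) (hpq : 1 / p + 1 / q = 1) (hs : 1 ≤ s) (hs' : Ex s' (1 - 1 / s))
    (ρ ui uj Ri Rj : SF d)
    (hpde : D e0 ρ + D (ex i) (ρ * ui) + D (ex j) (ρ * uj) = D (ex i) Ri + D (ex j) Rj)
    {l ε δ : ℝ} (hl : 0 < l) (hδ : 0 < δ) (hR : N1 T Ri < ENNReal.ofReal ε) :
    ∃ (θ B Ri' Rj' : SF d) (mθ mw mW : ℝ → ℝ≥0∞) (J : Set ℝ),
      (D e0 (ρ + θ) + D (ex i) ((ρ + θ) * (ui + D (ex j) B)) + D (ex j) ((ρ + θ) * (uj + -D (ex i) B))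
        = D (ex i) Ri' + D (ex j) Rj') ∧ (∀ x, θ.1 (0, x) = 0) ∧
      Measurable mθ ∧ Measurable mw ∧ Measurable mW ∧ MeasurableSet J ∧
      (∀ t ∈ Set.Ioo 0 T, spLp (ENNReal.ofReal p) (fun x => θ.1 (t, x)) ≤ mθ t + ENNReal.ofReal δ) ∧
      (∀ t ∈ Set.Ioo 0 T, spLp (ENNReal.ofReal q) (wv i j B t) ≤ mw t) ∧
      (∀ t ∈ Set.Ioo 0 T, W1qNorm (ENNReal.ofReal q) (wv i j B t) ≤ mW t) ∧
      eLpGen (volume.restrict (Set.Ioo 0 T)) (ENNReal.ofReal s) mθ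
        ≤ ENNReal.ofReal (4 * P.M ^ 2 * l) * ENNReal.ofReal (2 * ε) ^ (1 / s) ∧
      eLpGen (volume.restrict (Set.Ioo 0 T)) s' mw
        ≤ ENNReal.ofReal (6 * P.M ^ 2 * l⁻¹) * ENNReal.ofReal (2 * ε) ^ (1 - 1 / s) ∧
      ∫⁻ t in Set.Ioo 0 T, mW t ≤ ENNReal.ofReal δ ∧
      volume.restrict (Set.Ioo 0 T) J ≤ ENNReal.ofReal δ ∧
      (∀ t ∈ Set.Ioo 0 T, t ∉ J → ∀ x, (D (ex j) B).1 (t, x) = 0 ∧ (D (ex i) B).1 (t, x) = 0 ∧ |θ.1 (t, x)| ≤ δ) ∧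
      N1 T Ri' ≤ ENNReal.ofReal δ ∧ N1 T (Rj' - Rj) ≤ ENNReal.ofReal δ := by
  classical
  obtain ⟨A, r, hA, hr, hrs, hRA, hAr, hrε⟩ := exists_coeff Ri hT hR
  obtain ⟨a, b, bh, hab, ha, hbh, hbb, pa, pb⟩ := coeff Ri A hA hRA r hr hrs (p := p) (q := q) (s := s) hpq
  have hs0 : 0 < s := by linarith
  have hM := P.hM
  have hM0 : 0 < P.M := by linarith
  obtain ⟨H, hH, hb0⟩ := SF.bdds ({a, b, D (ex j) a, D e0 a, D (ex i) Ri, D (ex j) Ri, D e0 Ri, ui, uj, ρ} ∪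
    Finset.univ.image (fun k => D (ex k) b) ∪ Finset.univ.image (fun k : Fin d × Fin d => D (ex k.1) (D (ex k.2) b))) T
  have hH0 : 0 < H := by linarith
  obtain ⟨la, hla0, hla⟩ := a.lower pa T
  obtain ⟨lb, hlb0, hlb⟩ := bh.lower pb T
  obtain ⟨η1, hη1, osc1⟩ := osc2 (isCompact_Icc : IsCompact (Set.Icc 0 T)) r hrs.continuous hr
  obtain ⟨η2, hη2, osc2⟩ := osc2 ((isCompact_Icc : IsCompact (Set.Icc 0 T)).prod (cube_compact (d := d))) A.1 A.cont hA
  obtain ⟨N, ⟨⟨⟨hN0, hN1⟩, hN2⟩, hN3⟩, hN4⟩ := (((((Filter.eventually_gt_atTop 0).and (ev_nat T hη1)).and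
    (ev_nat T one_pos)).and (ev_nat (H * T) hδ)).and (ev_nat (2 * H ^ 2 * T * T) (by positivity : 0 < δ / 3))).exists
  obtain ⟨σ, ⟨⟨⟨hσ0, hσ1⟩, hσ2⟩, hσ3⟩, hσ4⟩ := (((((Filter.eventually_gt_atTop 0).and (ev_nat 1 hη2)).and
    (ev_nat H hla0)).and (ev_nat H hlb0)).and (ev_nat (T * (4 * P.M ^ 4 * H ^ 2)) (by positivity : 0 < δ / 3))).exists
  obtain ⟨ν, hν⟩ : ∃ ν : ℝ, ν = N / T := ⟨_, rfl⟩
  have hN0' : (0:ℝ) < N := by exact_mod_cast hN0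
  have hσ0' : (0:ℝ) < σ := by exact_mod_cast hσ0
  have hν1 : 1 ≤ ν := by
    rw [hν, le_div_iff₀ hT, one_mul]; rwa [div_le_one hN0'] at hN2
  have hν0 : 0 < ν := by linarith
  obtain ⟨X, ⟨⟨hX0, hX1⟩, hX2⟩, hX3⟩ := ((((Filter.eventually_ge_atTop 1).and (ev_nat T hδ)).and
    (ev_nat (T * (6 * P.M ^ 2 * H ^ 2 * (l + l⁻¹) + P.M ^ 2 * H * (ν + 1) * l)) (by positivity : 0 < δ / 3))).and
    (ev_nat (2 * l⁻¹ * (3 * P.M ^ 2 * H + 2 * d * (4 * P.M ^ 2 * H * σ)) * T) hδ)).exists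
  have hX0' : (1:ℝ) ≤ X := by exact_mod_cast hX0
  obtain ⟨μ, κ, c1, c2, hμ, hκ, hc1, hc2, hcc, e1, e2, b1, b2, b3, hXκ, e3⟩ := params hp hq hpq hs hl hX0'
  have hμ0 : 0 < μ := by linarith
  have hκ0 : 0 < κ := by linarith
  obtain ⟨θ, θo, B, Ri', Rj', alg, z1, z2, bd⟩ := step_core P hij (T := T) ρ ui uj Ri Rj a b a bh hpde hab
    (fun z => (abs_of_pos (pa z)).le) hbb hH hσ0 hν1 hμ hκ hc1 hc2 hcc (by
      intro t ht x
      refine ⟨?_, ?_, ?_, ?_, ?_, ?_, ?_, ?_, ?_, ?_, fun k => ?_, fun k l => ?_⟩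
      all_goals refine hb0 _ ?_ t ht x
      · simp
      · simp
      · simp
      · simp
      · simp
      · simp
      · simp
      · simp
      · simp
      · simp
      · exact Finset.mem_union_left _ (Finset.mem_union_right _ (Finset.mem_image_of_mem _ (Finset.mem_univ k)))
      · exact Finset.mem_union_right _ (Finset.mem_image.2 ⟨(k, l), Finset.mem_univ _, rfl⟩))
    (fun t ht x => hσ2.trans (hla t ht x)) (fun t ht x => hσ3.trans (hlb t ht x))
  clear hb0 hpde hab
  have oscA : ∀ t ∈ Set.Ioo 0 T, ∀ x ∈ fundCube d, ∀ x' ∈ fundCube d, dist x x' ≤ 1 / σ → A.1 (t, x) ≤ 2 * A.1 (t, x') := by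
    intro t ht x hx x' hx' h
    refine osc2 (t, x) ⟨Set.Ioo_subset_Icc_self ht, hx⟩ (t, x') ⟨Set.Ioo_subset_Icc_self ht, hx'⟩ ?_
    rw [Prod.dist_eq]; simp only [dist_self]
    exact max_le hη2.le (h.trans hσ1)
  have oscr : ∀ y ∈ Set.Icc 0 T, ∀ y' ∈ Set.Icc 0 T, |y - y'| ≤ T / N → r y ≤ 2 * r y' :=
    fun y hy y' hy' h => osc1 y hy y' hy' (h.trans hN1)
  have hmeas : Measurable fun t => chi κ (ν * t) := (chi_meas κ).comp (measurable_const_mul ν)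
  have bW : ∀ t ∈ Set.Ioo 0 T, W1qNorm (ENNReal.ofReal q) (wv i j B t) ≤
      ENNReal.ofReal (2 * l⁻¹ * (3 * P.M ^ 2 * H + 2 * d * (4 * P.M ^ 2 * H * σ)) * (μ * κ ^ (1 - 1 / s)) * chi κ (ν * t)) := by
    intro t ht
    have hck := chi_nonneg κ (ν * t)
    have w1 := spat (σ := σ) (γ := 0) (r := 1) (q := q) j (wv i j B t) (fun _ => 1) continuous_const (fun _ => one_pos) one_pos hμ
      (C := 3 * P.M ^ 2 * c2 * chi κ (ν * t) * H) (by positivity) hq.le hσ0 (by intros; norm_num) (by simp [cube_vol]) (by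
        intro x
        refine (wv_norm i j B t x).trans (((bd t (Set.Ioo_subset_Icc_self ht) x).2.2.2.1).trans (le_of_eq ?_))
        simp only [Real.one_rpow]; ring)
    have w2 := spat (σ := σ) (γ := 0) (r := 1) (q := q) j (fderiv ℝ (wv i j B t)) (fun _ => 1) continuous_const (fun _ => one_pos) one_pos hμ
      (C := 2 * d * (4 * P.M ^ 2 * c2 * H * σ * μ * chi κ (ν * t))) (by positivity) hq.le hσ0 (by intros; norm_num) (by simp [cube_vol]) (by
        intro x
        refine (wv_fderiv_norm i j B t x _ (mul_nonneg (by positivity) (mul_nonneg hck (chi_nonneg _ _))) ((bd t (Set.Ioo_subset_Icc_self ht) x).2.2.2.2.1)).trans (le_of_eq ?_)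
        simp only [Real.one_rpow]; ring)
    refine (add_le_add w1 w2).trans ?_
    rw [← ENNReal.ofReal_add (by positivity) (by positivity)]
    apply ENNReal.ofReal_le_ofReal
    simp only [Real.one_rpow, mul_one]
    calc _ = 2 * (c2 * μ ^ (-(1 / q))) * (3 * P.M ^ 2 * H * 1 + 2 * d * (4 * P.M ^ 2 * H * σ * μ)) * chi κ (ν * t) := by ring
      _ ≤ 2 * (c2 * μ ^ (-(1 / q))) * (3 * P.M ^ 2 * H * μ + 2 * d * (4 * P.M ^ 2 * H * σ * μ)) * chi κ (ν * t) := by gcongr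
      _ = _ := by rw [e2]; ring
  refine ⟨θ + θo, B, Ri', Rj', fun t => ENNReal.ofReal (4 * P.M ^ 2 * l) * ENNReal.ofReal (κ * chi κ (N / T * t) * r t) ^ (1 / s),
    fun t => ENNReal.ofReal (6 * P.M ^ 2 * l⁻¹) * ENNReal.ofReal (κ * chi κ (N / T * t) * r t) ^ (1 - 1 / s),
    fun t => ENNReal.ofReal (2 * l⁻¹ * (3 * P.M ^ 2 * H + 2 * d * (4 * P.M ^ 2 * H * σ)) * (μ * κ ^ (1 - 1 / s)) * chi κ (ν * t)),
    {t | chi κ (ν * t) ≠ 0}, ?_, ?_, ?_, ?_, ?_, ?_, ?_, ?_, bW, ?_, ?_, ?_, ?_, ?_, ?_, ?_⟩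
  · rw [← add_assoc]; exact alg
  · intro x; rw [SF.add_ap, z1, z2, add_zero]
  · rw [← hν]; exact (((hmeas.const_mul κ).mul hrs.continuous.measurable).ennreal_ofReal.pow_const _).const_mul _
  · rw [← hν]; exact (((hmeas.const_mul κ).mul hrs.continuous.measurable).ennreal_ofReal.pow_const _).const_mul _
  · exact (hmeas.const_mul _).ennreal_ofReal
  · exact hmeas (measurableSet_singleton 0).compl
  · intro t ht
    have hck := chi_nonneg κ (ν * t)
    refine (spLp_add_le (fun x => θ.1 (t, x)) (fun x => θo.1 (t, x)) hp.le (θ.cont.comp (by fun_prop)) (θo.cont.comp (by fun_prop))).trans ?_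
    refine add_le_add ?_ (spLp_le_const _ (by linarith) fun x => ?_)
    · refine (spat (σ := σ) j (fun x => θ.1 (t, x)) (fun x => A.1 (t, x)) (A.cont.comp (by fun_prop)) (fun _ => hA _) (hr t) hμ
        (C := 2 * P.M ^ 2 * c1 * chi κ (ν * t)) (γ := 1 / s - 1 / p) (by positivity) hp.le hσ0 (oscA t ht)
        (hAr t (Set.Ioo_subset_Icc_self ht)) (by
          intro x
          refine ((bd t (Set.Ioo_subset_Icc_self ht) x).1).trans (le_of_eq ?_)
          rw [ha]; ring)).trans ?_
      beta_reduce
      rw [ENNReal.ofReal_rpow_of_nonneg (mul_nonneg (mul_nonneg hκ0.le (chi_nonneg _ _)) (hr t).le) (by positivity), ← ENNReal.ofReal_mul (by positivity)]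
      apply ENNReal.ofReal_le_ofReal
      rw [Real.mul_rpow (mul_nonneg hκ0.le (chi_nonneg _ _)) (hr t).le, Real.mul_rpow hκ0.le (chi_nonneg _ _), chi_rpow _ _ (by positivity), ← hν,
        sub_add_cancel]
      apply le_of_eq
      linear_combination (4 * P.M ^ 2 * chi κ (ν * t) * r t ^ (1 / s)) * e1
    · refine ((bd t (Set.Ioo_subset_Icc_self ht) x).2.1).trans ?_
      rw [hν]; refine le_trans (le_of_eq ?_) hN3
      field_simp
  · intro t ht
    have hck := chi_nonneg κ (ν * t)
    refine (spat (σ := σ) j (wv i j B t) (fun x => A.1 (t, x)) (A.cont.comp (by fun_prop)) (fun _ => hA _) (hr t) hμ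
        (C := 3 * P.M ^ 2 * c2 * chi κ (ν * t)) (γ := 1 - 1 / s - 1 / q) (by positivity) hq.le hσ0 (oscA t ht)
        (hAr t (Set.Ioo_subset_Icc_self ht)) (by
          intro x
          refine (wv_norm i j B t x).trans (((bd t (Set.Ioo_subset_Icc_self ht) x).2.2.1).trans (le_of_eq ?_))
          rw [hbh]; ring)).trans ?_
    have hβ : 0 ≤ 1 - 1 / s := by rw [sub_nonneg, div_le_one hs0]; exact hs
    beta_reduce
    rw [ENNReal.ofReal_rpow_of_nonneg (mul_nonneg (mul_nonneg hκ0.le (chi_nonneg _ _)) (hr t).le) hβ, ← ENNReal.ofReal_mul (by positivity)]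
    apply ENNReal.ofReal_le_ofReal
    rw [Real.mul_rpow (mul_nonneg hκ0.le (chi_nonneg _ _)) (hr t).le, Real.mul_rpow hκ0.le (chi_nonneg _ _), ← hν,
        sub_add_cancel]
    have hcc : chi κ (ν * t) ≤ chi κ (ν * t) ^ (1 - 1 / s) := by
      rcases chi_01 κ (ν * t) with h | h <;> rw [h]
      · exact Real.rpow_nonneg le_rfl _
      · rw [Real.one_rpow]
    have hr' : 0 < r t ^ (1 - 1 / s) := Real.rpow_pos_of_pos (hr t) _
    calc _ = (c2 * μ ^ (-(1 / q))) * (6 * P.M ^ 2 * chi κ (ν * t) * r t ^ (1 - 1 / s)) := by ring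
      _ ≤ (c2 * μ ^ (-(1 / q))) * (6 * P.M ^ 2 * chi κ (ν * t) ^ (1 - 1 / s) * r t ^ (1 - 1 / s)) := by gcongr
      _ = _ := by rw [e2]; ring
  · exact tnorm (Ex_real hs0) hT hN0 hκ r hr hrs.continuous oscr hrε _
  · exact tnorm hs' hT hN0 hκ r hr hrs.continuous oscr hrε _
  · have hC : 0 ≤ 2 * l⁻¹ * (3 * P.M ^ 2 * H + 2 * d * (4 * P.M ^ 2 * H * σ)) * (μ * κ ^ (1 - 1 / s)) := by positivity
    simp only [ENNReal.ofReal_mul hC]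
    rw [lintegral_const_mul _ hmeas.ennreal_ofReal, hν]
    refine (mul_le_mul_right (chi_time hT hN0 hκ) _).trans ?_
    rw [← ENNReal.ofReal_mul hC]
    apply ENNReal.ofReal_le_ofReal
    refine le_trans (le_of_eq ?_) hX3
    linear_combination (2 * l⁻¹ * (3 * P.M ^ 2 * H + 2 * d * (4 * P.M ^ 2 * H * σ)) * T) * e3
  · have hJ : MeasurableSet {t | chi κ (ν * t) ≠ 0} := hmeas (measurableSet_singleton 0).compl
    have : volume.restrict (Set.Ioo 0 T) {t | chi κ (ν * t) ≠ 0} ≤ ∫⁻ t in Set.Ioo 0 T, ENNReal.ofReal (chi κ (N / T * t)) := by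
      rw [← lintegral_indicator_one hJ]
      apply lintegral_mono; intro t
      rw [← hν]
      by_cases h : chi κ (ν * t) = 0
      · simp [h]
      · rcases chi_01 κ (ν * t) with h' | h'
        · exact absurd h' h
        · simp [h']
    refine this.trans ((chi_time hT hN0 hκ).trans (ENNReal.ofReal_le_ofReal (le_trans ?_ hX1)))
    rw [← div_eq_mul_inv]; gcongr
  · intro t ht htJ x
    have hz : chi κ (ν * t) = 0 := by simpa using htJ
    have := bd t (Set.Ioo_subset_Icc_self ht) x
    rw [hz] at this
    obtain ⟨h1, h2, -, h4, -⟩ := this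
    simp only [zero_mul, mul_zero] at h1 h4
    have p1 := abs_nonneg ((D (ex j) B).1 (t, x))
    have p2 := abs_nonneg ((D (ex i) B).1 (t, x))
    refine ⟨abs_eq_zero.1 (by linarith), abs_eq_zero.1 (by linarith), ?_⟩
    rw [SF.add_ap]
    refine (abs_add_le _ _).trans ?_
    have : H / ν ≤ δ := by
      rw [hν]; refine le_trans (le_of_eq ?_) hN3
      field_simp
    linarith
  all_goals
    have t1 : T * (2 * H ^ 2 / ν) ≤ δ / 3 := by
      rw [hν]; refine le_trans (le_of_eq ?_) hN4
      field_simp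
    have t2 : T * ((4 * P.M ^ 4 * H ^ 2 * κ / σ) / κ) ≤ δ / 3 := by
      refine le_trans (le_of_eq ?_) hσ4
      field_simp
    have t3 : T * ((6 * P.M ^ 2 * H ^ 2 * (c1 + c2) + P.M ^ 2 * H * c1 * κ * (ν + 1) / μ) / (κ * μ)) ≤ δ / 3 := by
      refine (mul_le_mul_of_nonneg_left (c3_bound hM0 hH0 hν0 b1 b2 b3) hT.le).trans (le_trans (le_of_eq ?_) hX2)
      ring
    refine (N1_le (i := j) hT hN0 hσ0 hκ hμ _ (c1 := 2 * H ^ 2 / ν) (c2 := 4 * P.M ^ 4 * H ^ 2 * κ / σ)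
      (c3 := 6 * P.M ^ 2 * H ^ 2 * (c1 + c2) + P.M ^ 2 * H * c1 * κ * (ν + 1) / μ) (by positivity) (by positivity) (by positivity) ?_).trans
      (ENNReal.ofReal_le_ofReal ?_)
    rotate_left
    · rw [mul_add, mul_add]; linarith
    rw [← hν]
    intro t ht x
    obtain ⟨-, -, -, -, -, h6, h7⟩ := bd t ht x
  · refine h6.trans ?_
    have : 0 ≤ P.M ^ 2 * H * c1 * κ * (ν + 1) / μ * (chi κ (ν * t) * chi μ (σ * x j)) :=
      mul_nonneg (by positivity) (mul_nonneg (chi_nonneg _ _) (chi_nonneg _ _))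
    rw [add_mul (6 * P.M ^ 2 * H ^ 2 * (c1 + c2))]
    linarith
  · exact h7

end NU
end

noncomputable section
namespace NU
variable {d : ℕ}

theorem cube_integ {E : Type*} [NormedAddCommGroup E] {f : Vec d → E} (hf : Continuous f) :
    IntegrableOn f (fundCube d) := hf.continuousOn.integrableOn_compact cube_compact

theorem SF.scont (f : SF d) (t : ℝ) : Continuous fun x => f.1 (t, x) := f.cont.comp (by fun_prop)

theorem int_D_x (f : SF d) (k : Fin d) (t : ℝ) : ∫ x in fundCube d, (D (ex k) f).1 (t, x) = 0 := by
  obtain ⟨n, rfl⟩ : ∃ n, d = n + 1 := ⟨d - 1, by have := k.pos; omega⟩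
  have key := integral_divergence_of_hasFDerivAt_off_countable' (E := ℝ) (0 : Vec (n + 1)) 1 (by intro i; simp)
    (fun i => if i = k then fun x => f.1 (t, x) else 0)
    (fun i x => if i = k then fderiv ℝ (fun x => f.1 (t, x)) x else 0) ∅ (by simp) (by
      intro i
      by_cases h : i = k
      · simp only [h, if_true]; exact (f.scont t).continuousOn
      · simp only [h, if_false]; exact continuousOn_const) (by
      intro x _ i
      by_cases h : i = k
      · simp only [h, if_true]; exact (slice_diff f t x).hasFDerivAt
      · simp only [h, if_false]; exact hasFDerivAt_const (0:ℝ) x) (by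
      refine cube_integ (d := n + 1) (f := fun x => _) ?_
      refine continuous_finsetSum _ fun i _ => ?_
      by_cases h : i = k
      · simp only [h, if_true, slice_fderiv]; exact (D (ex k) f).scont t
      · simp only [h, if_false]; exact continuous_const)
  have e1 : ∀ x : Vec (n + 1), ∑ i, (if i = k then fderiv ℝ (fun x => f.1 (t, x)) x else 0) (Pi.single i 1) = (D (ex k) f).1 (t, x) := by
    intro x
    rw [Finset.sum_eq_single k]
    · rw [if_pos rfl, slice_fderiv]; rfl
    · intro b _ hb; rw [if_neg hb]; rfl
    · simp
  simp only [e1] at key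
  unfold fundCube
  rw [key]
  apply Finset.sum_eq_zero
  intro i _
  by_cases h : i = k
  · subst h
    simp only [if_true]
    rw [sub_eq_zero]
    apply integral_congr_ae
    refine Filter.Eventually.of_forall fun x => ?_
    have := f.per t (i.insertNth (α := fun _ => ℝ) 0 x) (Pi.single i 1)
    beta_reduce
    simp only [Pi.zero_apply, Pi.one_apply]
    rw [← this]
    refine congrArg (fun y => f.1 (t, y)) ?_
    funext l
    rcases eq_or_ne l i with rfl | hl
    · simp
    · obtain ⟨m, rfl⟩ := Fin.exists_succAbove_eq hl
      simp [Fin.succAbove_ne]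
  · simp [h]

/-- space-time integral -/
def II (T : ℝ) (f : SF d) : ℝ := ∫ t in Set.Ioo 0 T, ∫ x in fundCube d, f.1 (t, x)

theorem SF.pinteg (f : SF d) (T : ℝ) :
    Integrable f.1 ((volume.restrict (Set.Ioo 0 T)).prod (volume.restrict (fundCube d))) := by
  rw [Measure.prod_restrict]
  have : IntegrableOn f.1 (Set.Icc 0 T ×ˢ fundCube d) (volume.prod volume) :=
    f.cont.continuousOn.integrableOn_compact (isCompact_Icc.prod cube_compact)
  exact this.mono_set (Set.prod_mono Set.Ioo_subset_Icc_self le_rfl)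

theorem SF.tinteg (f : SF d) (T : ℝ) : Integrable (fun t => ∫ x in fundCube d, f.1 (t, x)) (volume.restrict (Set.Ioo 0 T)) :=
  (f.pinteg T).integral_prod_left

theorem II_add (T : ℝ) (f g : SF d) : II T (f + g) = II T f + II T g := by
  unfold II
  rw [← integral_add (f.tinteg T) (g.tinteg T)]
  congr 1; funext t
  rw [← integral_add (cube_integ (f.scont t)) (cube_integ (g.scont t))]
  rfl

theorem II_Dx (T : ℝ) (f : SF d) (k) : II T (D (ex k) f) = 0 := by
  unfold II; simp only [int_D_x, integral_zero]

theorem II_Dt {T : ℝ} (hT : 0 < T) (f : SF d) (h0 : ∀ x, f.1 (0, x) = 0) (h1 : ∀ x, f.1 (T, x) = 0) : II T (D e0 f) = 0 := by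
  unfold II
  rw [integral_integral_swap (f := fun t x => (D e0 f).1 (t, x)) ((D e0 f).pinteg T)]
  have : ∀ x, ∫ t in Set.Ioo 0 T, (D e0 f).1 (t, x) = 0 := by
    intro x
    rw [← integral_Ioc_eq_integral_Ioo, ← intervalIntegral.integral_of_le hT.le]
    have hd : ∀ t, HasDerivAt (fun t => f.1 (t, x)) ((D e0 f).1 (t, x)) t := by
      intro t
      have h1 := (f.diff (t, x)).hasFDerivAt
      have h2 : HasDerivAt (fun t : ℝ => (t, x)) (e0 : ℝ × Vec d) t := (hasDerivAt_id t).prodMk (hasDerivAt_const t x)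
      exact h1.comp_hasDerivAt t h2
    rw [intervalIntegral.integral_eq_sub_of_hasDerivAt (fun t _ => hd t)
      (((D e0 f).cont.comp (by fun_prop : Continuous fun t : ℝ => (t, x))).intervalIntegrable _ _), h0, h1, sub_zero]
  simp only [this, integral_zero]

theorem weak_smooth {T : ℝ} (hT : 0 < T) (i j : Fin d) (ρ ui uj Ri Rj Φ : SF d)
    (hpde : D e0 ρ + D (ex i) (ρ * ui) + D (ex j) (ρ * uj) = D (ex i) Ri + D (ex j) Rj)
    (h0 : ∀ x, ρ.1 (0, x) = 0) (h1 : ∀ x, Φ.1 (T, x) = 0) :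
    II T (ρ * (D e0 Φ + D (ex i) Φ * ui + D (ex j) Φ * uj)) = II T (Ri * D (ex i) Φ) + II T (Rj * D (ex j) Φ) := by
  have e : ρ * (D e0 Φ + D (ex i) Φ * ui + D (ex j) Φ * uj) = D e0 (ρ * Φ) + D (ex i) ((ρ * ui - Ri) * Φ)
      + D (ex j) ((ρ * uj - Rj) * Φ) + Ri * D (ex i) Φ + Rj * D (ex j) Φ := by
    have e1 : D e0 (ρ * Φ) = ρ * D e0 Φ + Φ * D e0 ρ := Derivation.leibniz _ _ _
    have e2 : D (ex i) ((ρ * ui - Ri) * Φ) = (ρ * ui - Ri) * D (ex i) Φ + Φ * (D (ex i) (ρ * ui) - D (ex i) Ri) := by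
      rw [Derivation.leibniz, map_sub]; rfl
    have e3 : D (ex j) ((ρ * uj - Rj) * Φ) = (ρ * uj - Rj) * D (ex j) Φ + Φ * (D (ex j) (ρ * uj) - D (ex j) Rj) := by
      rw [Derivation.leibniz, map_sub]; rfl
    rw [e1, e2, e3]
    linear_combination (-Φ) * hpde
  rw [e, II_add, II_add, II_add, II_add, II_Dx, II_Dx, II_Dt hT]
  · ring
  · intro x; rw [SF.mul_ap, h0, zero_mul]
  · intro x; rw [SF.mul_ap, h1, mul_zero]

theorem II_bound {T : ℝ} (R G : SF d) {C : ℝ} (hC : ∀ t ∈ Set.Icc 0 T, ∀ x, |G.1 (t, x)| ≤ C) :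
    ‖II T (R * G)‖ₑ ≤ ENNReal.ofReal C * N1 T R := by
  unfold II N1
  rw [← lintegral_const_mul' _ _ ofReal_ne_top]
  refine (enorm_integral_le_lintegral_enorm _).trans ?_
  refine setLIntegral_mono' measurableSet_Ioo fun t ht => ?_
  rw [← lintegral_const_mul' _ _ ofReal_ne_top]
  refine (enorm_integral_le_lintegral_enorm _).trans (lintegral_mono fun x => ?_)
  have hC' := hC t (Set.Ioo_subset_Icc_self ht) x
  rw [SF.mul_ap, ← ofReal_norm, ← ENNReal.ofReal_mul ((abs_nonneg _).trans hC')]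
  apply ENNReal.ofReal_le_ofReal
  rw [norm_mul, Real.norm_eq_abs, Real.norm_eq_abs, mul_comm]
  gcongr

theorem wv_div (i j : Fin d) (B Φ : SF d) (t : ℝ) :
    ∫ x in fundCube d, fderiv ℝ (fun y => Φ.1 (t, y)) x (wv i j B t x) = 0 := by
  have e : ∀ x, fderiv ℝ (fun y => Φ.1 (t, y)) x (wv i j B t x) =
      (D (ex i) (Φ * D (ex j) B)).1 (t, x) - (D (ex j) (Φ * D (ex i) B)).1 (t, x) := by
    intro x
    rw [← SF.sub_ap, Derivation.leibniz, Derivation.leibniz, D_comm (ex j) (ex i) B]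
    unfold wv
    rw [map_sub, map_smul, map_smul, slice_fderiv, slice_fderiv]
    simp only [smul_eq_mul, SF.sub_ap, SF.add_ap, SF.mul_ap]
    have h1 : (D (ex i) Φ).1 (t, x) = fderiv ℝ Φ.1 (t, x) (0, Pi.single i 1) := rfl
    have h2 : (D (ex j) Φ).1 (t, x) = fderiv ℝ Φ.1 (t, x) (0, Pi.single j 1) := rfl
    rw [h1, h2]; ring
  simp only [e]
  rw [integral_sub (cube_integ ((D (ex i) (Φ * D (ex j) B)).scont t)) (cube_integ ((D (ex j) (Φ * D (ex i) B)).scont t)), int_D_x, int_D_x, sub_zero]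

end NU
end

noncomputable section
namespace NU
variable {d : ℕ}

theorem eLpGen_eq {α : Type*} [MeasurableSpace α] {ν : Measure α} {q : ℝ≥0∞} (hq : q ≠ 0) (g : α → ℝ≥0∞) :
    eLpGen ν q g = eLpNorm g q ν := by
  unfold eLpGen
  by_cases h : q = ∞
  · subst h
    simp only [if_true, eLpNorm_exponent_top, eLpNormEssSup, enorm_eq_self]
  · rw [if_neg h, eLpNorm_eq_lintegral_rpow_enorm_toReal hq h]
    simp only [enorm_eq_self]

theorem eLpGen_mono {α : Type*} [MeasurableSpace α] {ν : Measure α} {q : ℝ≥0∞} (f g : α → ℝ≥0∞)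
    (h : ∀ᵐ x ∂ν, f x ≤ g x) : eLpGen ν q f ≤ eLpGen ν q g := by
  unfold eLpGen
  split_ifs
  · exact essSup_mono_ae h
  · gcongr ?_ ^ _
    apply lintegral_mono_ae
    filter_upwards [h] with x hx
    gcongr

theorem eLpGen_add {α : Type*} [MeasurableSpace α] {ν : Measure α} {q : ℝ≥0∞} (hq : 1 ≤ q) {f g : α → ℝ≥0∞}
    (hf : AEMeasurable f ν) (hg : AEMeasurable g ν) :
    eLpGen ν q (fun x => f x + g x) ≤ eLpGen ν q f + eLpGen ν q g := by
  have hq0 : q ≠ 0 := (lt_of_lt_of_le one_pos hq).ne'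
  rw [eLpGen_eq hq0, eLpGen_eq hq0, eLpGen_eq hq0]
  exact eLpNorm_add_le hf.aestronglyMeasurable hg.aestronglyMeasurable hq

theorem eLpGen_zero {α : Type*} [MeasurableSpace α] {ν : Measure α} {q : ℝ≥0∞} (hq : q ≠ 0) :
    eLpGen ν q (fun _ => (0:ℝ≥0∞)) = 0 := by
  rw [eLpGen_eq hq]; exact eLpNorm_zero

theorem eLpGen_sum {α : Type*} [MeasurableSpace α] {ν : Measure α} {q : ℝ≥0∞} (hq : 1 ≤ q) (f : ℕ → α → ℝ≥0∞)
    (hf : ∀ n, Measurable (f n)) (n : ℕ) :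
    eLpGen ν q (fun x => ∑ k ∈ Finset.range n, f k x) ≤ ∑ k ∈ Finset.range n, eLpGen ν q (f k) := by
  have hq0 : q ≠ 0 := (lt_of_lt_of_le one_pos hq).ne'
  induction n with
  | zero => simp only [Finset.range_zero, Finset.sum_empty]; exact (eLpGen_zero hq0).le
  | succ n ih =>
    simp only [Finset.sum_range_succ]
    refine (eLpGen_add hq ?_ (hf n).aemeasurable).trans (by gcongr)
    exact (Finset.measurable_fun_sum _ fun i _ => hf i).aemeasurable

theorem eLpGen_tsum {α : Type*} [MeasurableSpace α] {ν : Measure α} {q : ℝ≥0∞} (hq : 1 ≤ q) (f : ℕ → α → ℝ≥0∞)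
    (hf : ∀ n, Measurable (f n)) :
    eLpGen ν q (fun x => ∑' k, f k x) ≤ ∑' k, eLpGen ν q (f k) := by
  have hS := fun n => (eLpGen_sum (ν := ν) hq f hf n).trans (ENNReal.sum_le_tsum _)
  generalize ∑' k, eLpGen ν q (f k) = B at hS
  by_cases h : q = ∞
  · subst h
    simp only [eLpGen, if_true] at hS ⊢
    refine essSup_le_of_ae_le _ ?_
    have h1 : ∀ᵐ x ∂ν, ∀ n, ∑ k ∈ Finset.range n, f k x ≤ B := by
      rw [ae_all_iff]; intro n
      filter_upwards [ENNReal.ae_le_essSup (μ := ν) (fun x => ∑ k ∈ Finset.range n, f k x)] with x hx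
      exact hx.trans (hS n)
    filter_upwards [h1] with x hx
    rw [ENNReal.tsum_eq_iSup_nat]
    exact iSup_le hx
  · have hr : 0 < q.toReal := ENNReal.toReal_pos (lt_of_lt_of_le one_pos hq).ne' h
    have h1 := lintegral_tendsto_of_tendsto_of_monotone (μ := ν)
      (f := fun n x => (∑ k ∈ Finset.range n, f k x) ^ q.toReal) (F := fun x => (∑' k, f k x) ^ q.toReal)
      (fun n => ((Finset.measurable_fun_sum _ fun i _ => hf i).pow_const _).aemeasurable)
      (Filter.Eventually.of_forall fun x => by
        intro m n hmn
        beta_reduce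
        gcongr)
      (Filter.Eventually.of_forall fun x =>
        (ENNReal.continuous_rpow_const.tendsto _).comp (ENNReal.tendsto_nat_tsum _))
    have h2 := (ENNReal.continuous_rpow_const (y := 1 / q.toReal)).continuousAt.tendsto.comp h1
    simp only [eLpGen, if_neg h] at hS ⊢
    exact le_of_tendsto' h2 hS

theorem eLpGen_lt_of_tsum {α : Type*} [MeasurableSpace α] {ν : Measure α} {q : ℝ≥0∞} (hq : 1 ≤ q) (f : ℕ → α → ℝ≥0∞)
    (hf : ∀ n, Measurable (f n)) (h : ∑' k, eLpGen ν q (f k) < ∞) :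
    eLpGen ν q (fun x => ∑' k, f k x) < ∞ := (eLpGen_tsum hq f hf).trans_lt h

theorem eLpGen_const_lt {α : Type*} [MeasurableSpace α] {ν : Measure α} [IsFiniteMeasure ν] {q : ℝ≥0∞} (c : ℝ≥0∞)
    (hc : c ≠ ∞) : eLpGen ν q (fun _ => c) < ∞ := by
  unfold eLpGen
  split_ifs with h
  · exact (essSup_le_of_ae_le c (Filter.Eventually.of_forall fun _ => le_rfl)).trans_lt hc.lt_top
  · rw [lintegral_const]
    refine (ENNReal.rpow_ne_top_of_nonneg (by positivity) ?_).lt_top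
    exact ENNReal.mul_ne_top (ENNReal.rpow_ne_top_of_nonneg ENNReal.toReal_nonneg hc) (measure_ne_top _ _)

theorem Ex_one_le {q : ℝ≥0∞} {β : ℝ} (h : Ex q β) (hβ : β ≤ 1) : 1 ≤ q := by
  rcases h with ⟨rfl, _⟩ | ⟨h1, h2, h3⟩
  · exact le_top
  · rw [← ENNReal.toReal_le_toReal one_ne_top h1, ENNReal.toReal_one]
    have : 0 ≤ q.toReal := ENNReal.toReal_nonneg
    nlinarith

theorem eLpGen_holder {α : Type*} [MeasurableSpace α] {ν : Measure α} {s : ℝ} {s' : ℝ≥0∞} (hs : 1 ≤ s)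
    (hs' : Ex s' (1 - 1 / s)) {f g : α → ℝ≥0∞} (hf : AEMeasurable f ν) (hg : AEMeasurable g ν) :
    ∫⁻ x, f x * g x ∂ν ≤ eLpGen ν (ENNReal.ofReal s) f * eLpGen ν s' g := by
  have hs0 : 0 < s := by linarith
  rcases hs' with ⟨rfl, h2⟩ | ⟨h1, h2, h3⟩
  · have : s = 1 := by field_simp at h2; linarith
    subst this
    simp only [eLpGen, if_true, ENNReal.ofReal_one, ENNReal.one_ne_top, if_false, ENNReal.toReal_one, ENNReal.rpow_one,
      div_one]
    calc ∫⁻ x, f x * g x ∂ν ≤ ∫⁻ x, f x * essSup g ν ∂ν := by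
          apply lintegral_mono_ae
          filter_upwards [ENNReal.ae_le_essSup (μ := ν) (g)] with x hx
          gcongr
      _ = _ := lintegral_mul_const'' _ hf
  · have hc : s.HolderConjugate s'.toReal := by
      rw [Real.holderConjugate_iff]
      have h4 : 1 / s < 1 := by linarith
      have h5 : 1 < s := by rwa [div_lt_one hs0] at h4
      refine ⟨h5, ?_⟩
      have h6 : s'.toReal ≠ 0 := by intro h; rw [h] at h3; simp at h3
      field_simp at h3 ⊢
      linarith
    have := ENNReal.lintegral_mul_le_Lp_mul_Lq ν hc hf hg
    simp only [eLpGen, ENNReal.ofReal_ne_top, if_neg h1, if_false, ENNReal.toReal_ofReal hs0.le]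
    exact this

theorem eLpGen_eq_zero {α : Type*} [MeasurableSpace α] {ν : Measure α} {q : ℝ≥0∞} (hq : q ≠ 0) {g : α → ℝ≥0∞}
    (hg : AEMeasurable g ν) (h : eLpGen ν q g = 0) : ∀ᵐ x ∂ν, g x = 0 := by
  rw [eLpGen_eq hq, eLpNorm_eq_zero_iff hg.aestronglyMeasurable hq] at h
  exact h

theorem spLp_add {E : Type*} [NormedAddCommGroup E] (f g : Vec d → E) {q : ℝ} (hq : 1 ≤ q)
    (hf : AEStronglyMeasurable f (volume.restrict (fundCube d))) (hg : AEStronglyMeasurable g (volume.restrict (fundCube d))) :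
    spLp (ENNReal.ofReal q) (fun x => f x + g x) ≤ spLp (ENNReal.ofReal q) f + spLp (ENNReal.ofReal q) g := by
  unfold spLp
  refine le_trans ?_ (eLpGen_add (by rwa [ENNReal.one_le_ofReal]) ?_ ?_)
  · apply eLpGen_mono
    refine Filter.Eventually.of_forall fun x => ?_
    exact_mod_cast nnnorm_add_le (f x) (g x)
  · exact hf.enorm
  · exact hg.enorm

end NU
end

noncomputable section
namespace NU
variable {d : ℕ}

/-- data of the iteration, as needed for passing to the limit -/
structure LimData (T p q s : ℝ) (s' : ℝ≥0∞) (ρ : ℕ → SF d) (W : ℕ → ℝ → Vec d → Vec d)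
    (mθ mw mW : ℕ → ℝ → ℝ≥0∞) (δ : ℕ → ℝ) (J : ℕ → Set ℝ) : Prop where
  hT : 0 < T
  hp : 1 < p
  hq : 1 < q
  hpq : 1 / p + 1 / q = 1
  hs : 1 ≤ s
  hs' : Ex s' (1 - 1 / s)
  Wc : ∀ n, Continuous (Function.uncurry (W n))
  Wper : ∀ n t, ZPer (W n t)
  Wd : ∀ n t, ContDiff ℝ 1 (W n t)
  Wdiv : ∀ n t (Φ : SF d), ∫ x in fundCube d, fderiv ℝ (fun y => Φ.1 (t, y)) x (W n t x) = 0
  mθm : ∀ n, Measurable (mθ n)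
  mwm : ∀ n, Measurable (mw n)
  mWm : ∀ n, Measurable (mW n)
  Jm : ∀ n, MeasurableSet (J n)
  δ0 : ∀ n, 0 ≤ δ n
  δs : Summable δ
  δT : ∑' n, δ n < T / 4
  hJ : ∀ n, volume.restrict (Set.Ioo 0 T) (J n) ≤ ENNReal.ofReal (δ n)
  bθ : ∀ n, ∀ t ∈ Set.Ioo 0 T, spLp (ENNReal.ofReal p) (fun x => (ρ (n + 1)).1 (t, x) - (ρ n).1 (t, x))
    ≤ mθ n t + ENNReal.ofReal (δ n)
  bw : ∀ n, ∀ t ∈ Set.Ioo 0 T, spLp (ENNReal.ofReal q) (W n t) ≤ mw n t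
  bW : ∀ n, ∀ t ∈ Set.Ioo 0 T, W1qNorm (ENNReal.ofReal q) (W n t) ≤ mW n t
  sθ : ∑' n, eLpGen (volume.restrict (Set.Ioo 0 T)) (ENNReal.ofReal s) (mθ n) < ∞
  sw : ∑' n, eLpGen (volume.restrict (Set.Ioo 0 T)) s' (mw n) < ∞
  sW : ∑' n, ∫⁻ t in Set.Ioo 0 T, mW n t < ∞
  off : ∀ n, ∀ t ∈ Set.Ioo 0 T, t ∉ J n → ∀ x, W n t x = 0 ∧ |(ρ (n + 1)).1 (t, x) - (ρ n).1 (t, x)| ≤ δ n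
  res : ∀ Φ : SF d, (∀ x, Φ.1 (T, x) = 0) → Filter.Tendsto (fun n => ∫ t in Set.Ioo 0 T, ∫ x in fundCube d,
    (ρ n).1 (t, x) * ((D e0 Φ).1 (t, x) + fderiv ℝ (fun y => Φ.1 (t, y)) x (∑ k ∈ Finset.range n, W k t x)))
    Filter.atTop (nhds 0)
  nt : ∀ t ∈ Set.Ioo (T / 2) T, ∃ O : Set (Vec d), IsOpen O ∧ O.Nonempty ∧ O ⊆ fundCube d ∧
    ∀ x ∈ O, T / 4 < |(ρ 0).1 (t, x)|

/-- good times -/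
def Gd (T : ℝ) (J : ℕ → Set ℝ) : Set ℝ := {t | t ∈ Set.Ioo 0 T ∧ ∃ N, ∀ n ≥ N, t ∉ J n}

open Classical in
/-- limit velocity -/
def uL (T : ℝ) (J : ℕ → Set ℝ) (W : ℕ → ℝ → Vec d → Vec d) (t : ℝ) (x : Vec d) : Vec d :=
  if h : t ∈ Gd T J then ∑ k ∈ Finset.range h.2.choose, W k t x else 0

open Classical in
/-- limit density -/
def rL (T : ℝ) (J : ℕ → Set ℝ) (ρ : ℕ → SF d) (t : ℝ) (x : Vec d) : ℝ :=
  if t ∈ Gd T J then Filter.limUnder Filter.atTop (fun n => (ρ n).1 (t, x)) else 0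

namespace LimData
variable {T p q s : ℝ} {s' : ℝ≥0∞} {ρ : ℕ → SF d} {W : ℕ → ℝ → Vec d → Vec d}
    {mθ mw mW : ℕ → ℝ → ℝ≥0∞} {δ : ℕ → ℝ} {J : ℕ → Set ℝ}

theorem Gm (L : LimData T p q s s' ρ W mθ mw mW δ J) : MeasurableSet (Gd T J) := by
  have : Gd T J = Set.Ioo 0 T ∩ ⋃ N, ⋂ n, ⋂ (_ : n ≥ N), (J n)ᶜ := by
    ext t; simp [Gd]
  rw [this]
  exact measurableSet_Ioo.inter (MeasurableSet.iUnion fun N => MeasurableSet.iInter fun n =>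
    MeasurableSet.iInter fun _ => (L.Jm n).compl)

theorem Gae (L : LimData T p q s s' ρ W mθ mw mW δ J) :
    ∀ᵐ t ∂(volume.restrict (Set.Ioo 0 T)), t ∈ Gd T J := by
  have h1 : ∑' n, volume.restrict (Set.Ioo 0 T) (J n) ≠ ∞ := by
    refine ((ENNReal.tsum_le_tsum L.hJ).trans_lt ?_).ne
    rw [← ENNReal.ofReal_tsum_of_nonneg L.δ0 L.δs]; exact ENNReal.ofReal_lt_top
  filter_upwards [ae_eventually_notMem h1, ae_restrict_mem measurableSet_Ioo] with t ht ht2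
  exact ⟨ht2, Filter.eventually_atTop.1 ht⟩

theorem U_eq (L : LimData T p q s s' ρ W mθ mw mW δ J) {t : ℝ} (ht : t ∈ Set.Ioo 0 T) {N : ℕ}
    (hN : ∀ n ≥ N, t ∉ J n) {n : ℕ} (hn : N ≤ n) (x : Vec d) :
    ∑ k ∈ Finset.range n, W k t x = ∑ k ∈ Finset.range N, W k t x := by
  induction n, hn using Nat.le_induction with
  | base => rfl
  | succ m hm ih => rw [Finset.sum_range_succ, ih, (L.off m t ht (hN m hm) x).1, add_zero]

theorem uL_eq (L : LimData T p q s s' ρ W mθ mw mW δ J) {t : ℝ} (ht : t ∈ Gd T J) :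
    ∃ N, ∀ n ≥ N, ∀ x, uL T J W t x = ∑ k ∈ Finset.range n, W k t x := by
  refine ⟨ht.2.choose, fun n hn x => ?_⟩
  rw [uL, dif_pos ht]
  exact (L.U_eq ht.1 ht.2.choose_spec hn x).symm

theorem rL_lim (L : LimData T p q s s' ρ W mθ mw mW δ J) {t : ℝ} (ht : t ∈ Set.Ioo 0 T) {N : ℕ}
    (hN : ∀ n ≥ N, t ∉ J n) (x : Vec d) :
    Filter.Tendsto (fun n => (ρ n).1 (t, x)) Filter.atTop (nhds (rL T J ρ t x)) ∧
      ∀ n ≥ N, |(ρ n).1 (t, x) - rL T J ρ t x| ≤ ∑' n, δ n := by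
  have hG : t ∈ Gd T J := ⟨ht, N, hN⟩
  have h1 : ∀ n, dist ((ρ (n + N)).1 (t, x)) ((ρ (n + 1 + N)).1 (t, x)) ≤ δ (n + N) := by
    intro n
    rw [dist_comm, Real.dist_eq]
    have := (L.off (n + N) t ht (hN _ (by omega)) x).2
    rwa [show n + 1 + N = n + N + 1 by ring]
  have hs2 : Summable fun n => δ (n + N) := (summable_nat_add_iff N).2 L.δs
  have h2 : CauchySeq fun n => (ρ (n + N)).1 (t, x) := cauchySeq_of_dist_le_of_summable _ h1 hs2
  obtain ⟨a, ha⟩ := cauchySeq_tendsto_of_complete h2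
  have h3 : Filter.Tendsto (fun n => (ρ n).1 (t, x)) Filter.atTop (nhds a) :=
    (Filter.tendsto_add_atTop_iff_nat (f := fun n => (ρ n).1 (t, x)) N).1 ha
  have h4 : rL T J ρ t x = a := by rw [rL, if_pos hG]; exact h3.limUnder_eq
  rw [h4]
  refine ⟨h3, fun n hn => ?_⟩
  have h5 := dist_le_tsum_of_dist_le_of_tendsto _ h1 hs2 ha (n - N)
  rw [Real.dist_eq, Nat.sub_add_cancel hn] at h5
  refine h5.trans ?_
  have h6 : Function.Injective fun m => n - N + m + N := by intro a b h; simpa using h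
  exact tsum_comp_le_tsum_of_inj L.δs L.δ0 h6

theorem U_cont (L : LimData T p q s s' ρ W mθ mw mW δ J) (n : ℕ) :
    Continuous (fun z : ℝ × Vec d => ∑ k ∈ Finset.range n, W k z.1 z.2) :=
  continuous_finsetSum _ fun k _ => L.Wc k

theorem uL_meas (L : LimData T p q s s' ρ W mθ mw mW δ J) : Measurable (Function.uncurry (uL T J W)) := by
  refine measurable_of_tendsto_metrizable (f := fun n => (Gd T J ×ˢ Set.univ).indicator
    (fun z : ℝ × Vec d => ∑ k ∈ Finset.range n, W k z.1 z.2)) (fun n => ?_) ?_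
  · exact (L.U_cont n).measurable.indicator (L.Gm.prod MeasurableSet.univ)
  · rw [tendsto_pi_nhds]
    rintro ⟨t, x⟩
    by_cases h : t ∈ Gd T J
    · obtain ⟨N, hN⟩ := L.uL_eq h
      refine tendsto_const_nhds.congr' ?_
      filter_upwards [Filter.eventually_ge_atTop N] with n hn
      simp [Set.indicator, h, Function.uncurry, hN n hn]
    · simp [Set.indicator, h, Function.uncurry, uL]

theorem rL_meas (L : LimData T p q s s' ρ W mθ mw mW δ J) : Measurable (Function.uncurry (rL T J ρ)) := by
  refine measurable_of_tendsto_metrizable (f := fun n => (Gd T J ×ˢ Set.univ).indicator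
    (fun z : ℝ × Vec d => (ρ n).1 z)) (fun n => ?_) ?_
  · exact (ρ n).cont.measurable.indicator (L.Gm.prod MeasurableSet.univ)
  · rw [tendsto_pi_nhds]
    rintro ⟨t, x⟩
    by_cases h : t ∈ Gd T J
    · obtain ⟨h1, N, hN⟩ := id h
      simpa [Set.indicator, h, Function.uncurry] using (L.rL_lim h1 hN x).1
    · simp [Set.indicator, h, Function.uncurry, rL]

theorem uL_per (L : LimData T p q s s' ρ W mθ mw mW δ J) (t : ℝ) : ZPer (uL T J W t) := by
  intro x k
  by_cases h : t ∈ Gd T J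
  · simp only [uL, dif_pos h]
    exact Finset.sum_congr rfl fun n _ => L.Wper n t x k
  · simp only [uL, dif_neg h]

theorem rL_per (ρ : ℕ → SF d) (t : ℝ) : ZPer (rL T J ρ t) := by
  intro x k
  simp only [rL]
  have : (fun n => (ρ n).1 (t, x + fun i => (k i : ℝ))) = fun n => (ρ n).1 (t, x) := by
    ext n; exact (ρ n).per t x k
  rw [this]

theorem U_diff (L : LimData T p q s s' ρ W mθ mw mW δ J) (n : ℕ) (t : ℝ) :
    ContDiff ℝ 1 (fun x => ∑ k ∈ Finset.range n, W k t x) := ContDiff.sum fun k _ => L.Wd k t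

theorem U_sp (L : LimData T p q s s' ρ W mθ mw mW δ J) (n : ℕ) {t : ℝ} (ht : t ∈ Set.Ioo 0 T) :
    spLp (ENNReal.ofReal q) (fun x => ∑ k ∈ Finset.range n, W k t x) ≤ ∑' k, mw k t := by
  have hq0 : 0 < q := by linarith [L.hq]
  have : spLp (ENNReal.ofReal q) (fun x => ∑ k ∈ Finset.range n, W k t x) ≤ ∑ k ∈ Finset.range n, mw k t := by
    induction n with
    | zero =>
      simp only [Finset.range_zero, Finset.sum_empty]
      simpa using spLp_le_const (d := d) (fun _ => (0 : Vec d)) (δ := 0) hq0 (by simp)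
    | succ n ih =>
      simp only [Finset.sum_range_succ]
      refine (spLp_add _ _ L.hq.le (L.U_diff n t).continuous.aestronglyMeasurable
        (L.Wd n t).continuous.aestronglyMeasurable).trans (add_le_add ih (L.bw n t ht))
  exact this.trans (ENNReal.sum_le_tsum _)

theorem U_W1 (L : LimData T p q s s' ρ W mθ mw mW δ J) (n : ℕ) {t : ℝ} (ht : t ∈ Set.Ioo 0 T) :
    W1qNorm (ENNReal.ofReal q) (fun x => ∑ k ∈ Finset.range n, W k t x) ≤ ∑' k, mW k t := by
  have hq0 : 0 < q := by linarith [L.hq]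
  have : W1qNorm (ENNReal.ofReal q) (fun x => ∑ k ∈ Finset.range n, W k t x) ≤ ∑ k ∈ Finset.range n, mW k t := by
    induction n with
    | zero =>
      simp only [Finset.range_zero, Finset.sum_empty, W1qNorm]
      have h1 : spLp (ENNReal.ofReal q) (fun _ : Vec d => (0 : Vec d)) ≤ 0 := by
        simpa using spLp_le_const (d := d) (fun _ => (0 : Vec d)) (δ := 0) hq0 (by simp)
      have h2 : spLp (ENNReal.ofReal q) (fderiv ℝ (fun _ : Vec d => (0 : Vec d))) ≤ 0 := by
        simpa using spLp_le_const (d := d) (fderiv ℝ (fun _ : Vec d => (0 : Vec d))) (δ := 0) hq0 (by simp)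
      exact (add_le_add h1 h2).trans (by simp)
    | succ n ih =>
      simp only [Finset.sum_range_succ]
      have h1 := spLp_add _ _ L.hq.le (L.U_diff n t).continuous.aestronglyMeasurable
        (L.Wd n t).continuous.aestronglyMeasurable
      have h2 := spLp_add _ _ L.hq.le ((L.U_diff n t).continuous_fderiv one_ne_zero).aestronglyMeasurable
        ((L.Wd n t).continuous_fderiv one_ne_zero).aestronglyMeasurable
      have h3 : fderiv ℝ (fun x => ∑ k ∈ Finset.range n, W k t x + W n t x) =
          fun x => fderiv ℝ (fun x => ∑ k ∈ Finset.range n, W k t x) x + fderiv ℝ (W n t) x := by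
        ext1 x
        exact fderiv_fun_add ((L.U_diff n t).differentiable one_ne_zero x) ((L.Wd n t).differentiable one_ne_zero x)
      unfold W1qNorm
      rw [h3]
      refine (add_le_add h1 h2).trans ?_
      refine le_trans (le_of_eq ?_) (add_le_add ih (L.bW n t ht))
      unfold W1qNorm
      ring
  exact this.trans (ENNReal.sum_le_tsum _)

theorem r_sp (L : LimData T p q s s' ρ W mθ mw mW δ J) : ∃ C : ℝ, 0 ≤ C ∧ ∀ t ∈ Set.Ioo 0 T,
    (∀ n, spLp (ENNReal.ofReal p) (fun x => (ρ n).1 (t, x)) ≤ ENNReal.ofReal C + ∑' k, mθ k t) ∧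
    (t ∈ Gd T J → spLp (ENNReal.ofReal p) (rL T J ρ t) ≤ ENNReal.ofReal C + ∑' k, mθ k t) := by
  have hp0 : 0 < p := by linarith [L.hp]
  obtain ⟨H, hH, hb⟩ := (ρ 0).bdd T
  have hΔ : 0 ≤ ∑' n, δ n := tsum_nonneg L.δ0
  have key : ∀ t ∈ Set.Ioo 0 T, ∀ n, spLp (ENNReal.ofReal p) (fun x => (ρ n).1 (t, x)) ≤
      ENNReal.ofReal (H + ∑' n, δ n) + ∑' k, mθ k t := by
    intro t ht n
    have : spLp (ENNReal.ofReal p) (fun x => (ρ n).1 (t, x)) ≤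
        ENNReal.ofReal H + ∑ k ∈ Finset.range n, (mθ k t + ENNReal.ofReal (δ k)) := by
      induction n with
      | zero =>
        simp only [Finset.range_zero, Finset.sum_empty, add_zero]
        exact spLp_le_const _ hp0 fun x => hb t ⟨ht.1.le, ht.2.le⟩ x
      | succ n ih =>
        have h1 := spLp_add (fun x => (ρ n).1 (t, x)) (fun x => (ρ (n + 1)).1 (t, x) - (ρ n).1 (t, x)) L.hp.le
          ((ρ n).scont t).aestronglyMeasurable
          (((ρ (n+1)).scont t).sub ((ρ n).scont t)).aestronglyMeasurable
        simp only [add_sub_cancel] at h1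
        rw [Finset.sum_range_succ, ← add_assoc]
        exact h1.trans (add_le_add ih (L.bθ n t ht))
    refine this.trans ?_
    rw [Finset.sum_add_distrib, ENNReal.ofReal_add hH hΔ, ENNReal.ofReal_tsum_of_nonneg L.δ0 L.δs, add_assoc,
      add_comm (∑' n, ENNReal.ofReal (δ n))]
    gcongr
    · exact ENNReal.sum_le_tsum _
    · exact ENNReal.sum_le_tsum _
  refine ⟨H + ∑' n, δ n + ∑' n, δ n, by positivity, fun t ht => ⟨fun n => (key t ht n).trans ?_, ?_⟩⟩
  · gcongr; linarith
  · rintro ⟨-, N, hN⟩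
    have h1 := spLp_add (fun x => (ρ N).1 (t, x)) (fun x => rL T J ρ t x - (ρ N).1 (t, x)) L.hp.le
      ((ρ N).scont t).aestronglyMeasurable
      ((L.rL_meas.comp measurable_prodMk_left).aestronglyMeasurable.sub ((ρ N).scont t).aestronglyMeasurable)
    simp only [add_sub_cancel] at h1
    refine h1.trans ?_
    have h2 : spLp (ENNReal.ofReal p) (fun x => rL T J ρ t x - (ρ N).1 (t, x)) ≤ ENNReal.ofReal (∑' n, δ n) := by
      refine spLp_le_const _ hp0 fun x => ?_
      rw [Real.norm_eq_abs, abs_sub_comm]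
      exact (L.rL_lim ht hN x).2 N le_rfl
    refine (add_le_add (key t ht N) h2).trans (le_of_eq ?_)
    rw [ENNReal.ofReal_add (p := H + ∑' n, δ n) (by positivity) hΔ]
    ring

end LimData
end NU
end

noncomputable section
namespace NU
variable {d : ℕ}
namespace LimData
variable {T p q s : ℝ} {s' : ℝ≥0∞} {ρ : ℕ → SF d} {W : ℕ → ℝ → Vec d → Vec d}
    {mθ mw mW : ℕ → ℝ → ℝ≥0∞} {δ : ℕ → ℝ} {J : ℕ → Set ℝ}

theorem s'1 (L : LimData T p q s s' ρ W mθ mw mW δ J) : 1 ≤ s' := by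
  refine Ex_one_le L.hs' ?_
  have : 0 ≤ 1 / s := by have := L.hs; positivity
  linarith

theorem u_W1 (L : LimData T p q s s' ρ W mθ mw mW δ J) : LsW1qT T 1 (ENNReal.ofReal q) (uL T J W) < ∞ := by
  unfold LsW1qT
  refine (eLpGen_mono _ (fun t => ∑' k, mW k t) ?_).trans_lt (eLpGen_lt_of_tsum le_rfl _ L.mWm ?_)
  · filter_upwards [L.Gae] with t ht
    obtain ⟨N, hN⟩ := L.uL_eq ht
    have : uL T J W t = fun x => ∑ k ∈ Finset.range N, W k t x := funext fun x => hN N le_rfl x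
    rw [this]
    exact L.U_W1 N ht.1
  · refine lt_of_eq_of_lt ?_ L.sW
    congr 1; ext n
    simp [eLpGen]

theorem u_sp (L : LimData T p q s s' ρ W mθ mw mW δ J) {t : ℝ} (ht : t ∈ Gd T J) :
    spLp (ENNReal.ofReal q) (uL T J W t) ≤ ∑' k, mw k t := by
  obtain ⟨N, hN⟩ := L.uL_eq ht
  have : uL T J W t = fun x => ∑ k ∈ Finset.range N, W k t x := funext fun x => hN N le_rfl x
  rw [this]
  exact L.U_sp N ht.1

theorem u_Ls (L : LimData T p q s s' ρ W mθ mw mW δ J) : LsLpT T s' (ENNReal.ofReal q) (uL T J W) < ∞ := by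
  unfold LsLpT
  refine (eLpGen_mono _ (fun t => ∑' k, mw k t) ?_).trans_lt (eLpGen_lt_of_tsum L.s'1 _ L.mwm L.sw)
  filter_upwards [L.Gae] with t ht
  exact L.u_sp ht

theorem fin_r (L : LimData T p q s s' ρ W mθ mw mW δ J) (C : ℝ) :
    eLpGen (volume.restrict (Set.Ioo 0 T)) (ENNReal.ofReal s) (fun t => ENNReal.ofReal C + ∑' k, mθ k t) < ∞ := by
  have hs1 : 1 ≤ ENNReal.ofReal s := by rw [ENNReal.one_le_ofReal]; exact L.hs
  refine (eLpGen_add hs1 aemeasurable_const (Measurable.tsum L.mθm).aemeasurable).trans_lt ?_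
  exact ENNReal.add_lt_top.2 ⟨eLpGen_const_lt _ ENNReal.ofReal_ne_top, eLpGen_lt_of_tsum hs1 _ L.mθm L.sθ⟩

theorem r_Ls (L : LimData T p q s s' ρ W mθ mw mW δ J) :
    LsLpT T (ENNReal.ofReal s) (ENNReal.ofReal p) (rL T J ρ) < ∞ := by
  unfold LsLpT
  obtain ⟨C, hC, h⟩ := L.r_sp
  refine (eLpGen_mono _ _ ?_).trans_lt (L.fin_r C)
  filter_upwards [L.Gae] with t ht
  exact (h t ht.1).2 ht

theorem u_div (L : LimData T p q s s' ρ W mθ mw mW δ J) : WeaklyDivFree d T (uL T J W) := by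
  intro φ hφ hper
  obtain ⟨Φ, hΦ⟩ : ∃ Φ : SF d, Φ.1 = Function.uncurry φ := ⟨⟨Function.uncurry φ, hφ, fun t x k => hper t x k⟩, rfl⟩
  have hsl : ∀ t, φ t = fun y => Φ.1 (t, y) := fun t => by ext y; rw [hΦ]; rfl
  refine integral_eq_zero_of_ae (Filter.Eventually.of_forall fun t => ?_)
  simp only [Pi.zero_apply, hsl]
  by_cases ht : t ∈ Gd T J
  · obtain ⟨N, hN⟩ := L.uL_eq ht
    simp only [hN N le_rfl, map_sum]
    rw [integral_finsetSum]
    · exact Finset.sum_eq_zero fun k _ => L.Wdiv k t Φ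
    · intro k _
      refine cube_integ ?_
      simp only [slice_fderiv]
      have h1 : Continuous (fderiv ℝ Φ.1) := Φ.smooth.continuous_fderiv (by simp)
      have h2 := (L.Wd k t).continuous
      fun_prop
  · simp [uL, dif_neg ht]

/-- Hölder bound for the inner integrals -/
theorem inner_bound (hp : 1 < p) (hq : 1 < q) (hpq : 1 / p + 1 / q = 1) {C : ℝ} (hC : 0 ≤ C) (r : Vec d → ℝ) (v : Vec d → Vec d)
    (F : Vec d → ℝ) (hr : AEStronglyMeasurable r (volume.restrict (fundCube d)))
    (hv : AEStronglyMeasurable v (volume.restrict (fundCube d)))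
    (hF : ∀ x, |F x| ≤ |r x| * (C * (1 + ‖v x‖))) :
    ‖∫ x in fundCube d, F x‖ₑ ≤ ENNReal.ofReal C * (spLp (ENNReal.ofReal p) r * (1 + spLp (ENNReal.ofReal q) v)) := by
  have hq0 : 0 < q := by linarith
  have hp0 : 0 < p := by linarith
  have h1 := eLpGen_holder (ν := volume.restrict (fundCube d)) (s := p) (s' := ENNReal.ofReal q) hp.le (by
      have := Ex_real hq0
      rwa [show 1 / q = 1 - 1 / p by linarith] at this)
      (f := fun x => ‖r x‖ₑ) (g := fun x => 1 + ‖v x‖ₑ) hr.enorm (aemeasurable_const.add hv.enorm)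
  have h2 := eLpGen_add (ν := volume.restrict (fundCube d)) (q := ENNReal.ofReal q) (ENNReal.one_le_ofReal.2 hq.le)
    (f := fun _ => 1) (g := fun x => ‖v x‖ₑ) aemeasurable_const hv.enorm
  have h3 : eLpGen (volume.restrict (fundCube d)) (ENNReal.ofReal q) (fun _ => 1) ≤ 1 := by
    simpa [spLp] using spLp_le_const (d := d) (fun _ => (1:ℝ)) (δ := 1) hq0 (by simp)
  calc ‖∫ x in fundCube d, F x‖ₑ ≤ ∫⁻ x in fundCube d, ‖F x‖ₑ := enorm_integral_le_lintegral_enorm _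
    _ ≤ ∫⁻ x in fundCube d, ENNReal.ofReal C * (‖r x‖ₑ * (1 + ‖v x‖ₑ)) := by
      refine lintegral_mono fun x => ?_
      rw [← ofReal_norm, ← ofReal_norm, ← ofReal_norm, ← ENNReal.ofReal_one, ← ENNReal.ofReal_add zero_le_one (norm_nonneg _),
        ← ENNReal.ofReal_mul (norm_nonneg _), ← ENNReal.ofReal_mul hC]
      apply ENNReal.ofReal_le_ofReal
      rw [Real.norm_eq_abs, Real.norm_eq_abs]
      exact (hF x).trans (le_of_eq (by ring))
    _ = ENNReal.ofReal C * ∫⁻ x in fundCube d, (‖r x‖ₑ * (1 + ‖v x‖ₑ)) := lintegral_const_mul' _ _ ENNReal.ofReal_ne_top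
    _ ≤ ENNReal.ofReal C * (spLp (ENNReal.ofReal p) r * (1 + spLp (ENNReal.ofReal q) v)) := by
      gcongr
      refine h1.trans ?_
      gcongr ?_ * ?_
      · exact le_rfl
      · exact h2.trans (add_le_add h3 le_rfl)

theorem r_weak (L : LimData T p q s s' ρ W mθ mw mW δ J) :
    IsWeakSolution d T (uL T J W) (rL T J ρ) (fun _ => 0) := by
  rintro φ ⟨hφ, hper, T', hT', hφ0⟩
  obtain ⟨Φ, hΦ⟩ : ∃ Φ : SF d, Φ.1 = Function.uncurry φ := ⟨⟨Function.uncurry φ, hφ, fun t x k => hper t x k⟩, rfl⟩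
  have hsl : ∀ t, φ t = fun y => Φ.1 (t, y) := fun t => by ext y; rw [hΦ]; rfl
  have hΦT : ∀ x, Φ.1 (T, x) = 0 := fun x => by rw [hΦ]; exact hφ0 T hT'.le x
  have hdt : ∀ t x, deriv (fun τ => φ τ x) t = (D e0 Φ).1 (t, x) := by
    intro t x
    simp only [hsl, D_ap]
    have h1 : HasFDerivAt Φ.1 (fderiv ℝ Φ.1 (t, x)) (t, x) := (Φ.diff (t, x)).hasFDerivAt
    have h2 : HasDerivAt (fun τ : ℝ => (τ, x)) ((1, 0) : ℝ × Vec d) t :=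
      (hasDerivAt_id t).prodMk (hasDerivAt_const t x)
    exact (h1.comp_hasDerivAt t h2).deriv
  simp only [zero_mul, integral_zero, hdt]
  have hL : Continuous (fderiv ℝ Φ.1) := Φ.smooth.continuous_fderiv (by simp)
  have hsf : ∀ t x v, fderiv ℝ (φ t) x v = fderiv ℝ Φ.1 (t, x) (0, v) := by
    intro t x v; rw [hsl, slice_fderiv]
  simp only [hsf]
  have hres := L.res Φ hΦT
  simp only [slice_fderiv] at hres
  -- uniform bound on derivatives
  obtain ⟨C, hC, hCb⟩ : ∃ C : ℝ, 0 ≤ C ∧ ∀ t ∈ Set.Icc 0 T, ∀ x ∈ fundCube d, ‖fderiv ℝ Φ.1 (t, x)‖ ≤ C := by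
    obtain ⟨C, hC⟩ := (isCompact_Icc (a := (0:ℝ)) (b := T)).prod (cube_compact (d := d)) |>.exists_bound_of_continuousOn hL.continuousOn
    refine ⟨max C 0, le_max_right _ _, fun t ht x hx => (hC (t, x) ⟨ht, hx⟩).trans (le_max_left _ _)⟩
  have hpt : ∀ t ∈ Set.Icc 0 T, ∀ x ∈ fundCube d, ∀ (r : ℝ) (v : Vec d),
      |r * ((D e0 Φ).1 (t, x) + fderiv ℝ Φ.1 (t, x) (0, v))| ≤ |r| * (C * (1 + ‖v‖)) := by
    intro t ht x hx r v
    rw [abs_mul]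
    gcongr
    rw [mul_add, mul_one]
    refine (abs_add_le _ _).trans (add_le_add ?_ ?_)
    · rw [D_ap]
      refine ((fderiv ℝ Φ.1 (t, x)).le_opNorm _).trans ?_
      have : ‖(e0 : ℝ × Vec d)‖ ≤ 1 := by simp [e0, Prod.norm_def]
      calc _ ≤ C * 1 := mul_le_mul (hCb t ht x hx) this (norm_nonneg _) hC
        _ = C := mul_one C
    · refine ((fderiv ℝ Φ.1 (t, x)).le_opNorm _).trans ?_
      have : ‖((0, v) : ℝ × Vec d)‖ = ‖v‖ := by simp [Prod.norm_def]
      rw [this]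
      gcongr
      exact hCb t ht x hx
  obtain ⟨A, hA, hAb⟩ := L.r_sp
  -- dominating function
  obtain ⟨b, hb⟩ : ∃ b : ℝ → ℝ≥0∞, b = fun t => ENNReal.ofReal C *
    ((ENNReal.ofReal A + ∑' k, mθ k t) * (1 + ∑' k, mw k t)) := ⟨_, rfl⟩
  have hθm : Measurable fun t => ∑' k, mθ k t := Measurable.tsum L.mθm
  have hwm : Measurable fun t => ∑' k, mw k t := Measurable.tsum L.mwm
  have hbm : Measurable b := by rw [hb]; fun_prop
  have hbi : ∫⁻ t in Set.Ioo 0 T, b t ≠ ∞ := by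
    rw [hb, lintegral_const_mul' _ _ ENNReal.ofReal_ne_top]
    refine ENNReal.mul_ne_top ENNReal.ofReal_ne_top ?_
    refine ((eLpGen_holder L.hs L.hs' (measurable_const.add hθm).aemeasurable
      (measurable_const.add hwm).aemeasurable).trans_lt ?_).ne
    refine ENNReal.mul_lt_top (L.fin_r A) ?_
    refine (eLpGen_add L.s'1 aemeasurable_const hwm.aemeasurable).trans_lt ?_
    exact ENNReal.add_lt_top.2 ⟨eLpGen_const_lt _ ENNReal.one_ne_top, eLpGen_lt_of_tsum L.s'1 _ L.mwm L.sw⟩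
  have hbf : ∀ᵐ t ∂(volume.restrict (Set.Ioo 0 T)), b t < ∞ := ae_lt_top hbm hbi
  have hcF : ∀ n, Continuous fun z : ℝ × Vec d => (ρ n).1 (z.1, z.2) * ((D e0 Φ).1 (z.1, z.2) +
      fderiv ℝ Φ.1 (z.1, z.2) (0, ∑ k ∈ Finset.range n, W k z.1 z.2)) := by
    intro n
    have h1 := L.U_cont n
    have h2 := (ρ n).cont
    have h3 := (D e0 Φ).cont
    fun_prop
  have hlim := tendsto_integral_of_dominated_convergence (μ := volume.restrict (Set.Ioo 0 T))
    (F := fun n t => ∫ x in fundCube d, (ρ n).1 (t, x) * ((D e0 Φ).1 (t, x) +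
      fderiv ℝ Φ.1 (t, x) (0, ∑ k ∈ Finset.range n, W k t x)))
    (f := fun t => ∫ x in fundCube d, rL T J ρ t x * ((D e0 Φ).1 (t, x) +
      fderiv ℝ Φ.1 (t, x) (0, uL T J W t x)))
    (fun t => (b t).toReal) (fun n => ?_) (integrable_toReal_of_lintegral_ne_top hbm.aemeasurable hbi) (fun n => ?_) ?_
  · exact (tendsto_nhds_unique hlim hres).symm
  · exact ((hcF n).stronglyMeasurable.integral_prod_right').aestronglyMeasurable
  · filter_upwards [hbf, ae_restrict_mem measurableSet_Ioo] with t ht ht2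
    have h1 := inner_bound (d := d) L.hp L.hq L.hpq hC (fun x => (ρ n).1 (t, x)) (fun x => ∑ k ∈ Finset.range n, W k t x)
      ((fundCube d).indicator fun x => (ρ n).1 (t, x) * ((D e0 Φ).1 (t, x) +
      fderiv ℝ Φ.1 (t, x) (0, ∑ k ∈ Finset.range n, W k t x))) ((ρ n).scont t).aestronglyMeasurable
      (L.U_diff n t).continuous.aestronglyMeasurable (by
        intro x
        by_cases hx : x ∈ fundCube d
        · rw [Set.indicator_of_mem hx]
          exact hpt t ⟨ht2.1.le, ht2.2.le⟩ x hx _ _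
        · rw [Set.indicator_of_notMem hx, abs_zero]; positivity)
    rw [setIntegral_indicator cube_meas, Set.inter_self] at h1
    have h2 : ENNReal.ofReal C * (spLp (ENNReal.ofReal p) (fun x => (ρ n).1 (t, x)) *
        (1 + spLp (ENNReal.ofReal q) (fun x => ∑ k ∈ Finset.range n, W k t x))) ≤ b t := by
      rw [hb]
      beta_reduce
      gcongr
      · exact (hAb t ht2).1 n
      · exact L.U_sp n ht2
    have h3 := ENNReal.toReal_mono ht.ne (h1.trans h2)
    simpa using h3
  · filter_upwards [L.Gae] with t ht
    obtain ⟨ht1, N, hN⟩ := id ht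
    obtain ⟨N', hN'⟩ := L.uL_eq ht
    refine tendsto_integral_filter_of_dominated_convergence
      (fun x => (|(ρ N).1 (t, x)| + 2 * ∑' n, δ n) * (C * (1 + ‖∑ k ∈ Finset.range N', W k t x‖))) ?_ ?_ ?_ ?_
    · exact Filter.Eventually.of_forall fun n => ((hcF n).comp (by fun_prop : Continuous fun x : Vec d => (t, x))).aestronglyMeasurable
    · filter_upwards [Filter.eventually_ge_atTop N, Filter.eventually_ge_atTop N'] with n hn hn'
      filter_upwards [ae_restrict_mem cube_meas] with x hx
      rw [← hN' n hn' x, hN' N' le_rfl x]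
      refine (hpt t ⟨ht1.1.le, ht1.2.le⟩ x hx _ _).trans ?_
      gcongr
      have h1 := (L.rL_lim ht1 hN x).2 n hn
      have h2 := (L.rL_lim ht1 hN x).2 N le_rfl
      have h3 := abs_sub_abs_le_abs_sub ((ρ n).1 (t, x)) ((ρ N).1 (t, x))
      have h4 := abs_sub_le ((ρ n).1 (t, x)) (rL T J ρ t x) ((ρ N).1 (t, x))
      rw [abs_sub_comm (rL T J ρ t x)] at h4
      linarith
    · refine cube_integ ?_
      have h1 := (L.U_diff N' t).continuous
      have h2 := (ρ N).scont t
      exact (h2.abs.add continuous_const).mul (continuous_const.mul (continuous_const.add h1.norm))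
    · refine Filter.Eventually.of_forall fun x => ?_
      refine Filter.Tendsto.mul (L.rL_lim ht1 hN x).1 (tendsto_const_nhds.congr' ?_)
      filter_upwards [Filter.eventually_ge_atTop N'] with n hn
      rw [hN' n hn x]

theorem sp_meas {f : ℝ → Vec d → ℝ} (hf : Measurable (Function.uncurry f)) {p : ℝ} :
    Measurable fun t => spLp (ENNReal.ofReal p) (f t) := by
  simp only [spLp, eLpGen, ENNReal.ofReal_ne_top, if_false]
  refine Measurable.pow_const ?_ _
  refine Measurable.lintegral_prod_right' (f := fun z : ℝ × Vec d => (‖f z.1 z.2‖₊ : ℝ≥0∞) ^ (ENNReal.ofReal p).toReal) ?_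
  exact ((hf.nnnorm).coe_nnreal_ennreal).pow_const _

theorem r_nt (L : LimData T p q s s' ρ W mθ mw mW δ J) :
    LsLpT T (ENNReal.ofReal s) (ENNReal.ofReal p) (rL T J ρ) ≠ 0 := by
  intro h0
  have hT := L.hT
  have hs0 : ENNReal.ofReal s ≠ 0 := by
    have := L.hs
    simp only [ne_eq, ENNReal.ofReal_eq_zero, not_le]; linarith
  have hp0 : ENNReal.ofReal p ≠ 0 := by
    have := L.hp
    simp only [ne_eq, ENNReal.ofReal_eq_zero, not_le]; linarith
  have h1 := eLpGen_eq_zero hs0 (sp_meas L.rL_meas).aemeasurable h0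
  rw [ae_restrict_iff' measurableSet_Ioo, ae_iff] at h1
  -- the set of times never hit
  have h2 : ∃ t ∈ Set.Ioo (T / 2) T, (∀ n, t ∉ J n) ∧ spLp (ENNReal.ofReal p) (rL T J ρ t) = 0 := by
    by_contra hcon
    push Not at hcon
    have hsub : Set.Ioo (T / 2) T ⊆ (⋃ n, J n ∩ Set.Ioo 0 T) ∪ {t | ¬ (t ∈ Set.Ioo 0 T → spLp (ENNReal.ofReal p) (rL T J ρ t) = 0)} := by
      intro t ht
      have ht2 : t ∈ Set.Ioo 0 T := ⟨by linarith [ht.1], ht.2⟩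
      by_cases hJt : ∀ n, t ∉ J n
      · right
        intro hh
        exact hcon t ht hJt (hh ht2)
      · left
        push Not at hJt
        obtain ⟨n, hn⟩ := hJt
        exact Set.mem_iUnion.2 ⟨n, hn, ht2⟩
    have h3 := (measure_mono (μ := volume) hsub).trans (measure_union_le _ _)
    rw [h1, add_zero, Real.volume_Ioo] at h3
    have h4 : volume (⋃ n, J n ∩ Set.Ioo 0 T) ≤ ENNReal.ofReal (∑' n, δ n) := by
      refine (measure_iUnion_le _).trans ?_
      rw [ENNReal.ofReal_tsum_of_nonneg L.δ0 L.δs]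
      refine ENNReal.tsum_le_tsum fun n => ?_
      rw [← Measure.restrict_apply (L.Jm n)]
      exact L.hJ n
    have h5 := (ENNReal.ofReal_le_ofReal_iff (tsum_nonneg L.δ0)).1 (h3.trans h4)
    have := L.δT
    linarith
  obtain ⟨t, ht, hJt, hz⟩ := h2
  have ht2 : t ∈ Set.Ioo 0 T := ⟨by linarith [ht.1], ht.2⟩
  have hrm : Measurable (rL T J ρ t) := L.rL_meas.comp measurable_prodMk_left
  have h6 := eLpGen_eq_zero hp0 hrm.nnnorm.coe_nnreal_ennreal.aemeasurable hz
  rw [ae_restrict_iff' cube_meas, ae_iff] at h6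
  obtain ⟨O, hO1, hO2, hO3, hO4⟩ := L.nt t ht
  refine (hO1.measure_pos volume hO2).ne' (measure_mono_null ?_ h6)
  intro x hx hh
  have h7 := hh (hO3 hx)
  have h8 : rL T J ρ t x = 0 := by simpa using h7
  have h9 := (L.rL_lim ht2 (N := 0) (fun n _ => hJt n) x).2 0 le_rfl
  rw [h8, sub_zero] at h9
  linarith [hO4 x hx, L.δT]

end LimData
end NU
end

noncomputable section
namespace NU
variable {d : ℕ}

/-- stage of the iteration -/
structure St (d : ℕ) where
  i : Fin d
  j : Fin d
  hij : i ≠ j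
  ρ : SF d
  ui : SF d
  uj : SF d
  Ri : SF d
  Rj : SF d
  pde : D e0 ρ + D (ex i) (ρ * ui) + D (ex j) (ρ * uj) = D (ex i) Ri + D (ex j) Rj
  h0 : ∀ x, ρ.1 (0, x) = 0

/-- velocity of a stage -/
def St.vel (S : St d) (t : ℝ) (x : Vec d) : Vec d :=
  S.ui.1 (t, x) • (Pi.single S.i 1 : Vec d) + S.uj.1 (t, x) • (Pi.single S.j 1 : Vec d)

/-- relation between consecutive stages -/
structure Nxt (T p q s : ℝ) (s' : ℝ≥0∞) (a b : ℝ≥0∞) (e : ℝ) (S S' : St d) (B : SF d) (mθ mw mW : ℝ → ℝ≥0∞)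
    (J : Set ℝ) (δ : ℝ) : Prop where
  vel : ∀ t x, S'.vel t x = S.vel t x + wv S.i S.j B t x
  mθm : Measurable mθ
  mwm : Measurable mw
  mWm : Measurable mW
  Jm : MeasurableSet J
  δ0 : 0 < δ
  δe : δ ≤ e
  bθ : ∀ t ∈ Set.Ioo 0 T, spLp (ENNReal.ofReal p) (fun x => S'.ρ.1 (t, x) - S.ρ.1 (t, x)) ≤ mθ t + ENNReal.ofReal δ
  bw : ∀ t ∈ Set.Ioo 0 T, spLp (ENNReal.ofReal q) (wv S.i S.j B t) ≤ mw t
  bW : ∀ t ∈ Set.Ioo 0 T, W1qNorm (ENNReal.ofReal q) (wv S.i S.j B t) ≤ mW t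
  sθ : eLpGen (volume.restrict (Set.Ioo 0 T)) (ENNReal.ofReal s) mθ ≤ a
  sw : eLpGen (volume.restrict (Set.Ioo 0 T)) s' mw ≤ b
  sW : ∫⁻ t in Set.Ioo 0 T, mW t ≤ ENNReal.ofReal δ
  hJ : volume.restrict (Set.Ioo 0 T) J ≤ ENNReal.ofReal δ
  off : ∀ t ∈ Set.Ioo 0 T, t ∉ J → ∀ x, wv S.i S.j B t x = 0 ∧ |S'.ρ.1 (t, x) - S.ρ.1 (t, x)| ≤ δ

theorem N1_sub_le (T : ℝ) (f g : SF d) : N1 T f ≤ N1 T (f - g) + N1 T g := by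
  unfold N1
  have hm : ∀ f : SF d, Measurable fun z : ℝ × Vec d => ENNReal.ofReal |f.1 z| := fun f => by
    have := f.cont.measurable
    fun_prop
  rw [← lintegral_add_right _ (Measurable.lintegral_prod_right' (hm g))]
  refine lintegral_mono fun t => ?_
  beta_reduce
  rw [← lintegral_add_right _ (show Measurable fun x => ENNReal.ofReal |g.1 (t, x)| from (hm g).comp measurable_prodMk_left)]
  refine lintegral_mono fun x => ?_
  beta_reduce
  rw [← ENNReal.ofReal_add (abs_nonneg _) (abs_nonneg _)]
  apply ENNReal.ofReal_le_ofReal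
  have := abs_add_le ((f - g).1 (t, x)) (g.1 (t, x))
  simpa using this

theorem St.next (P : Prof) {T : ℝ} (hT : 0 < T) {p q s : ℝ} {s' : ℝ≥0∞}
    (hp : 1 < p) (hq : 1 < q) (hpq : 1 / p + 1 / q = 1) (hs : 1 ≤ s) (hs' : Ex s' (1 - 1 / s)) (S : St d)
    {l ε ε' ε'' e : ℝ} (hl : 0 < l) (he : 0 < e) (hε'' : 0 < ε'') (hRi : N1 T S.Ri < ENNReal.ofReal ε)
    (hRj : N1 T S.Rj < ENNReal.ofReal ε') :
    ∃ (S' : St d) (B : SF d) (mθ mw mW : ℝ → ℝ≥0∞) (J : Set ℝ) (δ : ℝ),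
      N1 T S'.Ri < ENNReal.ofReal ε' ∧ N1 T S'.Rj < ENNReal.ofReal ε'' ∧
      Nxt T p q s s' (ENNReal.ofReal (4 * P.M ^ 2 * l) * ENNReal.ofReal (2 * ε) ^ (1 / s))
        (ENNReal.ofReal (6 * P.M ^ 2 * l⁻¹) * ENNReal.ofReal (2 * ε) ^ (1 - 1 / s)) e S S' B mθ mw mW J δ := by
  obtain ⟨δ, hδ, hδe, hδ2, hδ3⟩ : ∃ δ : ℝ, 0 < δ ∧ δ ≤ e ∧ δ < ε'' ∧ ENNReal.ofReal δ + N1 T S.Rj < ENNReal.ofReal ε' := by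
    have hfin : N1 T S.Rj ≠ ∞ := (hRj.trans_le le_top).ne
    have hx := hRj
    rw [← ENNReal.ofReal_toReal hfin] at hx
    have hε' : 0 < ε' := by
      by_contra hc
      rw [ENNReal.ofReal_of_nonpos (not_lt.1 hc)] at hx; simp at hx
    have hx2 := (ENNReal.ofReal_lt_ofReal_iff hε').1 hx
    refine ⟨min e (min (ε'' / 2) ((ε' - (N1 T S.Rj).toReal) / 2)), ?_, min_le_left _ _, ?_, ?_⟩
    · refine lt_min he (lt_min (by linarith) (by linarith))
    · exact ((min_le_right _ _).trans (min_le_left _ _)).trans_lt (by linarith)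
    · calc _ ≤ ENNReal.ofReal ((ε' - (N1 T S.Rj).toReal) / 2) + ENNReal.ofReal (N1 T S.Rj).toReal := by
            rw [ENNReal.ofReal_toReal hfin]
            gcongr
            exact (min_le_right _ _).trans (min_le_right _ _)
        _ < ENNReal.ofReal ε' := by
            rw [← ENNReal.ofReal_add (by linarith) ENNReal.toReal_nonneg]
            exact (ENNReal.ofReal_lt_ofReal_iff hε').2 (by linarith)
  obtain ⟨θ, B, Ri', Rj', mθ, mw, mW, J, hpde, hθ0, m1, m2, m3, m4, b1, b2, b3, s1, s2, s3, s4, off, r1, r2⟩ :=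
    step P S.hij hT hp hq hpq hs hs' S.ρ S.ui S.uj S.Ri S.Rj S.pde hl hδ hRi
  refine ⟨⟨S.j, S.i, S.hij.symm, S.ρ + θ, S.uj + -D (ex S.i) B, S.ui + D (ex S.j) B, Rj', Ri', ?_, ?_⟩, B, mθ, mw, mW, J, δ, ?_, ?_, ?_⟩
  · rw [add_right_comm, hpde, add_comm]
  · intro x; rw [SF.add_ap, S.h0, hθ0, add_zero]
  · exact ((N1_sub_le T Rj' S.Rj).trans (by gcongr)).trans_lt hδ3
  · exact r1.trans_lt ((ENNReal.ofReal_lt_ofReal_iff hε'').2 hδ2)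
  · have hd : ∀ t x, (S.ρ + θ).1 (t, x) - S.ρ.1 (t, x) = θ.1 (t, x) := by intro t x; simp
    constructor
    · intro t x
      simp only [St.vel, wv, SF.add_ap, SF.neg_ap]
      module
    · exact m1
    · exact m2
    · exact m3
    · exact m4
    · exact hδ
    · exact hδe
    · simpa only [hd] using b1
    · exact b2
    · exact b3
    · exact s1
    · exact s2
    · exact s3
    · exact s4
    · intro t ht htJ x
      obtain ⟨h1, h2, h3⟩ := off t ht htJ x
      refine ⟨?_, by simpa only [hd] using h3⟩
      simp [wv, h1, h2]

theorem wv_cont (i j : Fin d) (B : SF d) : Continuous (Function.uncurry (wv i j B)) := by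
  have h1 := (D (ex j) B).cont
  have h2 := (D (ex i) B).cont
  have : Function.uncurry (wv i j B) = fun z => (D (ex j) B).1 z • (Pi.single i 1 : Vec d) - (D (ex i) B).1 z • (Pi.single j 1 : Vec d) := rfl
  rw [this]
  fun_prop

theorem wv_per (i j : Fin d) (B : SF d) (t : ℝ) : ZPer (wv i j B t) := by
  intro x k
  simp only [wv, SF.per]

theorem wv_smooth (i j : Fin d) (B : SF d) (t : ℝ) : ContDiff ℝ 1 (wv i j B t) := by
  have h : ∀ f : SF d, ContDiff ℝ 1 fun x => f.1 (t, x) := fun f =>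
    (f.smooth.of_le (by exact_mod_cast le_top)).comp (contDiff_const.prodMk contDiff_id)
  exact ((h (D (ex j) B)).smul contDiff_const).sub ((h (D (ex i) B)).smul contDiff_const)

theorem St.res (S : St d) {T : ℝ} (hT : 0 < T) (Φ : SF d) (h1 : ∀ x, Φ.1 (T, x) = 0) {C : ℝ}
    (hC : ∀ k, ∀ t ∈ Set.Icc 0 T, ∀ x, |(D (ex k) Φ).1 (t, x)| ≤ C) :
    ‖∫ t in Set.Ioo 0 T, ∫ x in fundCube d, S.ρ.1 (t, x) * ((D e0 Φ).1 (t, x) +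
      fderiv ℝ (fun y => Φ.1 (t, y)) x (S.vel t x))‖ₑ ≤ ENNReal.ofReal C * (N1 T S.Ri + N1 T S.Rj) := by
  have e : ∀ t x, S.ρ.1 (t, x) * ((D e0 Φ).1 (t, x) + fderiv ℝ (fun y => Φ.1 (t, y)) x (S.vel t x)) =
      (S.ρ * (D e0 Φ + D (ex S.i) Φ * S.ui + D (ex S.j) Φ * S.uj)).1 (t, x) := by
    intro t x
    simp only [SF.mul_ap, SF.add_ap, St.vel, map_add, map_smul, slice_fderiv]
    simp only [D_ap, ex, smul_eq_mul]
    ring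
  simp only [e]
  change ‖II T _‖ₑ ≤ _
  rw [weak_smooth hT S.i S.j S.ρ S.ui S.uj S.Ri S.Rj Φ S.pde S.h0 h1, mul_add]
  exact (enorm_add_le _ _).trans (add_le_add (II_bound _ _ (hC S.i)) (II_bound _ _ (hC S.j)))

/-- residual sizes -/
def eps (K s : ℝ) (n : ℕ) : ℝ := (K * (1 / 4) ^ n) ^ s / 2

theorem eps_pos {K s : ℝ} (hK : 1 ≤ K) (n : ℕ) : 0 < eps K s n := by unfold eps; positivity

theorem eps_tendsto {K s : ℝ} (hs : 1 ≤ s) : Filter.Tendsto (eps K s) Filter.atTop (nhds 0) := by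
  have h1 : Filter.Tendsto (fun n : ℕ => K * (1 / 4 : ℝ) ^ n) Filter.atTop (nhds (K * 0)) :=
    (_root_.tendsto_pow_atTop_nhds_zero_of_lt_one (by norm_num) (by norm_num)).const_mul K
  rw [mul_zero] at h1
  have h2 := (h1.rpow_const (p := s) (Or.inr (by linarith))).div_const 2
  rwa [Real.zero_rpow (by linarith), zero_div] at h2

theorem eps_a {K s : ℝ} (hK : 1 ≤ K) (hs : 1 ≤ s) (n : ℕ) :
    ENNReal.ofReal (2 * eps K s n) ^ (1 / s) = ENNReal.ofReal (K * (1 / 4) ^ n) := by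
  have hs0 : s ≠ 0 := by linarith
  rw [ENNReal.ofReal_rpow_of_pos (by have := eps_pos (s := s) hK n; positivity)]
  congr 1
  unfold eps
  rw [mul_div_cancel₀ _ (two_ne_zero), ← Real.rpow_mul (by positivity), mul_one_div_cancel hs0, Real.rpow_one]

theorem eps_b {K s : ℝ} (hK : 1 ≤ K) (hs : 1 ≤ s) (n : ℕ) :
    ENNReal.ofReal (2 * eps K s n) ^ (1 - 1 / s) ≤ ENNReal.ofReal (K ^ (s - 1)) := by
  have hs0 : 0 < s := by linarith
  rw [ENNReal.ofReal_rpow_of_pos (by have := eps_pos (s := s) hK n; positivity)]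
  apply ENNReal.ofReal_le_ofReal
  unfold eps
  rw [mul_div_cancel₀ _ (two_ne_zero), ← Real.rpow_mul (by positivity), show s * (1 - 1 / s) = s - 1 by field_simp]
  apply Real.rpow_le_rpow (by positivity) _ (by linarith)
  have : (1 / 4 : ℝ) ^ n ≤ 1 := pow_le_one₀ (by norm_num) (by norm_num)
  nlinarith

theorem exists_eps {s : ℝ} (hs : 1 ≤ s) (A : ℝ) : ∃ K, 1 ≤ K ∧ A < eps K s 0 := by
  refine ⟨max 1 (2 * A + 1), le_max_left _ _, ?_⟩
  unfold eps
  rw [pow_zero, mul_one]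
  have h1 : max 1 (2 * A + 1) ^ (1:ℝ) ≤ max 1 (2 * A + 1) ^ s := Real.rpow_le_rpow_of_exponent_le (le_max_left _ _) hs
  rw [Real.rpow_one] at h1
  have := le_max_right 1 (2 * A + 1)
  linarith

theorem ofReal_geom_fin (C : ℝ) (hC : 0 ≤ C) : ∑' n : ℕ, ENNReal.ofReal (C * (1 / 2) ^ n) < ∞ := by
  rw [← ENNReal.ofReal_tsum_of_nonneg (fun n => by positivity) (summable_geometric_two.mul_left C)]
  exact ENNReal.ofReal_lt_top

theorem N1_lt_top (T : ℝ) (f : SF d) : N1 T f < ∞ := by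
  unfold N1
  obtain ⟨H, hH, hb⟩ := f.bdd T
  refine (setLIntegral_mono' measurableSet_Ioo (g := fun _ => ENNReal.ofReal H * volume (fundCube d)) fun t ht => ?_).trans_lt ?_
  · rw [← setLIntegral_const]
    exact lintegral_mono fun x => ENNReal.ofReal_le_ofReal (hb t ⟨ht.1.le, ht.2.le⟩ x)
  · rw [setLIntegral_const]
    exact ENNReal.mul_lt_top (ENNReal.mul_lt_top ENNReal.ofReal_lt_top cube_compact.measure_lt_top) (by simp)

end NU
end

noncomputable section
namespace NU
variable {d : ℕ}

theorem cos_per (y : ℝ) (n : ℤ) : Real.cos (2 * Real.pi * (y + n)) = Real.cos (2 * Real.pi * y) := by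
  rw [show 2 * Real.pi * (y + n) = 2 * Real.pi * y + n * (2 * Real.pi) by ring, Real.cos_add_int_mul_two_pi]
theorem sin_per (y : ℝ) (n : ℤ) : Real.sin (2 * Real.pi * (y + n)) / (2 * Real.pi) = Real.sin (2 * Real.pi * y) / (2 * Real.pi) := by
  rw [show 2 * Real.pi * (y + n) = 2 * Real.pi * y + n * (2 * Real.pi) by ring, Real.sin_add_int_mul_two_pi]

theorem exists_init (hd : 3 ≤ d) : ∃ S : St d, (∀ z, S.ui.1 z = 0) ∧ (∀ z, S.uj.1 z = 0) ∧ (∀ z, S.Rj.1 z = 0) ∧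
    ∀ t x, S.ρ.1 (t, x) = t * Real.cos (2 * Real.pi * x S.i) := by
  have hcd : ContDiff ℝ (⊤ : ℕ∞) fun y : ℝ => Real.cos (2 * Real.pi * y) := by fun_prop
  have hsd : ContDiff ℝ (⊤ : ℕ∞) fun y : ℝ => Real.sin (2 * Real.pi * y) / (2 * Real.pi) :=
    ContDiff.div_const (by fun_prop) _
  let i : Fin d := ⟨0, by omega⟩
  let j : Fin d := ⟨1, by omega⟩
  have hij : i ≠ j := by simp [i, j]
  refine ⟨⟨i, j, hij, ofT (fun t => t) contDiff_id * ofX i _ hcd cos_per, 0, 0,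
    ofX i _ hsd sin_per, 0, ?_, ?_⟩, fun _ => rfl, fun _ => rfl, fun _ => rfl, fun t x => rfl⟩
  · simp only [mul_zero, map_zero, add_zero, Derivation.leibniz, D_ofX_t, smul_eq_mul, zero_add]
    apply SF.ext'
    intro z
    rw [SF.mul_ap, D_ofT_t, D_ofX_j]
    have h1 : HasDerivAt (fun y : ℝ => 2 * Real.pi * y) (2 * Real.pi) (z.2 i) := by
      simpa using (hasDerivAt_id (z.2 i)).const_mul (2 * Real.pi)
    have h2 := (h1.sin.div_const (2 * Real.pi)).deriv
    rw [h2]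
    simp only [deriv_id'', mul_one]
    have : (2 * Real.pi) ≠ 0 := by positivity
    rw [mul_div_cancel_right₀ _ this]
    rfl
  · intro x
    simp [ofT]

theorem exists_lim (hd : 3 ≤ d) {T : ℝ} (hT : 0 < T) {p q s : ℝ} {s' : ℝ≥0∞}
    (hp : 1 < p) (hq : 1 < q) (hpq : 1 / p + 1 / q = 1) (hs : 1 ≤ s) (hs' : Ex s' (1 - 1 / s)) :
    ∃ (ρ : ℕ → SF d) (W : ℕ → ℝ → Vec d → Vec d)
    (mθ mw mW : ℕ → ℝ → ℝ≥0∞) (δ : ℕ → ℝ) (J : ℕ → Set ℝ), LimData T p q s s' ρ W mθ mw mW δ J := by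
  obtain ⟨P⟩ := exists_prof
  obtain ⟨S0, hui, huj, hRj, hρ⟩ := exists_init hd
  obtain ⟨K, hK, hKe⟩ := exists_eps hs (N1 T S0.Ri).toReal
  have hRi0 : N1 T S0.Ri < ENNReal.ofReal (eps K s 0) := by
    rw [← ENNReal.ofReal_toReal (N1_lt_top T S0.Ri).ne]
    exact (ENNReal.ofReal_lt_ofReal_iff (eps_pos hK 0)).2 hKe
  have hRj0 : N1 T S0.Rj < ENNReal.ofReal (eps K s 1) := by
    have : N1 T S0.Rj = 0 := by simp [N1, hRj]
    rw [this]; exact ENNReal.ofReal_pos.2 (eps_pos hK 1)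
  have key : ∀ (n : ℕ) (S : St d), ∃ (S' : St d) (B : SF d) (mθ mw mW : ℝ → ℝ≥0∞) (J : Set ℝ) (δ : ℝ),
      (N1 T S.Ri < ENNReal.ofReal (eps K s n) ∧ N1 T S.Rj < ENNReal.ofReal (eps K s (n + 1))) →
      (N1 T S'.Ri < ENNReal.ofReal (eps K s (n + 1)) ∧ N1 T S'.Rj < ENNReal.ofReal (eps K s (n + 1 + 1))) ∧
      Nxt T p q s s' (ENNReal.ofReal (4 * P.M ^ 2 * K * (1 / 2) ^ n))
        (ENNReal.ofReal (6 * P.M ^ 2 * K ^ (s - 1) * (1 / 2) ^ n)) (T / 16 * (1 / 2) ^ n) S S' B mθ mw mW J δ := by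
    intro n S
    by_cases h : N1 T S.Ri < ENNReal.ofReal (eps K s n) ∧ N1 T S.Rj < ENNReal.ofReal (eps K s (n + 1))
    · obtain ⟨S', B, mθ, mw, mW, J, δ, h1, h2, h3⟩ := St.next P hT hp hq hpq hs hs' S (l := 2 ^ n)
        (ε'' := eps K s (n + 1 + 1)) (e := T / 16 * (1 / 2) ^ n) (by positivity) (by positivity) (eps_pos hK _) h.1 h.2
      refine ⟨S', B, mθ, mw, mW, J, δ, fun _ => ⟨⟨h1, h2⟩, ?_⟩⟩
      have hM := P.hM
      refine { h3 with sθ := h3.sθ.trans ?_, sw := h3.sw.trans ?_ }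
      · rw [eps_a hK hs, ← ENNReal.ofReal_mul (by positivity)]
        apply ENNReal.ofReal_le_ofReal
        have : (1 / 4 : ℝ) ^ n = (1 / 2) ^ n * (1 / 2) ^ n := by rw [← mul_pow]; norm_num
        rw [this]
        have h2 : (2:ℝ) ^ n * (1 / 2) ^ n = 1 := by rw [← mul_pow]; norm_num
        apply le_of_eq
        linear_combination (4 * P.M ^ 2 * K * (1 / 2) ^ n) * h2
      · refine (mul_le_mul_right (eps_b hK hs n) _).trans ?_
        rw [← ENNReal.ofReal_mul (by positivity)]
        apply ENNReal.ofReal_le_ofReal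
        rw [← inv_pow, ← one_div]
        exact le_of_eq (by ring)
    · exact ⟨S, 0, 0, 0, 0, ∅, 0, fun h' => absurd h' h⟩
  choose F fB fθ fw fW fJ fδ hF using key
  let Sq : ℕ → St d := fun n => Nat.rec S0 (fun n S => F n S) n
  have hSq : ∀ n, Sq (n + 1) = F n (Sq n) := fun n => rfl
  have inv : ∀ n, N1 T (Sq n).Ri < ENNReal.ofReal (eps K s n) ∧ N1 T (Sq n).Rj < ENNReal.ofReal (eps K s (n + 1)) := by
    intro n
    induction n with
    | zero => exact ⟨hRi0, hRj0⟩
    | succ n ih => rw [hSq]; exact (hF n (Sq n) ih).1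
  have nx := fun n => (hF n (Sq n) (inv n)).2
  simp only [← hSq] at nx
  have hvel : ∀ n t x, (Sq n).vel t x = ∑ k ∈ Finset.range n, wv (Sq k).i (Sq k).j (fB k (Sq k)) t x := by
    intro n t x
    induction n with
    | zero =>
      change S0.vel t x = _
      simp [St.vel, hui, huj]
    | succ n ih => rw [(nx n).vel, ih, Finset.sum_range_succ]
  have hM := P.hM
  have gs : Summable fun n : ℕ => T / 16 * (1 / 2 : ℝ) ^ n := summable_geometric_two.mul_left _
  have δs : Summable fun n => fδ n (Sq n) := Summable.of_nonneg_of_le (fun n => (nx n).δ0.le) (fun n => (nx n).δe) gs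
  refine ⟨fun n => (Sq n).ρ, fun n => wv (Sq n).i (Sq n).j (fB n (Sq n)), fun n => fθ n (Sq n), fun n => fw n (Sq n),
    fun n => fW n (Sq n), fun n => fδ n (Sq n), fun n => fJ n (Sq n), ?_⟩
  constructor
  · exact hT
  · exact hp
  · exact hq
  · exact hpq
  · exact hs
  · exact hs'
  · exact fun n => wv_cont _ _ _
  · exact fun n t => wv_per _ _ _ t
  · exact fun n t => wv_smooth _ _ _ t
  · exact fun n t Φ => wv_div _ _ _ Φ t
  · exact fun n => (nx n).mθm
  · exact fun n => (nx n).mwm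
  · exact fun n => (nx n).mWm
  · exact fun n => (nx n).Jm
  · exact fun n => (nx n).δ0.le
  · exact δs
  · refine (δs.tsum_le_tsum (fun n => (nx n).δe) gs).trans_lt ?_
    rw [tsum_mul_left, tsum_geometric_two]; linarith
  · exact fun n => (nx n).hJ
  · exact fun n => (nx n).bθ
  · exact fun n => (nx n).bw
  · exact fun n => (nx n).bW
  · exact (ENNReal.tsum_le_tsum fun n => (nx n).sθ).trans_lt (ofReal_geom_fin _ (by positivity))
  · exact (ENNReal.tsum_le_tsum fun n => (nx n).sw).trans_lt (ofReal_geom_fin _ (by positivity))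
  · refine (ENNReal.tsum_le_tsum fun n => (nx n).sW.trans (ENNReal.ofReal_le_ofReal (nx n).δe)).trans_lt
      (ofReal_geom_fin _ (by positivity))
  · exact fun n => (nx n).off
  · intro Φ hΦ
    classical
    obtain ⟨C, hC1, hC⟩ := SF.bdds (d := d) (Finset.univ.image fun k => D (ex k) Φ) T
    have hC' : ∀ k, ∀ t ∈ Set.Icc 0 T, ∀ x, |(D (ex k) Φ).1 (t, x)| ≤ C := fun k =>
      hC _ (Finset.mem_image_of_mem _ (Finset.mem_univ k))
    have hb := fun n => (Sq n).res hT Φ hΦ hC'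
    simp only [hvel] at hb
    rw [tendsto_iff_edist_tendsto_0]
    simp only [edist_zero_right]
    refine tendsto_of_tendsto_of_tendsto_of_le_of_le tendsto_const_nhds (h := fun n => ENNReal.ofReal (C * (eps K s n + eps K s (n + 1))))
      ?_ (fun _ => zero_le) ?_
    · have h1 := eps_tendsto (K := K) hs
      have h2 := (Filter.tendsto_add_atTop_iff_nat 1).2 h1
      have h3 := ENNReal.tendsto_ofReal ((h1.add h2).const_mul C)
      simpa using h3
    · intro n
      refine (hb n).trans ?_
      beta_reduce
      rw [ENNReal.ofReal_mul (by linarith), ENNReal.ofReal_add (eps_pos hK _).le (eps_pos hK _).le]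
      gcongr
      · exact (inv n).1.le
      · exact (inv n).2.le
  · intro t ht
    change ∃ O : Set (Vec d), IsOpen O ∧ O.Nonempty ∧ O ⊆ fundCube d ∧ ∀ x ∈ O, T / 4 < |S0.ρ.1 (t, x)|
    refine ⟨Set.pi Set.univ (fun _ => Set.Ioo (0:ℝ) 1) ∩ {x | T / 4 < |S0.ρ.1 (t, x)|}, ?_, ?_, ?_, fun x hx => hx.2⟩
    · exact (isOpen_set_pi Set.finite_univ fun _ _ => isOpen_Ioo).inter
        (isOpen_lt continuous_const (S0.ρ.scont t).abs)
    · refine ⟨fun _ => 1 / 2, ?_, ?_⟩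
      · intro k _; norm_num
      · simp only [Set.mem_ofPred_eq, hρ]
        rw [show 2 * Real.pi * (1 / 2) = Real.pi by ring, Real.cos_pi, mul_neg, mul_one, abs_neg, abs_of_pos (by linarith [ht.1])]
        linarith [ht.1]
    · rintro x ⟨hx, -⟩
      exact ⟨fun k => (hx k trivial).1.le, fun k => (hx k trivial).2.le⟩

theorem Ex_of_conj {s : ℝ} (hs : 1 ≤ s) {s' : ℝ≥0∞} (hs' : 1 / ENNReal.ofReal s + 1 / s' = 1) : Ex s' (1 - 1 / s) := by
  have hs0 : 0 < s := by linarith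
  have h0 : s' ≠ 0 := by
    rintro rfl
    simp at hs'
  have h1 : 1 / ENNReal.ofReal s = ENNReal.ofReal (1 / s) := by
    rw [one_div, one_div, ENNReal.ofReal_inv_of_pos hs0]
  by_cases h : s' = ∞
  · left
    refine ⟨h, ?_⟩
    subst h
    rw [h1] at hs'
    simp only [ENNReal.div_top, add_zero, ENNReal.ofReal_eq_one] at hs'
    linarith
  · right
    have hpos : 0 < s'.toReal := ENNReal.toReal_pos h0 h
    have h2 : 1 / s' = ENNReal.ofReal (1 / s'.toReal) := by
      rw [one_div, one_div, ENNReal.ofReal_inv_of_pos hpos, ENNReal.ofReal_toReal h]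
    rw [h1, h2, ← ENNReal.ofReal_add (by positivity) (by positivity), ENNReal.ofReal_eq_one] at hs'
    have h3 : 1 - 1 / s = 1 / s'.toReal := by linarith
    rw [h3]
    refine ⟨h, by positivity, ?_⟩
    field_simp

end NU
end

/-- **Non-uniqueness for `u ∈ L^1(0,T;W^{1,p'}) ∩ L^{s'}(0,T;L^{p'})`**
(Corollary, part (i)): for `d ≥ 3`, `p ∈ (1,∞)`, `s ∈ [1,∞)`, there is a
divergence-free `u ∈ L^1(0,T;W^{1,p'}) ∩ L^{s'}(0,T;L^{p'})` such that uniqueness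
of weak solutions of the transport equation fails in `L^s(0,T;L^p)`. -/
theorem nonuniqueness_transport_L1W1p'
    (d : ℕ) (hd : 3 ≤ d)
    (p s : ℝ) (hp : 1 < p) (hs : 1 ≤ s)
    (p' : ℝ) (hp' : p' = p / (p - 1))
    (s' : ℝ≥0∞) (hs' : 1 / ENNReal.ofReal s + 1 / s' = 1)
    (T : ℝ) (hT : 0 < T) :
    ∃ u : ℝ → Vec d → Vec d,
      Measurable (Function.uncurry u) ∧
      (∀ t, ZPer (u t)) ∧
      WeaklyDivFree d T u ∧
      LsW1qT T 1 (ENNReal.ofReal p') u < ∞ ∧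
      LsLpT T s' (ENNReal.ofReal p') u < ∞ ∧
      ∃ (ρ₁ ρ₂ : ℝ → Vec d → ℝ) (ρ₀ : Vec d → ℝ),
        Measurable (Function.uncurry ρ₁) ∧ Measurable (Function.uncurry ρ₂) ∧
        (∀ t, ZPer (ρ₁ t)) ∧ (∀ t, ZPer (ρ₂ t)) ∧
        LsLpT T (ENNReal.ofReal s) (ENNReal.ofReal p) ρ₁ < ∞ ∧
        LsLpT T (ENNReal.ofReal s) (ENNReal.ofReal p) ρ₂ < ∞ ∧
        IsWeakSolution d T u ρ₁ ρ₀ ∧ IsWeakSolution d T u ρ₂ ρ₀ ∧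
        LsLpT T (ENNReal.ofReal s) (ENNReal.ofReal p)
          (fun t x => ρ₁ t x - ρ₂ t x) ≠ 0 := by
  have hp1 : 0 < p - 1 := by linarith
  have hq : 1 < p' := by rw [hp', lt_div_iff₀ hp1]; linarith
  have hpq : 1 / p + 1 / p' = 1 := by rw [hp']; field_simp; ring
  obtain ⟨ρ, W, mθ, mw, mW, δ, J, L⟩ := NU.exists_lim hd hT hp hq hpq hs (NU.Ex_of_conj hs hs')
  have hs0 : ENNReal.ofReal s ≠ 0 := by
    simp only [ne_eq, ENNReal.ofReal_eq_zero, not_le]; linarith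
  refine ⟨NU.uL T J W, L.uL_meas, L.uL_per, L.u_div, L.u_W1, L.u_Ls, NU.rL T J ρ, fun _ _ => 0, fun _ => 0,
    L.rL_meas, measurable_const, NU.LimData.rL_per ρ, fun _ _ _ => rfl, L.r_Ls, ?_, L.r_weak, ?_, ?_⟩
  · have : ∀ t : ℝ, spLp (ENNReal.ofReal p) (fun _ : Vec d => (0:ℝ)) ≤ 0 := fun _ => by
      simpa using NU.spLp_le_const (d := d) (fun _ => (0 : ℝ)) (δ := 0) (q := p) (by linarith) (by simp)
    exact (NU.eLpGen_mono _ _ (Filter.Eventually.of_forall this)).trans_lt (NU.eLpGen_const_lt 0 (by simp))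
  · intro φ _
    simp
  · simp only [sub_zero]
    exact L.r_nt
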